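/- arXiv:2103.09731 — 3 statements merged into one kernel-verified Lean document; each statement's English description precedes it below -/
import Mathlib

section
/- For every ε > 0, every connected weighted graph G on n vertices admits a subgraph H such that d_H(s,t) ≤ d_G(s,t) + (4+ε)·W(s,t) for all vertices s,t ∈ V, and lightness(H) ≤ C(ε)·n^{2/3}, where C(ε) depends only polynomially on 1/ε. -/
open scoped ENNReal Classical

/-- The total weight of a walk: the sum of the weights of its edges. -/
noncomputable def walkWeight {V : Type} (G : SimpleGraph V) (w : Sym2 V → ℝ≥0∞)
    {s t : V} (p : G.Walk s t) : ℝ≥0∞ :=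
  (p.edges.map w).sum

/-- Shortest-path distance in the weighted graph `(G, w)`, equal to `⊤` if there is no path. -/
noncomputable def gdist {V : Type} (G : SimpleGraph V) (w : Sym2 V → ℝ≥0∞)
    (s t : V) : ℝ≥0∞ :=
  ⨅ p : G.Walk s t, walkWeight G w p

/-- The maximum edge weight along a walk (0 for the trivial walk). -/
noncomputable def maxEdge {V : Type} (G : SimpleGraph V) (w : Sym2 V → ℝ≥0∞)
    {s t : V} (p : G.Walk s t) : ℝ≥0∞ :=
  (p.edges.map w).foldr max 0

/-- `π` assigns to each ordered vertex pair a shortest path: a walk whose total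
weight equals the shortest-path distance. -/
def IsShortestPathScheme {V : Type} (G : SimpleGraph V) (w : Sym2 V → ℝ≥0∞)
    (π : (s t : V) → G.Walk s t) : Prop :=
  ∀ s t : V, walkWeight G w (π s t) = gdist G w s t

/-- The edge weights are positive and finite on all edges of `G`. -/
def PosWeights {V : Type} (G : SimpleGraph V) (w : Sym2 V → ℝ≥0∞) : Prop :=
  ∀ e ∈ G.edgeSet, 0 < w e ∧ w e ≠ ⊤

/-- The total edge weight of a graph. -/
noncomputable def totalWeight {V : Type} (G : SimpleGraph V) (w : Sym2 V → ℝ≥0∞) : ℝ≥0∞ :=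
  ∑' e : G.edgeSet, w e

/-- The weight of a minimum spanning tree of `G`: since edge weights are positive, this is
the minimum total weight of a connected spanning subgraph of `G`. -/
noncomputable def mstWeight {V : Type} (G : SimpleGraph V) (w : Sym2 V → ℝ≥0∞) : ℝ≥0∞ :=
  ⨅ (T : SimpleGraph V) (_ : T ≤ G) (_ : T.Connected), totalWeight T w


/-! ### Real-valued walk weights and distances -/

noncomputable def wl {V : Type} (wr : Sym2 V → ℝ) {H : SimpleGraph V} {u v : V}
    (p : H.Walk u v) : ℝ := (p.edges.map wr).sum

noncomputable def rd {V : Type} (wr : Sym2 V → ℝ) (H : SimpleGraph V) (u v : V) : ℝ :=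
  ⨅ p : H.Walk u v, wl wr p

section basics
variable {V : Type} {wr : Sym2 V → ℝ} {H : SimpleGraph V}

lemma wl_nil {u : V} : wl wr (SimpleGraph.Walk.nil : H.Walk u u) = 0 := by simp [wl]

lemma wl_cons {u v x : V} (h : H.Adj u v) (p : H.Walk v x) :
    wl wr (SimpleGraph.Walk.cons h p) = wr s(u, v) + wl wr p := by simp [wl]

lemma wl_append {u v x : V} (p : H.Walk u v) (q : H.Walk v x) :
    wl wr (p.append q) = wl wr p + wl wr q := by simp [wl]

lemma wl_reverse {u v : V} (p : H.Walk u v) : wl wr p.reverse = wl wr p := by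
  simp [wl, List.sum_reverse]

lemma wl_nonneg (hw : ∀ e, 0 ≤ wr e) {u v : V} (p : H.Walk u v) : 0 ≤ wl wr p := by
  apply List.sum_nonneg
  intro x hx
  obtain ⟨e, -, rfl⟩ := List.mem_map.1 hx
  exact hw e

lemma wl_bypass (hw : ∀ e, 0 ≤ wr e) {u v : V} (p : H.Walk u v) :
    wl wr p.bypass ≤ wl wr p := by
  induction p with
  | nil => simp [SimpleGraph.Walk.bypass]
  | @cons a b c h p ih =>
    simp only [SimpleGraph.Walk.bypass]
    rw [wl_cons]
    split_ifs with hs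
    · have h1 := wl_append (wr := wr) (p.bypass.takeUntil a hs) (p.bypass.dropUntil a hs)
      rw [SimpleGraph.Walk.take_spec] at h1
      have := wl_nonneg hw (p.bypass.takeUntil a hs)
      have := hw s(a, b)
      linarith
    · rw [wl_cons]; linarith

lemma rd_le (hw : ∀ e, 0 ≤ wr e) {u v : V} (p : H.Walk u v) : rd wr H u v ≤ wl wr p :=
  ciInf_le ⟨0, by rintro _ ⟨q, rfl⟩; exact wl_nonneg hw q⟩ p

lemma rd_attained [Finite V] (hw : ∀ e, 0 ≤ wr e) (hH : H.Connected) (u v : V) :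
    ∃ p : H.Walk u v, wl wr p = rd wr H u v := by
  have := Fintype.ofFinite V
  have : Finite (H.Path u v) := inferInstance
  obtain ⟨p0⟩ := hH.preconnected u v
  have : Nonempty (H.Path u v) := ⟨p0.toPath⟩
  obtain ⟨q, hq⟩ := Finite.exists_min (fun q : H.Path u v => wl wr q.1)
  refine ⟨q.1, le_antisymm ?_ (rd_le hw q.1)⟩
  have : Nonempty (H.Walk u v) := ⟨p0⟩
  refine le_ciInf fun p => ?_
  refine le_trans ?_ (wl_bypass hw p)
  exact hq ⟨p.bypass, p.bypass_isPath⟩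

lemma rd_nonneg (hw : ∀ e, 0 ≤ wr e) (u v : V) : 0 ≤ rd wr H u v :=
  Real.iInf_nonneg fun p => wl_nonneg hw p

lemma rd_self (hw : ∀ e, 0 ≤ wr e) (u : V) : rd wr H u u = 0 :=
  le_antisymm (by simpa [wl_nil] using rd_le hw (SimpleGraph.Walk.nil : H.Walk u u))
    (rd_nonneg hw u u)

lemma rd_adj (hw : ∀ e, 0 ≤ wr e) {u v : V} (h : H.Adj u v) : rd wr H u v ≤ wr s(u, v) := by
  simpa [wl_cons, wl_nil] using rd_le hw (SimpleGraph.Walk.cons h SimpleGraph.Walk.nil)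

lemma rd_triangle [Finite V] (hw : ∀ e, 0 ≤ wr e) (hH : H.Connected) (u v x : V) :
    rd wr H u x ≤ rd wr H u v + rd wr H v x := by
  obtain ⟨p, hp⟩ := rd_attained hw hH u v
  obtain ⟨q, hq⟩ := rd_attained hw hH v x
  rw [← hp, ← hq, ← wl_append]
  exact rd_le hw _

lemma rd_comm [Finite V] (hw : ∀ e, 0 ≤ wr e) (hH : H.Connected) (u v : V) :
    rd wr H u v = rd wr H v u := by
  have key : ∀ a b, rd wr H a b ≤ rd wr H b a := by
    intro a b
    obtain ⟨p, hp⟩ := rd_attained hw hH b a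
    rw [← hp, ← wl_reverse]
    exact rd_le hw _
  exact le_antisymm (key _ _) (key _ _)

lemma wl_mapLe {H' : SimpleGraph V} (h : H ≤ H') {u v : V} (p : H.Walk u v) :
    wl wr (p.mapLe h) = wl wr p := by simp [wl]

lemma rd_mono [Finite V] (hw : ∀ e, 0 ≤ wr e) (hH : H.Connected) {H' : SimpleGraph V}
    (h : H ≤ H') (u v : V) : rd wr H' u v ≤ rd wr H u v := by
  obtain ⟨p, hp⟩ := rd_attained hw hH u v
  rw [← hp, ← wl_mapLe h]
  exact rd_le hw _

/-- Sequence form of a geodesic. -/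
lemma geo_seq {D : V → ℝ} (hD : ∀ a b, H.Adj a b → D b ≤ D a + wr s(a, b)) {u x : V}
    (p : H.Walk u x) :
    D x ≤ D u + wl wr p ∧ (D x = D u + wl wr p →
    ∃ (q : ℕ → V), q 0 = u ∧ q p.length = x ∧ (∀ i, q i ∈ p.support) ∧
      ∀ i < p.length, H.Adj (q i) (q (i+1)) ∧ s(q i, q (i+1)) ∈ p.edges ∧
        D (q (i+1)) = D (q i) + wr s(q i, q (i+1))) := by
  induction p with
  | nil => exact ⟨by simp [wl_nil], fun _ => ⟨fun _ => _, rfl, rfl, by simp, by simp⟩⟩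
  | @cons a b c h p ih =>
    obtain ⟨ih1, ih2⟩ := ih
    have hab := hD a b h
    rw [wl_cons]
    refine ⟨by linarith, fun heq => ?_⟩
    obtain ⟨q, q0, qe, qs, hq⟩ := ih2 (by linarith)
    refine ⟨fun i => Nat.casesOn i a q, rfl, by simpa using qe, ?_, ?_⟩
    · intro i
      cases i with
      | zero => simp
      | succ i => simp [qs i]
    · intro i hi
      cases i with
      | zero =>
        simp only [q0]
        exact ⟨h, by simp, by change D b = D a + wr s(a, b); linarith⟩
      | succ i =>
        have := hq i (by simpa using hi)
        exact ⟨this.1, by simp [this.2.1], this.2.2⟩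

lemma rd_geo [Finite V] (hw : ∀ e, 0 ≤ wr e) (hH : H.Connected) {u x : V} (p : H.Walk u x)
    (hp : wl wr p = rd wr H u x) :
    ∃ (q : ℕ → V), q 0 = u ∧ q p.length = x ∧ (∀ i, q i ∈ p.support) ∧
      ∀ i < p.length, H.Adj (q i) (q (i+1)) ∧ s(q i, q (i+1)) ∈ p.edges ∧
        rd wr H u (q (i+1)) = rd wr H u (q i) + wr s(q i, q (i+1)) := by
  refine (geo_seq (D := fun z => rd wr H u z) ?_ p).2 ?_
  · intro a b hab
    have h1 := rd_triangle hw hH u a b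
    have h2 := rd_adj hw hab
    linarith
  · simp only [rd_self hw, hp, zero_add]

/-- Walking along a sequence of vertices. -/
lemma rd_seq [Finite V] (hw : ∀ e, 0 ≤ wr e) (hH : H.Connected) (q : ℕ → V) (g : ℕ → ℝ)
    (a b : ℕ) (hab : a ≤ b)
    (h : ∀ i, a ≤ i → i < b → rd wr H (q i) (q (i+1)) ≤ g (i+1) - g i) :
    rd wr H (q a) (q b) ≤ g b - g a := by
  induction b, hab using Nat.le_induction with
  | base => simp [rd_self hw]
  | succ b hab ih =>
    have h1 := ih (fun i h1 h2 => h i h1 (by omega))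
    have h2 := h b hab (by omega)
    have h3 := rd_triangle hw hH (q a) (q b) (q (b+1))
    linarith

end basics

/-- Separated indices give many cells. -/
lemma spaced {α : Type*} (a : ℕ → ℝ) (p : ℕ) (W : ℝ) (hW : 0 < W)
    (hstep : ∀ i < p, a (i+1) ≤ a i + W) (κ : ℕ → α)
    (hκ : ∀ i j, 1 ≤ i → i ≤ p → 1 ≤ j → j ≤ p → κ i = κ j → |a i - a j| ≤ W) :
    a p - a 0 ≤ 2 * W * (((Finset.Icc 1 p).image κ).card : ℝ) := by
  have key : ∀ k : ℕ, (k : ℝ) * (2 * W) < a p - a 0 →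
      ∃ i, 1 ≤ i ∧ i ≤ p ∧ k * (2 * W) < a i - a 0 ∧ a i - a 0 ≤ k * (2 * W) + W := by
    intro k hk
    have hex : ∃ i, k * (2 * W) < a i - a 0 := ⟨p, hk⟩
    have h1 := Nat.find_spec hex
    have h2 : Nat.find hex ≤ p := Nat.find_min' hex hk
    have h3 : Nat.find hex ≠ 0 := by
      intro h0
      rw [h0] at h1
      have : (0:ℝ) ≤ k * (2 * W) := by positivity
      linarith
    obtain ⟨j, hj⟩ := Nat.exists_eq_succ_of_ne_zero h3
    have h4 : ¬ (k * (2 * W) < a j - a 0) := Nat.find_min hex (by omega)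
    have h5 := hstep j (by omega)
    refine ⟨Nat.find hex, by omega, h2, h1, ?_⟩
    rw [hj]
    simp only [Nat.succ_eq_add_one]
    linarith
  by_contra hcon
  push Not at hcon
  set J := ((Finset.Icc 1 p).image κ).card with hJ
  have key2 : ∀ k : ℕ, k ≤ J → ∃ i, 1 ≤ i ∧ i ≤ p ∧ k * (2 * W) < a i - a 0 ∧
      a i - a 0 ≤ k * (2 * W) + W := by
    intro k hk
    apply key
    have : (k:ℝ) ≤ J := by exact_mod_cast hk
    nlinarith
  choose! ix hix using key2
  have hinj : Set.InjOn (fun k => κ (ix k)) (Finset.range (J+1)) := by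
    have hlt : ∀ k l, k < l → l ≤ J → κ (ix k) = κ (ix l) → False := by
      intro k l hkl hl he
      obtain ⟨x1, x2, x3, x4⟩ := hix k (by omega)
      obtain ⟨y1, y2, y3, y4⟩ := hix l hl
      have := hκ _ _ x1 x2 y1 y2 he
      rw [abs_le] at this
      have hc : (k:ℝ) + 1 ≤ l := by exact_mod_cast hkl
      nlinarith
    intro k hk l hl he
    simp only [Finset.coe_range, Set.mem_Iio] at hk hl
    rcases lt_trichotomy k l with h | h | h
    · exact (hlt k l h (by omega) he).elim
    · exact h
    · exact (hlt l k h (by omega) he.symm).elim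
  have hc := Finset.card_le_card_of_injOn (s := Finset.range (J+1))
    (t := (Finset.Icc 1 p).image κ) (fun k => κ (ix k)) (by
      intro k hk
      simp only [Finset.coe_range, Set.mem_Iio] at hk
      obtain ⟨x1, x2, _⟩ := hix k (by omega)
      exact Finset.mem_coe.2 (Finset.mem_image_of_mem κ (Finset.mem_Icc.2 ⟨x1, x2⟩))) hinj
  simp at hc
  omega

/-! ### Line embedding -/

lemma line_embed {V : Type} [Fintype V] {wr : Sym2 V → ℝ} (hw : ∀ e, 0 ≤ wr e)
    {T : SimpleGraph V} (hT : T.Connected) :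
    ∃ f : V → ℝ, (∀ v, 0 ≤ f v ∧ f v ≤ 2 * ∑ e ∈ T.edgeFinset, wr e) ∧
      ∀ u v, rd wr T u v ≤ |f u - f v| := by
  have key : ∀ k : ℕ, 1 ≤ k → k ≤ Fintype.card V → ∃ (S : Finset V) (F : Finset (Sym2 V))
      (f : V → ℝ), S.card = k ∧ F ⊆ T.edgeFinset ∧ (∀ e ∈ F, ∀ x ∈ e, x ∈ S) ∧
      (∀ v ∈ S, 0 ≤ f v ∧ f v ≤ 2 * ∑ e ∈ F, wr e) ∧
      ∀ u ∈ S, ∀ v ∈ S, rd wr T u v ≤ |f u - f v| := by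
    intro k hk
    induction k, hk using Nat.le_induction with
    | base =>
      intro _
      obtain ⟨v⟩ := hT.nonempty
      refine ⟨{v}, ∅, fun _ => 0, by simp, by simp, by simp, by simp, ?_⟩
      intro a ha b hb
      simp only [Finset.mem_singleton] at ha hb
      subst ha; subst hb
      simp [rd_self hw]
    | succ k hk ih =>
      intro hk2
      obtain ⟨S, F, f, hS, hF, hFS, hf, hd⟩ := ih (by omega)
      have hne : S.Nonempty := Finset.card_pos.1 (by omega)
      obtain ⟨s0, hs0⟩ := hne
      have hex : ∃ y, y ∉ S := by
        by_contra hcon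
        push Not at hcon
        have : S = Finset.univ := Finset.eq_univ_iff_forall.2 hcon
        rw [this, Finset.card_univ] at hS
        omega
      obtain ⟨y, hy⟩ := hex
      obtain ⟨p⟩ := hT.preconnected s0 y
      obtain ⟨d, -, hd1, hd2⟩ := p.exists_boundary_dart (S : Set V) hs0 hy
      obtain ⟨⟨a, b⟩, hab⟩ := d
      simp only [Finset.mem_coe] at hd1 hd2
      have hab' : T.Adj a b := hab
      set w := wr s(a, b) with hwdef
      have hw0 : 0 ≤ w := hw _
      have hnF : s(a, b) ∉ F := fun h => hd2 (hFS _ h b (by simp))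
      have hbne : ∀ x ∈ S, x ≠ b := fun x hx h => hd2 (h ▸ hx)
      refine ⟨insert b S, insert s(a, b) F,
        fun x => if x = b then f a + w else if f x ≤ f a then f x else f x + 2 * w,
        by rw [Finset.card_insert_of_notMem hd2, hS], ?_, ?_, ?_, ?_⟩
      · intro e he
        rcases Finset.mem_insert.1 he with rfl | he
        · simpa using hab'
        · exact hF he
      · intro e he x hx
        rcases Finset.mem_insert.1 he with rfl | he
        · rcases Sym2.mem_iff.1 hx with rfl | rfl
          · exact Finset.mem_insert_of_mem hd1
          · exact Finset.mem_insert_self _ _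
        · exact Finset.mem_insert_of_mem (hFS e he x hx)
      · rw [Finset.sum_insert hnF]
        have ha := hf a hd1
        intro v hv
        dsimp only
        split_ifs with h1 h2
        · constructor <;> linarith
        · have hv' := hf v (Finset.mem_of_mem_insert_of_ne hv h1)
          constructor <;> linarith
        · have hv' := hf v (Finset.mem_of_mem_insert_of_ne hv h1)
          constructor <;> linarith
      · have hcase : ∀ x ∈ S, rd wr T b x ≤
            |(f a + w) - (if f x ≤ f a then f x else f x + 2 * w)| := by
          intro x hx
          have h1 := rd_triangle hw hT b a x
          have h2 := rd_adj hw hab'.symm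
          rw [Sym2.eq_swap] at h2
          have h3 := hd a hd1 x hx
          split_ifs with h4
          · rw [abs_of_nonneg (by linarith)] at h3
            rw [abs_of_nonneg (by linarith)]
            linarith
          · rw [abs_of_nonpos (by linarith)] at h3
            rw [abs_of_nonpos (by linarith)]
            linarith
        intro u hu v hv
        dsimp only
        by_cases hub : u = b
        · by_cases hvb : v = b
          · subst hub; subst hvb; simp [rd_self hw]
          · rw [if_pos hub, if_neg hvb, hub]
            exact hcase v (Finset.mem_of_mem_insert_of_ne hv hvb)
        · by_cases hvb : v = b
          · rw [if_pos hvb, if_neg hub, hvb, rd_comm hw hT, abs_sub_comm]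
            exact hcase u (Finset.mem_of_mem_insert_of_ne hu hub)
          · rw [if_neg hub, if_neg hvb]
            refine (hd u (Finset.mem_of_mem_insert_of_ne hu hub) v
              (Finset.mem_of_mem_insert_of_ne hv hvb)).trans ?_
            split_ifs with h1 h2 h2
            · exact le_rfl
            · rw [abs_of_nonpos (by linarith), abs_of_nonpos (by linarith)]
              linarith
            · rw [abs_of_nonneg (by linarith), abs_of_nonneg (by linarith)]
              linarith
            · simp
  have := hT.nonempty
  obtain ⟨S, F, f, hS, hF, hFS, hf, hd⟩ := key (Fintype.card V) Fintype.card_pos le_rfl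
  have hSu : S = Finset.univ := (Finset.card_eq_iff_eq_univ S).1 hS
  subst hSu
  refine ⟨f, fun v => ⟨(hf v (by simp)).1, (hf v (by simp)).2.trans ?_⟩,
    fun u v => hd u (by simp) v (by simp)⟩
  have := Finset.sum_le_sum_of_subset_of_nonneg hF (fun e _ _ => hw e)
  linarith

/-! ### Hitting sets -/

lemma hitting {α ι : Type*} (U : Finset α) (I : Finset ι) (A : ι → Finset α)
    (p q t : ℕ) (hp : 1 ≤ p) (hq : 1 ≤ q) (hU : U.card ≤ p * q) (hI : I.card < 2 ^ t)
    (hA : ∀ i ∈ I, A i ⊆ U ∧ q ≤ (A i).card) :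
    ∃ R : Finset α, R ⊆ U ∧ R.card ≤ p * t ∧ ∀ i ∈ I, ∃ x ∈ R, x ∈ A i := by
  have hp' : (1:ℝ) ≤ p := by exact_mod_cast hp
  have key : ∀ k : ℕ, ∃ R : Finset α, R ⊆ U ∧ R.card ≤ k ∧
      ((I.filter (fun i => Disjoint R (A i))).card : ℝ) ≤ I.card * (1 - 1 / (p:ℝ)) ^ k := by
    intro k
    induction k with
    | zero => exact ⟨∅, by simp, by simp, by simp⟩
    | succ k ih =>
      obtain ⟨R, hRU, hRc, hR⟩ := ih
      set I' := I.filter (fun i => Disjoint R (A i)) with hI'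
      by_cases hemp : I' = ∅
      · refine ⟨R, hRU, by omega, ?_⟩
        rw [← hI', hemp]
        have : 0 ≤ 1 - 1 / (p:ℝ) := by
          rw [sub_nonneg, div_le_one (by linarith)]; exact hp'
        simp only [Finset.card_empty, Nat.cast_zero]
        positivity
      -- double counting
      have hdc : ∑ x ∈ U, (I'.filter (fun i => x ∈ A i)).card = ∑ i ∈ I', (A i).card := by
        simp only [Finset.card_filter]
        rw [Finset.sum_comm]
        apply Finset.sum_congr rfl
        intro i hi
        have hi' := hA i (Finset.mem_filter.1 hi).1
        rw [← Finset.card_filter]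
        congr 1
        ext x
        simp only [Finset.mem_filter]
        exact ⟨fun h => h.2, fun h => ⟨hi'.1 h, h⟩⟩
      have hge : I'.card * q ≤ ∑ i ∈ I', (A i).card := by
        rw [← smul_eq_mul, ← Finset.sum_const]
        exact Finset.sum_le_sum fun i hi => (hA i (Finset.mem_filter.1 hi).1).2
      have hex : ∃ x ∈ U, I'.card ≤ p * (I'.filter (fun i => x ∈ A i)).card := by
        by_contra hcon
        push Not at hcon
        obtain ⟨i0, hi0⟩ := Finset.nonempty_of_ne_empty hemp
        have hne : U.Nonempty := by
          have h0 := hA i0 (Finset.mem_filter.1 hi0).1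
          have : 0 < (A i0).card := by omega
          obtain ⟨x, hx⟩ := Finset.card_pos.1 this
          exact ⟨x, h0.1 hx⟩
        have h1 : ∑ x ∈ U, p * (I'.filter (fun i => x ∈ A i)).card < ∑ x ∈ U, I'.card :=
          Finset.sum_lt_sum_of_nonempty hne hcon
        rw [← Finset.mul_sum, hdc, Finset.sum_const, smul_eq_mul] at h1
        have h2 : U.card * I'.card ≤ p * q * I'.card := Nat.mul_le_mul_right _ hU
        have h3 : p * (I'.card * q) ≤ p * ∑ i ∈ I', (A i).card := Nat.mul_le_mul_left _ hge
        have h4 : p * (I'.card * q) = p * q * I'.card := by ring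
        omega
      obtain ⟨x, hxU, hx⟩ := hex
      refine ⟨insert x R, Finset.insert_subset hxU hRU,
        (Finset.card_insert_le _ _).trans (by omega), ?_⟩
      have hsplit := Finset.card_filter_add_card_filter_not (s := I') (fun i => x ∈ A i)
      have hsub : I.filter (fun i => Disjoint (insert x R) (A i)) ⊆
          I'.filter (fun i => ¬ x ∈ A i) := by
        intro i hi
        simp only [Finset.mem_filter, Finset.disjoint_insert_left, hI'] at hi ⊢
        exact ⟨⟨hi.1, hi.2.2⟩, hi.2.1⟩
      have hc := Finset.card_le_card hsub
      have hc' : ((I.filter (fun i => Disjoint (insert x R) (A i))).card : ℝ) ≤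
          I'.card - I'.card / p := by
        have e1 : (I'.card : ℝ) ≤ p * (I'.filter (fun i => x ∈ A i)).card := by exact_mod_cast hx
        have e2 : (I'.card : ℝ) / p ≤ (I'.filter (fun i => x ∈ A i)).card := by
          rw [div_le_iff₀ (by linarith)]; linarith
        have e3 : ((I'.filter (fun i => x ∈ A i)).card : ℝ) +
          (I'.filter (fun i => ¬ x ∈ A i)).card = I'.card := by exact_mod_cast hsplit
        have e4 : ((I.filter (fun i => Disjoint (insert x R) (A i))).card : ℝ) ≤
          (I'.filter (fun i => ¬ x ∈ A i)).card := by exact_mod_cast hc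
        linarith
      have h0 : 0 ≤ 1 - 1 / (p:ℝ) := by
        rw [sub_nonneg, div_le_one (by linarith)]; exact hp'
      calc _ ≤ (I'.card : ℝ) - I'.card / p := hc'
        _ = I'.card * (1 - 1 / (p:ℝ)) := by ring
        _ ≤ (I.card * (1 - 1 / (p:ℝ)) ^ k) * (1 - 1 / (p:ℝ)) :=
          mul_le_mul_of_nonneg_right hR h0
        _ = _ := by ring
  obtain ⟨R, hRU, hRc, hR⟩ := key (p * t)
  refine ⟨R, hRU, hRc, ?_⟩
  have hhalf : (1 - 1 / (p:ℝ)) ^ (p * t) ≤ (1/2) ^ t := by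
    rw [pow_mul]
    have h0 : 0 ≤ 1 - 1 / (p:ℝ) := by
      rw [sub_nonneg, div_le_one (by linarith)]; exact hp'
    refine pow_le_pow_left₀ (by positivity) ?_ t
    have h1 : 1 - 1 / (p:ℝ) ≤ Real.exp (-(1 / (p:ℝ))) := by
      have := Real.add_one_le_exp (-(1 / (p:ℝ))); linarith
    calc (1 - 1 / (p:ℝ)) ^ p ≤ (Real.exp (-(1 / (p:ℝ)))) ^ p := pow_le_pow_left₀ h0 h1 p
      _ = Real.exp (-1) := by
        rw [← Real.exp_nat_mul]; congr 1; field_simp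
      _ ≤ 1 / 2 := by
        rw [Real.exp_neg, ← one_div]
        apply one_div_le_one_div_of_le (by norm_num)
        have := Real.add_one_le_exp (1:ℝ); linarith
  have hlt : ((I.filter (fun i => Disjoint R (A i))).card : ℝ) < 1 := by
    have hI' : (I.card : ℝ) < 2 ^ t := by exact_mod_cast hI
    calc _ ≤ (I.card : ℝ) * (1 - 1 / (p:ℝ)) ^ (p * t) := hR
      _ ≤ I.card * (1/2) ^ t := mul_le_mul_of_nonneg_left hhalf (by positivity)
      _ < 2 ^ t * (1/2) ^ t := mul_lt_mul_of_pos_right hI' (by positivity)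
      _ = 1 := by rw [← mul_pow]; norm_num
  have hz : (I.filter (fun i => Disjoint R (A i))).card = 0 := by
    have : (I.filter (fun i => Disjoint R (A i))).card < 1 := by exact_mod_cast hlt
    omega
  intro i hi
  have hnd : ¬ Disjoint R (A i) := by
    intro hd
    have := Finset.card_eq_zero.1 hz
    have hm : i ∈ I.filter (fun i => Disjoint R (A i)) := Finset.mem_filter.2 ⟨hi, hd⟩
    rw [this] at hm
    simp at hm
  obtain ⟨x, hx1, hx2⟩ := Finset.not_disjoint_iff.1 hnd
  exact ⟨x, hx1, hx2⟩

/-! ### Single-source preservers -/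

def Hg {V : Type} (T : SimpleGraph V) (F : Finset (Sym2 V)) : SimpleGraph V :=
  T ⊔ SimpleGraph.fromEdgeSet (F : Set (Sym2 V))

section Hg
variable {V : Type} {T : SimpleGraph V}

lemma le_Hg (F : Finset (Sym2 V)) : T ≤ Hg T F := le_sup_left

lemma Hg_conn (hT : T.Connected) (F : Finset (Sym2 V)) : (Hg T F).Connected :=
  hT.mono (le_Hg F)

lemma Hg_mono {F F' : Finset (Sym2 V)} (h : F ⊆ F') : Hg T F ≤ Hg T F' :=
  sup_le_sup_left (SimpleGraph.fromEdgeSet_mono (by exact_mod_cast h)) _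

lemma Hg_adj {F : Finset (Sym2 V)} {a b : V} (hab : a ≠ b) (h : s(a, b) ∈ F) :
    (Hg T F).Adj a b := by
  right
  simp [hab, h]
end Hg

lemma cell_close {a b δ : ℝ} (hδ : 0 < δ) (ha : 0 ≤ a) (hb : 0 ≤ b)
    (h : ⌊a / δ⌋₊ = ⌊b / δ⌋₊) : |a - b| ≤ δ := by
  have h1 := Nat.floor_le (div_nonneg ha hδ.le)
  have h2 := Nat.lt_floor_add_one (a / δ)
  have h3 := Nat.floor_le (div_nonneg hb hδ.le)
  have h4 := Nat.lt_floor_add_one (b / δ)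
  rw [h] at h1 h2
  rw [le_div_iff₀ hδ] at h1 h3
  rw [div_lt_iff₀ hδ] at h2 h4
  rw [abs_le]
  constructor <;> nlinarith

lemma preserver {V : Type} [Fintype V] {wr : Sym2 V → ℝ} (hw : ∀ e, 0 ≤ wr e)
    {T G' : SimpleGraph V} (hT : T.Connected) (hTG : T ≤ G') {f : V → ℝ} {M W δ B : ℝ} {m : ℕ}
    (hG' : ∀ a b, G'.Adj a b → T.Adj a b ∨ wr s(a, b) ≤ W)
    (hf : ∀ v, 0 ≤ f v ∧ f v ≤ M) (hfd : ∀ u v, rd wr T u v ≤ |f u - f v|)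
    (hδ : 0 < δ) (hδW : δ ≤ W) (hB : 1 ≤ B) (hm : 1 ≤ m) (hM : M ≤ B ^ m * W) (r : V) :
    ∃ F : Finset (Sym2 V), (∀ e ∈ F, e ∈ G'.edgeSet) ∧
      ∑ e ∈ F, wr e ≤ 2 * B * W * (m * (M / δ + 1)) ∧
      ∀ x, rd wr (Hg T F) r x ≤ rd wr G' r x + m * (2 * δ) := by
  have hW : 0 < W := hδ.trans_le hδW
  have hM0 : 0 ≤ M := (hf r).1.trans (hf r).2
  have hGc : G'.Connected := hT.mono hTG
  set D : V → ℝ := fun z => rd wr G' r z with hD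
  set N := ⌊M / δ⌋₊ + 1 with hN
  set cell : V → ℕ := fun z => ⌊f z / δ⌋₊ with hcell
  have hcellN : ∀ z, cell z < N := fun z => Nat.lt_succ_of_le
    (Nat.floor_le_floor (div_le_div_of_nonneg_right (hf z).2 hδ.le))
  have hTcell : ∀ a b, cell a = cell b → rd wr T a b ≤ δ := fun a b h =>
    (hfd a b).trans (cell_close hδ (hf a).1 (hf b).1 h)
  have hDcell : ∀ a b, cell a = cell b → D a ≤ D b + δ := by
    intro a b h
    have h1 := rd_triangle hw hGc r b a
    have h2 := rd_mono hw hT hTG b a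
    have h3 := hTcell b a h.symm
    simp only [hD]; linarith
  let Cov : Finset (Sym2 V) → Finset (ℕ × ℕ) := fun F =>
    ((Finset.range N) ×ˢ (Finset.range m)).filter
      (fun ck => ∃ z, cell z = ck.1 ∧ rd wr (Hg T F) r z ≤ D z + ck.2 * (2 * δ))
  have hCovcard : ∀ F, ((Cov F).card : ℝ) ≤ m * (M / δ + 1) := by
    intro F
    have h1 : (Cov F).card ≤ N * m := by
      refine (Finset.card_filter_le _ _).trans ?_
      simp
    have h2 : ((Cov F).card : ℝ) ≤ N * m := by exact_mod_cast h1
    have h3 : (N : ℝ) ≤ M / δ + 1 := by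
      rw [hN]; push_cast
      linarith [Nat.floor_le (div_nonneg hM0 hδ.le)]
    nlinarith [(Nat.cast_nonneg m : (0:ℝ) ≤ m)]
  let Good : Finset (Finset (Sym2 V)) := Finset.univ.filter (fun F =>
    (∀ e ∈ F, e ∈ G'.edgeSet) ∧ ∑ e ∈ F, wr e ≤ 2 * B * W * (Cov F).card)
  have hGood : Good.Nonempty := ⟨∅, by
    simp only [Good, Finset.mem_filter, Finset.mem_univ, true_and, Finset.sum_empty]
    exact ⟨by simp, by positivity⟩⟩
  obtain ⟨F, hFG, hFmax⟩ := Finset.exists_max_image Good (fun F => (Cov F).card) hGood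
  simp only [Good, Finset.mem_filter, Finset.mem_univ, true_and] at hFG hFmax
  obtain ⟨hFe, hFs⟩ := hFG
  refine ⟨F, hFe, hFs.trans (mul_le_mul_of_nonneg_left (hCovcard F) (by positivity)), ?_⟩
  by_contra hcon
  push Not at hcon
  obtain ⟨x, hx⟩ := hcon
  set H := Hg T F with hH
  have hHc : H.Connected := Hg_conn hT F
  obtain ⟨p, hp⟩ := rd_attained hw hGc r x
  obtain ⟨q, q0, qe, -, hq⟩ := rd_geo hw hGc p hp
  set len := p.length with hlen
  -- cost function along the path
  let st : ℕ → ℝ := fun i => if T.Adj (q i) (q (i+1)) then 0 else wr s(q i, q (i+1))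
  let g : ℕ → ℝ := fun i => ∑ j ∈ Finset.range i, st j
  have hst0 : ∀ i, 0 ≤ st i := by
    intro i; simp only [st]; split_ifs
    · exact le_rfl
    · exact hw _
  have hgs : ∀ i, g (i+1) = g i + st i := fun i => Finset.sum_range_succ _ _
  have hstW : ∀ i < len, st i ≤ W := by
    intro i hi; simp only [st]; split_ifs with h
    · exact hW.le
    · exact (hG' _ _ (hq i hi).1).resolve_left h
  have hgmono : ∀ i j, i ≤ j → g i ≤ g j := by
    intro i j hij
    induction j, hij using Nat.le_induction with
    | base => exact le_rfl
    | succ j _ ih => rw [hgs]; linarith [hst0 j]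
  have hgD : ∀ i j, i ≤ j → j ≤ len → g j - g i ≤ D (q j) - D (q i) := by
    intro i j hij
    induction j, hij using Nat.le_induction with
    | base => intro _; simp
    | succ j hij ih =>
      intro hj
      have h1 := ih (by omega)
      have h2 := (hq j (by omega)).2.2
      have h3 : st j ≤ wr s(q j, q (j+1)) := by
        simp only [st]; split_ifs
        · exact hw _
        · exact le_rfl
      rw [hgs]
      simp only [hD] at h1 ⊢
      linarith
  have hgcell : ∀ i j, i ≤ len → j ≤ len → cell (q i) = cell (q j) → |g i - g j| ≤ W := by
    have aux : ∀ i j, i ≤ j → j ≤ len → cell (q i) = cell (q j) → |g i - g j| ≤ W := by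
      intro i j hij hj h
      have h1 := hgmono i j hij
      have h2 := hgD i j hij hj
      have h3 := hDcell _ _ h.symm
      rw [abs_le]; constructor <;> linarith
    intro i j hi hj h
    rcases le_total i j with h' | h'
    · exact aux i j h' hj h
    · rw [abs_sub_comm]; exact aux j i h' hi h.symm
  let P : ℕ → ℕ → Prop := fun k i => rd wr H r (q i) ≤ D (q i) + k * (2 * δ)
  have hP0 : ∀ k, P k 0 := by
    intro k
    simp only [P, hD, q0, rd_self hw]
    positivity
  let y : ℕ → ℕ := fun k => Nat.findGreatest (P k) len
  have hyP : ∀ k, P k (y k) := fun k => Nat.findGreatest_spec (Nat.zero_le _) (hP0 k)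
  have hyle : ∀ k, y k ≤ len := fun k => Nat.findGreatest_le _
  have hyafter : ∀ k i, y k < i → i ≤ len → ¬ P k i := fun k i h1 h2 =>
    Nat.findGreatest_is_greatest h1 h2
  have hylt : ∀ k ≤ m, y k < len := by
    intro k hk
    refine lt_of_le_of_ne (hyle k) fun h => ?_
    have h1 := hyP k
    rw [h] at h1
    simp only [P, qe] at h1
    have : (k:ℝ) * (2 * δ) ≤ m * (2 * δ) :=
      mul_le_mul_of_nonneg_right (by exact_mod_cast hk) (by positivity)
    simp only [hD] at h1
    linarith
  have hymono : ∀ k, y k ≤ y (k+1) := by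
    intro k
    apply Nat.le_findGreatest (hyle k)
    have := hyP k
    simp only [P] at this ⊢
    push_cast
    linarith
  let X : ℕ → ℝ := fun k => g len - g (y k)
  have hX0 : X 0 ≤ M := by
    have h1 := hgD (y 0) len (hyle 0) le_rfl
    have h2 : D (q len) ≤ M := by
      rw [qe]
      refine (rd_mono hw hT hTG r x).trans ((hfd r x).trans ?_)
      rw [abs_le]; constructor <;> linarith [(hf r).1, (hf r).2, (hf x).1, (hf x).2]
    have h3 : 0 ≤ D (q (y 0)) := rd_nonneg hw _ _
    simp only [X]; linarith
  have hXnn : ∀ k, 0 ≤ X k := fun k => sub_nonneg.2 (hgmono _ _ (hyle k))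
  have hB0 : 0 < B := by linarith
  obtain ⟨k, hkm, hXk⟩ : ∃ k < m, X k ≤ B * max (X (k+1)) W := by
    by_contra hcon
    push Not at hcon
    have hind : ∀ k < m, B ^ k * X k ≤ X 0 := by
      intro k
      induction k with
      | zero => intro _; simp
      | succ k ih =>
        intro hk
        have h1 := ih (by omega)
        have h2 := hcon k (by omega)
        have h3 : B * X (k+1) ≤ X k :=
          (mul_le_mul_of_nonneg_left (le_max_left _ _) hB0.le).trans h2.le
        calc B ^ (k+1) * X (k+1) = B ^ k * (B * X (k+1)) := by ring
          _ ≤ B ^ k * X k := mul_le_mul_of_nonneg_left h3 (by positivity)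
          _ ≤ _ := h1
    have h1 := hind (m-1) (by omega)
    have h2 := hcon (m-1) (by omega)
    have h3 : B * W < X (m-1) :=
      (mul_le_mul_of_nonneg_left (le_max_right _ _) hB0.le).trans_lt h2
    have h4 : B ^ (m-1) * (B * W) < B ^ (m-1) * X (m-1) :=
      mul_lt_mul_of_pos_left h3 (by positivity)
    have h5 : B ^ (m-1) * (B * W) = B ^ m * W := by
      rw [← mul_assoc, ← pow_succ]; congr 2; omega
    linarith
  -- new edges
  let idx := (Finset.Ico (y k) len).filter (fun i => ¬ T.Adj (q i) (q (i+1)))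
  let F' := F ∪ idx.image (fun i => s(q i, q (i+1)))
  have hF'e : ∀ e ∈ F', e ∈ G'.edgeSet := by
    intro e he
    rcases Finset.mem_union.1 he with he | he
    · exact hFe e he
    · obtain ⟨i, hi, rfl⟩ := Finset.mem_image.1 he
      simp only [idx, Finset.mem_filter, Finset.mem_Ico] at hi
      exact (hq i hi.1.2).1
  have hF'X : ∑ e ∈ F', wr e ≤ ∑ e ∈ F, wr e + X k := by
    have h1 : ∑ e ∈ F', wr e ≤ ∑ e ∈ F, wr e +
        ∑ e ∈ idx.image (fun i => s(q i, q (i+1))), wr e := by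
      have := Finset.sum_union_inter (s₁ := F) (s₂ := idx.image (fun i => s(q i, q (i+1))))
        (f := wr)
      have h0 : 0 ≤ ∑ e ∈ F ∩ idx.image (fun i => s(q i, q (i+1))), wr e :=
        Finset.sum_nonneg fun e _ => hw e
      simp only [F']
      linarith
    have h2 : ∑ e ∈ idx.image (fun i => s(q i, q (i+1))), wr e ≤
        ∑ i ∈ idx, wr s(q i, q (i+1)) := Finset.sum_image_le_of_nonneg (fun e _ => hw _)
    have h3 : ∑ i ∈ idx, wr s(q i, q (i+1)) = ∑ i ∈ Finset.Ico (y k) len, st i := by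
      simp only [idx, Finset.sum_filter, st, ite_not]
    have h4 : ∑ i ∈ Finset.Ico (y k) len, st i = X k := by
      simp only [X, g]
      rw [Finset.sum_Ico_eq_sub _ (hyle k)]
    linarith
  set H' := Hg T F' with hH'
  have hHH' : H ≤ H' := Hg_mono Finset.subset_union_left
  have hH'c : H'.Connected := Hg_conn hT F'
  have herr : ∀ i, y k ≤ i → i ≤ len → rd wr H' r (q i) ≤ D (q i) + k * (2 * δ) := by
    intro i hi1 hi2
    have h1 : rd wr H' (q (y k)) (q i) ≤ D (q i) - D (q (y k)) := by
      apply rd_seq hw hH'c q (fun j => D (q j)) _ _ hi1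
      intro j hj1 hj2
      have h2 := hq j (by omega)
      have h3 : H'.Adj (q j) (q (j+1)) := by
        by_cases hTa : T.Adj (q j) (q (j+1))
        · exact le_Hg F' hTa
        · apply Hg_adj h2.1.ne
          apply Finset.mem_union_right
          apply Finset.mem_image_of_mem (fun i => s(q i, q (i+1)))
          simp only [idx, Finset.mem_filter, Finset.mem_Ico]
          exact ⟨⟨hj1, by omega⟩, hTa⟩
      have h4 := rd_adj hw h3
      simp only [hD]; linarith [h2.2.2]
    have h2 := rd_triangle hw hH'c r (q (y k)) (q i)
    have h3 := rd_mono hw hHc hHH' r (q (y k))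
    have h4 : rd wr H r (q (y k)) ≤ D (q (y k)) + k * (2 * δ) := hyP k
    linarith
  -- new covered pairs
  let l := len - y (k+1)
  let C := (Finset.Icc 1 l).image (fun i => cell (q (y (k+1) + i)))
  have hl1 : 1 ≤ l := by have := hylt (k+1) (by omega); omega
  have hC1 : (1:ℝ) ≤ C.card := by
    have : 1 ≤ C.card := Finset.card_pos.2 ⟨_, Finset.mem_image_of_mem _
      (Finset.mem_Icc.2 ⟨le_rfl, hl1⟩)⟩
    exact_mod_cast this
  have hCX : X (k+1) ≤ 2 * W * (C.card : ℝ) := by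
    have := spaced (fun i => g (y (k+1) + i)) l W hW (by
      intro i hi
      rw [← add_assoc, hgs]
      have := hstW (y (k+1) + i) (by omega)
      linarith) (fun i => cell (q (y (k+1) + i))) (by
      intro i j hi1 hi2 hj1 hj2 h
      exact hgcell _ _ (by omega) (by omega) h)
    have hyl : y (k+1) + l = len := by have := hyle (k+1); omega
    simp only [hyl, add_zero] at this
    convert this
  have hcost : X k ≤ 2 * B * W * C.card := by
    refine hXk.trans ?_
    have : max (X (k+1)) W ≤ 2 * W * C.card := max_le hCX (by nlinarith)
    calc B * max (X (k+1)) W ≤ B * (2 * W * C.card) := mul_le_mul_of_nonneg_left this hB0.le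
      _ = _ := by ring
  have hCovmono : Cov F ⊆ Cov F' := by
    intro ck h
    simp only [Cov, Finset.mem_filter] at h ⊢
    refine ⟨h.1, ?_⟩
    obtain ⟨z, hz1, hz2⟩ := h.2
    exact ⟨z, hz1, (rd_mono hw hHc hHH' r z).trans hz2⟩
  have hnew : C.image (fun c => (c, k)) ⊆ Cov F' \ Cov F := by
    intro ck h
    obtain ⟨c, hc, rfl⟩ := Finset.mem_image.1 h
    obtain ⟨i, hi, rfl⟩ := Finset.mem_image.1 hc
    rw [Finset.mem_Icc] at hi
    have hil : y (k+1) + i ≤ len := by omega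
    simp only [Cov, Finset.mem_sdiff, Finset.mem_filter, Finset.mem_product, Finset.mem_range]
    refine ⟨⟨⟨hcellN _, hkm⟩, ⟨q (y (k+1) + i), rfl, herr _ ?_ hil⟩⟩, ?_⟩
    · have := hymono k; omega
    · rintro ⟨-, z, hz1, hz2⟩
      apply hyafter (k+1) (y (k+1) + i) (by omega) hil
      have h1 := hDcell z (q (y (k+1) + i)) hz1
      have h2 := rd_triangle hw hHc r z (q (y (k+1) + i))
      have h3 := rd_mono hw hT (le_Hg F) z (q (y (k+1) + i))
      have h4 := hTcell _ _ hz1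
      simp only [P]
      push_cast
      linarith
  have hcard : (Cov F).card + C.card ≤ (Cov F').card := by
    have h1 := Finset.card_le_card hnew
    rw [Finset.card_image_of_injective _ (fun a b h => (Prod.mk.inj h).1)] at h1
    have h2 := Finset.card_sdiff_add_card_eq_card hCovmono
    omega
  have hF'good := hFmax F' ⟨hF'e, by
    have : ((Cov F).card : ℝ) + C.card ≤ (Cov F').card := by exact_mod_cast hcard
    have h5 : 2 * B * W * ((Cov F).card + C.card) ≤ 2 * B * W * ((Cov F').card : ℝ) :=
      mul_le_mul_of_nonneg_left this (by positivity)
    linarith⟩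
  have : 1 ≤ C.card := by exact_mod_cast hC1
  omega
lemma sum_biUnion_le_real {ι α : Type*} [DecidableEq α] {s : Finset ι} {t : ι → Finset α} {g : α → ℝ}
    (hg : ∀ a, 0 ≤ g a) : ∑ a ∈ s.biUnion t, g a ≤ ∑ i ∈ s, ∑ a ∈ t i, g a := by
  induction s using Finset.induction_on with
  | empty => simp
  | insert i s hi ih =>
    rw [Finset.biUnion_insert, Finset.sum_insert hi]
    have := Finset.sum_union_inter (s₁ := t i) (s₂ := s.biUnion t) (f := g)
    have h0 : 0 ≤ ∑ e ∈ t i ∩ s.biUnion t, g e := Finset.sum_nonneg fun e _ => hg e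
    linarith

/-! ### Representatives -/

lemma key_reps {α κ : Type*} [DecidableEq κ] (P : Finset α) (key : α → κ) (wgt : α → ℝ) :
    ∃ S ⊆ P, (∀ x ∈ P, ∃ y ∈ S, key y = key x ∧ wgt y ≤ wgt x) ∧
      S.card ≤ (P.image key).card := by
  rcases P.eq_empty_or_nonempty with rfl | ⟨x00, -⟩
  · exact ⟨∅, by simp⟩
  have : Nonempty α := ⟨x00⟩
  have h : ∀ k ∈ P.image key, ∃ y ∈ P, key y = k ∧ ∀ x ∈ P, key x = k → wgt y ≤ wgt x := by
    intro k hk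
    obtain ⟨x0, hx0, hk0⟩ := Finset.mem_image.1 hk
    obtain ⟨y, hy, hmin⟩ := Finset.exists_min_image (P.filter (fun x => key x = k)) wgt
      ⟨x0, Finset.mem_filter.2 ⟨hx0, hk0⟩⟩
    rw [Finset.mem_filter] at hy
    exact ⟨y, hy.1, hy.2, fun x hx hxk => hmin x (Finset.mem_filter.2 ⟨hx, hxk⟩)⟩
  choose! g hg1 hg2 hg3 using h
  refine ⟨(P.image key).image g, ?_, ?_, Finset.card_image_le⟩
  · intro y hy
    obtain ⟨k, hk, rfl⟩ := Finset.mem_image.1 hy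
    exact hg1 k hk
  · intro x hx
    have hk := Finset.mem_image_of_mem key hx
    exact ⟨g (key x), Finset.mem_image_of_mem g hk, hg2 _ hk, hg3 _ hk x hx rfl⟩

lemma reps_scale {V : Type} [Fintype V] (wr : Sym2 V → ℝ) {f : V → ℝ} {M ρ σ : ℝ}
    (hf : ∀ v, 0 ≤ f v ∧ f v ≤ M) (hρ : 0 < ρ) (hσ : 0 < σ) (D : ℕ) (P : Finset (V × V))
    (hfib : ∀ x ∈ P, ((P.filter (fun y => ⌊f y.1 / ρ⌋₊ = ⌊f x.1 / ρ⌋₊ ∧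
      wr s(y.1, y.2) ≤ wr s(x.1, x.2))).image (fun y => ⌊f y.2 / ρ⌋₊)).card ≤ D) :
    ∃ S ⊆ P, (∀ x ∈ P, ∃ y ∈ S, wr s(y.1, y.2) ≤ wr s(x.1, x.2) ∧
        |f x.1 - f y.1| ≤ σ ∧ |f x.2 - f y.2| ≤ σ) ∧
      S.card ≤ ((⌊M / ρ⌋₊ + 1) * D) * ((⌊ρ / σ⌋₊ + 1) * (⌊ρ / σ⌋₊ + 1)) := by
  set cell : V → ℕ := fun v => ⌊f v / ρ⌋₊ with hcell
  set off : V → ℝ := fun v => f v - cell v * ρ with hoff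
  have hoff0 : ∀ v, 0 ≤ off v ∧ off v ≤ ρ := by
    intro v
    have h1 := Nat.floor_le (div_nonneg (hf v).1 hρ.le)
    have h2 := Nat.lt_floor_add_one (f v / ρ)
    rw [le_div_iff₀ hρ] at h1
    rw [div_lt_iff₀ hρ] at h2
    simp only [hoff, hcell]
    constructor <;> nlinarith
  set fine : V → ℕ := fun v => ⌊off v / σ⌋₊ with hfine
  have hclose : ∀ u v, cell u = cell v → fine u = fine v → |f u - f v| ≤ σ := by
    intro u v h1 h2
    have := cell_close hσ (hoff0 u).1 (hoff0 v).1 h2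
    simp only [hoff, h1] at this
    simpa using this
  obtain ⟨S, hSP, hS, hc⟩ := key_reps P
    (fun x => ((cell x.1, cell x.2), (fine x.1, fine x.2))) (fun x => wr s(x.1, x.2))
  refine ⟨S, hSP, ?_, hc.trans ?_⟩
  · intro x hx
    obtain ⟨y, hy, hk, hyw⟩ := hS x hx
    simp only [Prod.mk.injEq] at hk
    exact ⟨y, hy, hyw, hclose _ _ hk.1.1.symm hk.2.1.symm, hclose _ _ hk.1.2.symm hk.2.2.symm⟩
  · set Q := P.image (fun x => (cell x.1, cell x.2)) with hQ
    have hsub : P.image (fun x => ((cell x.1, cell x.2), (fine x.1, fine x.2))) ⊆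
        Q ×ˢ (Finset.range (⌊ρ / σ⌋₊ + 1) ×ˢ Finset.range (⌊ρ / σ⌋₊ + 1)) := by
      intro k hk
      obtain ⟨x, hx, rfl⟩ := Finset.mem_image.1 hk
      have hfr : ∀ v, fine v < ⌊ρ / σ⌋₊ + 1 := fun v => Nat.lt_succ_of_le
        (Nat.floor_le_floor (div_le_div_of_nonneg_right (hoff0 v).2 hσ.le))
      have hxQ : (cell x.1, cell x.2) ∈ Q := by rw [hQ]; exact Finset.mem_image.2 ⟨x, hx, rfl⟩
      refine Finset.mem_product.2 ⟨hxQ, Finset.mem_product.2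
        ⟨Finset.mem_range.2 (hfr _), Finset.mem_range.2 (hfr _)⟩⟩
    refine (Finset.card_le_card hsub).trans ?_
    rw [Finset.card_product, Finset.card_product, Finset.card_range]
    refine Nat.mul_le_mul_right _ ?_
    have h1 : ∀ a ∈ Finset.range (⌊M / ρ⌋₊ + 1), (Q.filter (fun k => k.1 = a)).card ≤ D := by
      intro a _
      by_cases hne : (P.filter (fun x => cell x.1 = a)).Nonempty
      · obtain ⟨x, hx, hmax⟩ := Finset.exists_max_image _ (fun x => wr s(x.1, x.2)) hne
        rw [Finset.mem_filter] at hx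
        refine le_trans ?_ (hfib x hx.1)
        refine Finset.card_le_card_of_injOn Prod.snd ?_ ?_
        · intro k hk
          simp only [Finset.coe_filter, Set.mem_setOf_eq] at hk
          obtain ⟨hk, hka⟩ := hk
          obtain ⟨y, hy, rfl⟩ := Finset.mem_image.1 hk
          apply Finset.mem_coe.2
          apply Finset.mem_image.2
          refine ⟨y, ?_, rfl⟩
          rw [Finset.mem_filter]
          refine ⟨hy, ?_, hmax y (Finset.mem_filter.2 ⟨hy, hka⟩)⟩
          exact hka.trans hx.2.symm
        · intro k hk k' hk' h
          simp only [Finset.coe_filter, Set.mem_setOf_eq] at hk hk'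
          exact Prod.ext (hk.2.trans hk'.2.symm) h
      · have : Q.filter (fun k => k.1 = a) = ∅ := by
          rw [Finset.filter_eq_empty_iff]
          intro k hk hka
          obtain ⟨y, hy, rfl⟩ := Finset.mem_image.1 hk
          exact hne ⟨y, Finset.mem_filter.2 ⟨hy, hka⟩⟩
        rw [this]; simp
    have h2 := Finset.card_le_mul_card_image_of_maps_to (s := Q) (t := Finset.range (⌊M / ρ⌋₊ + 1))
      (f := Prod.fst) (fun k hk => by
        obtain ⟨x, hx, rfl⟩ := Finset.mem_image.1 hk
        exact Finset.mem_range.2 (Nat.lt_succ_of_le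
          (Nat.floor_le_floor (div_le_div_of_nonneg_right (hf x.1).2 hρ.le)))) D (by
        intro a ha; convert h1 a ha)
    rw [Finset.card_range] at h2
    linarith [Nat.mul_comm D (⌊M / ρ⌋₊ + 1)]

/-! ### Small edges -/

lemma part_a {V : Type} [Fintype V] {wr : Sym2 V → ℝ} (hw : ∀ e, 0 ≤ wr e)
    (G : SimpleGraph V) {W0 : ℝ} (hW0 : 0 ≤ W0) (p q t : ℕ) (hp : 1 ≤ p) (hq : 1 ≤ q)
    (hn : Fintype.card V ≤ p * q) (hn2 : Fintype.card V * Fintype.card V < 2 ^ t) :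
    ∃ (F : Finset (Sym2 V)) (R : Finset V), (∀ e ∈ F, e ∈ G.edgeSet) ∧
      ∑ e ∈ F, wr e ≤ Fintype.card V * (q * W0) ∧ R.card ≤ p * t ∧
      ∀ u v, G.Adj u v → wr s(u, v) ≤ W0 → s(u, v) ∈ F ∨
        ∃ r ∈ R, G.Adj u r ∧ wr s(u, r) ≤ wr s(u, v) := by
  let A : V × V → Finset V := fun x =>
    Finset.univ.filter (fun z => G.Adj x.1 z ∧ wr s(x.1, z) ≤ wr s(x.1, x.2))
  obtain ⟨R, -, hRc, hR⟩ := hitting (Finset.univ : Finset V)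
    (Finset.univ.filter (fun x : V × V => q ≤ (A x).card)) A p q t hp hq (by simpa using hn)
    (by
      refine lt_of_le_of_lt (Finset.card_filter_le _ _) ?_
      simpa using hn2)
    (by intro x hx; exact ⟨Finset.subset_univ _, (Finset.mem_filter.1 hx).2⟩)
  let P : V → Finset V := fun u => Finset.univ.filter
    (fun v => G.Adj u v ∧ wr s(u, v) ≤ W0 ∧ (A (u, v)).card < q)
  have hPc : ∀ u, (P u).card ≤ q := by
    intro u
    by_cases hne : (P u).Nonempty
    · obtain ⟨v, hv, hmax⟩ := Finset.exists_max_image _ (fun v => wr s(u, v)) hne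
      have hv' := (Finset.mem_filter.1 hv).2
      refine le_trans (Finset.card_le_card ?_) hv'.2.2.le
      intro z hz
      exact Finset.mem_filter.2 ⟨Finset.mem_univ _, (Finset.mem_filter.1 hz).2.1, hmax z hz⟩
    · rw [Finset.not_nonempty_iff_eq_empty.1 hne]; simp
  let F : Finset (Sym2 V) := Finset.univ.biUnion (fun u => (P u).image (fun v => s(u, v)))
  refine ⟨F, R, ?_, ?_, hRc, ?_⟩
  · intro e he
    obtain ⟨u, -, he⟩ := Finset.mem_biUnion.1 he
    obtain ⟨v, hv, rfl⟩ := Finset.mem_image.1 he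
    exact (Finset.mem_filter.1 hv).2.1
  · have h1 : ∀ u, ∑ e ∈ (P u).image (fun v => s(u, v)), wr e ≤ q * W0 := by
      intro u
      refine (Finset.sum_image_le_of_nonneg (fun e _ => hw _)).trans ?_
      refine (Finset.sum_le_card_nsmul _ _ W0 (fun v hv => (Finset.mem_filter.1 hv).2.2.1)).trans ?_
      rw [nsmul_eq_mul]
      exact mul_le_mul_of_nonneg_right (by exact_mod_cast hPc u) hW0
    calc ∑ e ∈ F, wr e ≤ ∑ u : V, ∑ e ∈ (P u).image (fun v => s(u, v)), wr e :=
          sum_biUnion_le_real hw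
      _ ≤ ∑ u : V, (q * W0) := Finset.sum_le_sum (fun u _ => h1 u)
      _ = _ := by simp
  · intro u v hadj hle
    by_cases hq' : q ≤ (A (u, v)).card
    · right
      obtain ⟨r, hr, hrA⟩ := hR (u, v) (by simp [hq'])
      exact ⟨r, hr, (Finset.mem_filter.1 hrA).2⟩
    · left
      exact Finset.mem_biUnion.2 ⟨u, Finset.mem_univ _, Finset.mem_image.2
        ⟨v, Finset.mem_filter.2 ⟨Finset.mem_univ _, hadj, hle, by omega⟩, rfl⟩⟩
/-! ### Large edges and long paths -/

lemma exists_scale : ∃ sc : ℝ → ℕ, ∀ y : ℝ, 1 ≤ y → y ≤ 2 ^ sc y ∧ (2:ℝ) ^ sc y ≤ 2 * y := by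
  have h : ∀ y : ℝ, ∃ i : ℕ, 1 ≤ y → y ≤ 2 ^ i ∧ (2:ℝ) ^ i ≤ 2 * y := by
    intro y
    by_cases hy : 1 ≤ y
    · obtain ⟨n, h1, h2⟩ := exists_nat_pow_near hy (by norm_num : (1:ℝ) < 2)
      refine ⟨n + 1, fun _ => ⟨h2.le, ?_⟩⟩
      rw [pow_succ]; linarith
    · exact ⟨0, fun h => absurd h hy⟩
  choose sc hsc using h
  exact ⟨sc, hsc⟩

lemma scale_lt {i k c l : ℕ} (hc : 1 ≤ k) (hl : c < 2 ^ l) (h : (2:ℝ) ^ i ≤ 2 * (c:ℝ) ^ k) :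
    i < k * l + 1 := by
  have h1 : 2 ^ i ≤ 2 * c ^ k := by exact_mod_cast h
  have h2 : c ^ k < (2 ^ l) ^ k := Nat.pow_lt_pow_left hl (by omega)
  have h3 : 2 ^ i < 2 ^ (k * l + 1) := by
    calc 2 ^ i ≤ 2 * c ^ k := h1
      _ < 2 * (2 ^ l) ^ k := by omega
      _ = 2 ^ (k * l + 1) := by rw [← pow_mul, mul_comm l k, pow_succ]; ring
  exact (Nat.pow_lt_pow_iff_right (by norm_num)).1 h3

lemma part_bc {V : Type} [Fintype V] {wr : Sym2 V → ℝ} (hw : ∀ e, 0 ≤ wr e)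
    (G : SimpleGraph V) {f : V → ℝ} {M W0 : ℝ} (hM : 0 < M) (hf : ∀ v, 0 ≤ f v ∧ f v ≤ M)
    (c l t : ℕ) (hc : 1 ≤ c) (hl : c < 2 ^ l) (hW0 : W0 = M / (c:ℝ) ^ 24)
    (hn2 : Fintype.card V * Fintype.card V < 2 ^ t)
    {ι : Type} [Fintype ι] (hι : Fintype.card ι < 2 ^ t) (Z : ι → Finset V) (ω : ι → ℝ) :
    ∃ (F : Finset (Sym2 V)) (R : Finset V), (∀ e ∈ F, e ∈ G.edgeSet) ∧
      ∑ e ∈ F, wr e ≤ (24 * l + 1) * (40 * (c:ℝ) ^ 18 * M) ∧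
      R.card ≤ 2 * (10 * c ^ 18 * t) ∧
      (∀ u v, G.Adj u v → W0 < wr s(u, v) → wr s(u, v) ≤ M →
        (∃ r ∈ R, ∃ u' v', G.Adj u' v' ∧ wr s(u', v') ≤ wr s(u, v) ∧
          |f u - f u'| ≤ wr s(u, v) / 4 ∧ |f v' - f r| ≤ wr s(u, v) / 2) ∨
        (∃ u' v', s(u', v') ∈ F ∧ wr s(u', v') ≤ wr s(u, v) ∧
          |f u - f u'| ≤ wr s(u, v) ^ 2 / (W0 * (c:ℝ) ^ 6) ∧
          |f v - f v'| ≤ wr s(u, v) ^ 2 / (W0 * (c:ℝ) ^ 6))) ∧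
      (∀ s, W0 < ω s → ω s ≤ M →
        (∃ r ∈ R, ∃ z ∈ Z s, |f z - f r| ≤ ω s / 2) ∨
        (∃ ρ : ℝ, 0 < ρ ∧ ρ ≤ ω s ∧
          (((Z s).image (fun z => ⌊f z / ρ⌋₊)).card : ℝ) * ω s ≤ (c:ℝ) ^ 6 * W0)) := by
  have hc0 : (1:ℝ) ≤ c := by exact_mod_cast hc
  have hcp : ∀ k : ℕ, (0:ℝ) < (c:ℝ) ^ k := fun k => by positivity
  have hW0p : 0 < W0 := by rw [hW0]; exact div_pos hM (hcp _)
  have hMW : M = W0 * (c:ℝ) ^ 24 := by rw [hW0]; field_simp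
  obtain ⟨sc, hsc⟩ := exists_scale
  -- consequences for a weight
  have hscw : ∀ x, W0 < x → x ≤ M → x ≤ 2 ^ sc (x / W0) * W0 ∧ 2 ^ sc (x / W0) * W0 ≤ 2 * x ∧
      (2:ℝ) ^ sc (x / W0) ≤ 2 * (c:ℝ) ^ 24 := by
    intro x hx hxM
    have h1 : 1 ≤ x / W0 := by rw [le_div_iff₀ hW0p]; linarith
    obtain ⟨h2, h3⟩ := hsc _ h1
    refine ⟨by rwa [div_le_iff₀ hW0p] at h2, ?_, ?_⟩
    · calc (2:ℝ) ^ sc (x / W0) * W0 ≤ 2 * (x / W0) * W0 := mul_le_mul_of_nonneg_right h3 hW0p.le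
        _ = 2 * x := by field_simp
    · refine h3.trans ?_
      have : x / W0 ≤ (c:ℝ) ^ 24 := by rw [div_le_iff₀ hW0p]; linarith
      linarith
  set ρ : ℕ → ℝ := fun i => 2 ^ i * W0 / 8 with hρ
  have hρp : ∀ i, 0 < ρ i := fun i => by simp only [hρ]; positivity
  set cell : ℕ → V → ℕ := fun i v => ⌊f v / ρ i⌋₊ with hcell
  have hcl : ∀ i v, (cell i v : ℝ) * ρ i ≤ f v ∧ f v < (cell i v + 1) * ρ i := by
    intro i v
    have h1 := Nat.floor_le (div_nonneg (hf v).1 (hρp i).le)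
    have h2 := Nat.lt_floor_add_one (f v / ρ i)
    rw [le_div_iff₀ (hρp i)] at h1
    rw [div_lt_iff₀ (hρp i)] at h2
    exact ⟨h1, h2⟩
  have hUb : ∀ i a v, (2:ℝ) ^ i ≤ 2 * (c:ℝ) ^ 24 → a < 2 ^ i →
      cell i v * 2 ^ i + a < 10 * c ^ 24 := by
    intro i a v hi ha
    have h1 := (hcl i v).1.trans (hf v).2
    rw [hMW] at h1
    have h2 : (cell i v : ℝ) * 2 ^ i ≤ 8 * (c:ℝ) ^ 24 := by
      have : W0 * ((cell i v : ℝ) * 2 ^ i) ≤ W0 * (8 * (c:ℝ) ^ 24) := by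
        simp only [hρ] at h1; linarith
      exact le_of_mul_le_mul_left this hW0p
    have h3 : cell i v * 2 ^ i ≤ 8 * c ^ 24 := by exact_mod_cast h2
    have h4 : 2 ^ i ≤ 2 * c ^ 24 := by exact_mod_cast hi
    omega
  set U := Finset.range (10 * c ^ 24) with hU
  -- representatives of base cells
  rcases isEmpty_or_nonempty V with hV | hV
  · refine ⟨∅, ∅, by simp, by simp; positivity, by simp, fun u => (hV.false u).elim, ?_⟩
    intro s h1 h2
    refine Or.inr ⟨ω s, hW0p.trans h1, le_rfl, ?_⟩
    have : Z s = ∅ := Finset.eq_empty_of_isEmpty _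
    rw [this]; simp; positivity
  have hrep : ∀ k : ℕ, ∃ r : V, ∀ v, |f r - k * ρ 0| ≤ |f v - k * ρ 0| := fun k =>
    Finite.exists_min (fun v => |f v - k * ρ 0|)
  choose rep hrep using hrep
  have hclose : ∀ i k v, k / 2 ^ i = cell i v → |f v - f (rep k)| ≤ 2 * ρ i := by
    intro i k v h
    have h1 := hrep k v
    have h2 : |f v - k * ρ 0| ≤ ρ i := by
      obtain ⟨h3, h4⟩ := hcl i v
      have h5 : k / 2 ^ i * 2 ^ i ≤ k := Nat.div_mul_le_self _ _
      have h6 : k < (k / 2 ^ i + 1) * 2 ^ i := by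
        have := Nat.lt_div_mul_add (a := k) (b := 2 ^ i) (by positivity)
        rw [add_mul, one_mul]; exact this
      rw [h] at h5 h6
      have h5' : (cell i v : ℝ) * 2 ^ i ≤ k := by exact_mod_cast h5
      have h6' : (k:ℝ) ≤ (cell i v + 1) * 2 ^ i := by exact_mod_cast h6.le
      have e1 : ρ i = 2 ^ i * ρ 0 := by simp only [hρ]; ring
      have h7 := mul_le_mul_of_nonneg_right h5' (hρp 0).le
      have h8 := mul_le_mul_of_nonneg_right h6' (hρp 0).le
      rw [mul_assoc, ← e1] at h7 h8
      rw [abs_le]; constructor <;> linarith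
    have h3 : |f v - f (rep k)| ≤ |f v - k * ρ 0| + |f (rep k) - k * ρ 0| := by
      have := abs_sub (f v - k * ρ 0) (f (rep k) - k * ρ 0)
      simpa using this
    linarith
  -- hitting sets
  let scw : V × V → ℕ := fun x => sc (wr s(x.1, x.2) / W0)
  let Ab : V × V → Finset ℕ := fun x => U.filter (fun k => ∃ u' v', G.Adj u' v' ∧
    wr s(u', v') ≤ wr s(x.1, x.2) ∧ cell (scw x) x.1 = cell (scw x) u' ∧
    k / 2 ^ (scw x) = cell (scw x) v')
  let scs : ι → ℕ := fun s => sc (ω s / W0)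
  let Ac : ι → Finset ℕ := fun s => U.filter (fun k => ∃ z ∈ Z s, k / 2 ^ (scs s) = cell (scs s) z)
  have hUc : U.card ≤ (10 * c ^ 18) * c ^ 6 := by
    rw [hU, Finset.card_range]; apply le_of_eq; ring
  obtain ⟨Rb, -, hRbc, hRb⟩ := hitting U
    (Finset.univ.filter (fun x : V × V => c ^ 6 ≤ (Ab x).card)) Ab (10 * c ^ 18) (c ^ 6) t
    (by have := Nat.pow_pos (n := 18) hc; omega) (Nat.pow_pos hc) hUc
    (lt_of_le_of_lt (Finset.card_filter_le _ _) (by simpa using hn2))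
    (by intro x hx; exact ⟨Finset.filter_subset _ _, (Finset.mem_filter.1 hx).2⟩)
  obtain ⟨Rc, -, hRcc, hRc⟩ := hitting U
    (Finset.univ.filter (fun s : ι => c ^ 6 ≤ (Ac s).card)) Ac (10 * c ^ 18) (c ^ 6) t
    (by have := Nat.pow_pos (n := 18) hc; omega) (Nat.pow_pos hc) hUc
    (lt_of_le_of_lt (Finset.card_filter_le _ _) (by simpa using hι))
    (by intro x hx; exact ⟨Finset.filter_subset _ _, (Finset.mem_filter.1 hx).2⟩)
  -- fine representatives
  let P : ℕ → Finset (V × V) := fun i => Finset.univ.filter (fun x => G.Adj x.1 x.2 ∧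
    W0 < wr s(x.1, x.2) ∧ wr s(x.1, x.2) ≤ M ∧ scw x = i ∧ (Ab x).card < c ^ 6)
  let σ : ℕ → ℝ := fun i => (2 ^ i * W0) ^ 2 / (4 * (W0 * (c:ℝ) ^ 6))
  have hσp : ∀ i, 0 < σ i := fun i => by
    have := hcp 6
    simp only [σ]; positivity
  have hS : ∀ i, ∃ S ⊆ P i, (∀ x ∈ P i, ∃ y ∈ S, wr s(y.1, y.2) ≤ wr s(x.1, x.2) ∧
        |f x.1 - f y.1| ≤ σ i ∧ |f x.2 - f y.2| ≤ σ i) ∧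
      S.card ≤ ((⌊M / ρ i⌋₊ + 1) * c ^ 6) * ((⌊ρ i / σ i⌋₊ + 1) * (⌊ρ i / σ i⌋₊ + 1)) := by
    intro i
    apply reps_scale wr hf (hρp i) (hσp i) (c ^ 6) (P i)
    intro x hx
    obtain ⟨hx1, hx2, hx3, hx4, hx5⟩ := (Finset.mem_filter.1 hx).2
    have hi : (2:ℝ) ^ i ≤ 2 * (c:ℝ) ^ 24 := by rw [← hx4]; exact (hscw _ hx2 hx3).2.2
    refine le_trans ?_ hx5.le
    refine Finset.card_le_card_of_injOn (fun κ => κ * 2 ^ i) ?_ ?_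
    · intro κ hκ
      obtain ⟨y, hy, rfl⟩ := Finset.mem_image.1 (Finset.mem_coe.1 hκ)
      obtain ⟨hy1, hy2, hy3⟩ := Finset.mem_filter.1 hy
      apply Finset.mem_coe.2
      apply Finset.mem_filter.2
      refine ⟨Finset.mem_range.2 ?_, y.1, y.2, (Finset.mem_filter.1 hy1).2.1, hy3, ?_, ?_⟩
      · exact hUb i 0 y.2 hi (by positivity)
      · rw [hx4]; exact hy2.symm
      · rw [hx4]
        exact Nat.mul_div_cancel _ (by positivity)
    · intro a _ b _ hab
      exact Nat.eq_of_mul_eq_mul_right (by positivity : 0 < 2 ^ i) hab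
  choose S hSP hSrep hScard using hS
  let I := (Finset.range (24 * l + 1)).filter (fun i => (2:ℝ) ^ i ≤ 2 * (c:ℝ) ^ 24)
  let F : Finset (Sym2 V) := I.biUnion (fun i => (S i).image (fun x => s(x.1, x.2)))
  have hcost : ∀ i ∈ I, ∑ e ∈ (S i).image (fun x => s(x.1, x.2)), wr e ≤
      40 * (c:ℝ) ^ 18 * M := by
    intro i hi
    have hi2 := (Finset.mem_filter.1 hi).2
    refine (Finset.sum_image_le_of_nonneg (fun e _ => hw _)).trans ?_
    have hx : ∀ x ∈ S i, wr s(x.1, x.2) ≤ 2 ^ i * W0 := by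
      intro x hx
      obtain ⟨hx1, hx2, hx3, hx4, hx5⟩ := (Finset.mem_filter.1 (hSP i hx)).2
      rw [← hx4]
      exact (hscw _ hx2 hx3).1
    refine (Finset.sum_le_card_nsmul _ _ _ hx).trans ?_
    rw [nsmul_eq_mul]
    have h2i : (0:ℝ) < 2 ^ i := by positivity
    have h2i1 : (1:ℝ) ≤ 2 ^ i := one_le_pow₀ (by norm_num)
    have h6 : (1:ℝ) ≤ (c:ℝ) ^ 6 := one_le_pow₀ hc0
    have e1 : M / ρ i = 8 * (c:ℝ) ^ 24 / 2 ^ i := by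
      simp only [hρ]; rw [hMW]; field_simp
    have e2 : ρ i / σ i = (c:ℝ) ^ 6 / (2 * 2 ^ i) := by
      simp only [hρ, σ]; field_simp; norm_num
    have e3 : (⌊ρ i / σ i⌋₊ : ℝ) + 1 ≤ 2 * (c:ℝ) ^ 6 := by
      have h1 := Nat.floor_le (div_pos (hρp i) (hσp i)).le
      have h2 : ρ i / σ i ≤ (c:ℝ) ^ 6 := by
        rw [e2]; apply div_le_self (hcp 6).le; linarith
      linarith
    have e4 : (⌊M / ρ i⌋₊ : ℝ) + 1 ≤ 8 * (c:ℝ) ^ 24 / 2 ^ i + 1 := by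
      have h1 := Nat.floor_le (div_pos hM (hρp i)).le
      rw [← e1]; linarith
    have e5 : ((S i).card : ℝ) ≤ ((8 * (c:ℝ) ^ 24 / 2 ^ i + 1) * (c:ℝ) ^ 6) *
        ((2 * (c:ℝ) ^ 6) * (2 * (c:ℝ) ^ 6)) := by
      have : ((S i).card : ℝ) ≤ (((⌊M / ρ i⌋₊ : ℝ) + 1) * (c:ℝ) ^ 6) *
          (((⌊ρ i / σ i⌋₊ : ℝ) + 1) * ((⌊ρ i / σ i⌋₊ : ℝ) + 1)) := by exact_mod_cast hScard i
      refine this.trans ?_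
      gcongr
    calc ((S i).card : ℝ) * (2 ^ i * W0) ≤ ((8 * (c:ℝ) ^ 24 / 2 ^ i + 1) * (c:ℝ) ^ 6) *
        ((2 * (c:ℝ) ^ 6) * (2 * (c:ℝ) ^ 6)) * (2 ^ i * W0) := by gcongr
      _ = (8 * (c:ℝ) ^ 24 + 2 ^ i) * (4 * (c:ℝ) ^ 18 * W0) := by field_simp; ring
      _ ≤ (8 * (c:ℝ) ^ 24 + 2 * (c:ℝ) ^ 24) * (4 * (c:ℝ) ^ 18 * W0) := by gcongr
      _ = _ := by rw [hMW]; ring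
  refine ⟨F, (Rb ∪ Rc).image rep, ?_, ?_, ?_, ?_, ?_⟩
  · intro e he
    obtain ⟨i, -, he⟩ := Finset.mem_biUnion.1 he
    obtain ⟨x, hx, rfl⟩ := Finset.mem_image.1 he
    exact (Finset.mem_filter.1 (hSP i hx)).2.1
  · calc ∑ e ∈ F, wr e ≤ ∑ i ∈ I, ∑ e ∈ (S i).image (fun x => s(x.1, x.2)), wr e :=
          sum_biUnion_le_real hw
      _ ≤ I.card • (40 * (c:ℝ) ^ 18 * M) := Finset.sum_le_card_nsmul _ _ _ hcost
      _ ≤ _ := by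
        rw [nsmul_eq_mul]
        apply mul_le_mul_of_nonneg_right _ (by positivity)
        have : I.card ≤ 24 * l + 1 := (Finset.card_filter_le _ _).trans (by simp)
        exact_mod_cast this
  · refine Finset.card_image_le.trans ((Finset.card_union_le _ _).trans ?_)
    omega
  · intro u v hadj h1 h2
    obtain ⟨hs1, hs2, hs3⟩ := hscw _ h1 h2
    by_cases hq : c ^ 6 ≤ (Ab (u, v)).card
    · left
      obtain ⟨k, hk, hkA⟩ := hRb (u, v) (by simp [hq])
      obtain ⟨-, u', v', ha, hb, hd, he⟩ := Finset.mem_filter.1 hkA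
      refine ⟨rep k, Finset.mem_image_of_mem _ (Finset.mem_union_left _ hk), u', v', ha, hb, ?_, ?_⟩
      · have := cell_close (hρp (scw (u, v))) (hf u).1 (hf u').1 hd
        simp only [hρ, scw] at this
        linarith
      · have := hclose _ _ _ he
        simp only [hρ, scw] at this
        linarith
    · right
      have hP : (u, v) ∈ P (scw (u, v)) := Finset.mem_filter.2
        ⟨Finset.mem_univ _, hadj, h1, h2, rfl, by omega⟩
      obtain ⟨y, hy, hyw, hy1, hy2⟩ := hSrep _ _ hP
      have hσ : σ (scw (u, v)) ≤ wr s(u, v) ^ 2 / (W0 * (c:ℝ) ^ 6) := by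
        have h6 := hcp 6
        have : (2 ^ scw (u, v) * W0) ^ 2 ≤ (2 * wr s(u, v)) ^ 2 :=
          pow_le_pow_left₀ (by positivity) hs2 2
        simp only [σ]
        rw [div_le_div_iff₀ (by positivity) (by positivity)]
        calc (2 ^ scw (u, v) * W0) ^ 2 * (W0 * (c:ℝ) ^ 6)
            ≤ (2 * wr s(u, v)) ^ 2 * (W0 * (c:ℝ) ^ 6) := by gcongr
          _ = _ := by ring
      refine ⟨y.1, y.2, ?_, hyw, hy1.trans hσ, hy2.trans hσ⟩
      refine Finset.mem_biUnion.2 ⟨scw (u, v), Finset.mem_filter.2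
        ⟨Finset.mem_range.2 (scale_lt (by norm_num) hl hs3), hs3⟩, ?_⟩
      exact Finset.mem_image.2 ⟨y, hy, rfl⟩
  · intro s h1 h2
    obtain ⟨hs1, hs2, hs3⟩ := hscw _ h1 h2
    by_cases hq : c ^ 6 ≤ (Ac s).card
    · left
      obtain ⟨k, hk, hkA⟩ := hRc s (by simp [hq])
      obtain ⟨-, z, hz, hkz⟩ := Finset.mem_filter.1 hkA
      refine ⟨rep k, Finset.mem_image_of_mem _ (Finset.mem_union_right _ hk), z, hz, ?_⟩
      have := hclose _ _ _ hkz
      simp only [hρ, scs] at this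
      linarith
    · right
      refine ⟨ρ (scs s), hρp _, by simp only [hρ, scs]; linarith, ?_⟩
      set K := (Z s).image (fun z => ⌊f z / ρ (scs s)⌋₊) with hK
      have hcard : (K ×ˢ Finset.range (2 ^ scs s)).card ≤ (Ac s).card := by
        refine Finset.card_le_card_of_injOn (fun x => x.1 * 2 ^ scs s + x.2) ?_ ?_
        · intro x hx
          obtain ⟨hx1, hx2⟩ := Finset.mem_product.1 (Finset.mem_coe.1 hx)
          obtain ⟨z, hz, hzx⟩ := Finset.mem_image.1 hx1
          rw [Finset.mem_range] at hx2
          apply Finset.mem_coe.2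
          apply Finset.mem_filter.2
          refine ⟨Finset.mem_range.2 ?_, z, hz, ?_⟩
          · have := hUb (scs s) x.2 z hs3 hx2
            simp only [hcell, hzx] at this
            exact this
          · simp only [hcell, hzx]
            rw [mul_comm, Nat.mul_add_div (by positivity), Nat.div_eq_of_lt hx2, add_zero]
        · intro x hx y hy hxy
          obtain ⟨-, hx2⟩ := Finset.mem_product.1 (Finset.mem_coe.1 hx)
          obtain ⟨-, hy2⟩ := Finset.mem_product.1 (Finset.mem_coe.1 hy)
          rw [Finset.mem_range] at hx2 hy2
          dsimp only at hxy
          have d1 : x.1 = y.1 := by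
            have := congrArg (· / 2 ^ scs s) hxy
            rwa [mul_comm, Nat.mul_add_div (by positivity), Nat.div_eq_of_lt hx2, add_zero,
              mul_comm, Nat.mul_add_div (by positivity), Nat.div_eq_of_lt hy2, add_zero] at this
          refine Prod.ext d1 ?_
          rw [d1] at hxy
          omega
      rw [Finset.card_product, Finset.card_range] at hcard
      have h3 : K.card * 2 ^ scs s ≤ c ^ 6 := by omega
      have h4 : (K.card : ℝ) * 2 ^ scs s ≤ (c:ℝ) ^ 6 := by
        have h5 := (Nat.cast_le (α := ℝ)).2 h3
        rwa [Nat.cast_mul, Nat.cast_pow, Nat.cast_pow, Nat.cast_ofNat] at h5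
      calc (K.card : ℝ) * ω s ≤ K.card * (2 ^ scs s * W0) :=
            mul_le_mul_of_nonneg_left hs1 (Nat.cast_nonneg _)
        _ = (K.card * 2 ^ scs s) * W0 := by ring
        _ ≤ _ := mul_le_mul_of_nonneg_right h4 hW0p.le
/-! ### Core construction -/

def Gle {V : Type} (wr : Sym2 V → ℝ) (T G : SimpleGraph V) (W : ℝ) : SimpleGraph V :=
  T ⊔ SimpleGraph.fromEdgeSet {e | e ∈ G.edgeSet ∧ wr e ≤ W}

lemma Gle_adj {V : Type} {wr : Sym2 V → ℝ} {T G : SimpleGraph V} {W : ℝ} {a b : V} :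
    (Gle wr T G W).Adj a b ↔ T.Adj a b ∨ (G.Adj a b ∧ wr s(a, b) ≤ W) := by
  simp only [Gle, SimpleGraph.sup_adj, SimpleGraph.fromEdgeSet_adj]
  constructor
  · rintro (h | ⟨⟨h1, h2⟩, -⟩)
    · exact Or.inl h
    · exact Or.inr ⟨h1, h2⟩
  · rintro (h | ⟨h1, h2⟩)
    · exact Or.inl h
    · exact Or.inr ⟨⟨h1, h2⟩, h1.ne⟩

lemma preservers {V : Type} [Fintype V] {wr : Sym2 V → ℝ} (hw : ∀ e, 0 ≤ wr e)
    {T G : SimpleGraph V} (hT : T.Connected) (hTG : T ≤ G) {f : V → ℝ} {M Wt : ℝ} (hM : 0 < M)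
    (hf : ∀ v, 0 ≤ f v ∧ f v ≤ M) (hfd : ∀ u v, rd wr T u v ≤ |f u - f v|)
    (c l : ℕ) (hc : 1 ≤ c) (hl : c < 2 ^ l) (hWt : Wt = M / (c:ℝ) ^ 42) (R : Finset V) :
    ∃ F : Finset (Sym2 V), (∀ e ∈ F, e ∈ G.edgeSet) ∧
      ∑ e ∈ F, wr e ≤ R.card * ((42 * l + 1) * (56616 * c * M)) ∧
      ∀ r ∈ R, ∀ ω, Wt < ω → ω ≤ M → ∃ W, ω ≤ W ∧ W ≤ 2 * ω ∧
        ∀ x, rd wr (Hg T F) r x ≤ rd wr (Gle wr T G W) r x + W / 8 := by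
  have hc0 : (1:ℝ) ≤ c := by exact_mod_cast hc
  have hcp : (0:ℝ) < (c:ℝ) ^ 42 := by positivity
  have hWtp : 0 < Wt := by rw [hWt]; exact div_pos hM hcp
  have hMW : M = (c:ℝ) ^ 42 * Wt := by rw [hWt]; field_simp
  have h : ∀ (r : V) (j : ℕ), ∃ F : Finset (Sym2 V), (∀ e ∈ F, e ∈ G.edgeSet) ∧
      ((2:ℝ) ^ j ≤ 2 * (c:ℝ) ^ 42 → ∑ e ∈ F, wr e ≤ 56616 * c * M) ∧
      ∀ x, rd wr (Hg T F) r x ≤ rd wr (Gle wr T G (2 ^ j * Wt)) r x + 2 ^ j * Wt / 8 := by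
    intro r j
    have hWp : 0 < 2 ^ j * Wt := by positivity
    obtain ⟨F, h1, h2, h3⟩ := preserver hw (T := T) (G' := Gle wr T G (2 ^ j * Wt)) hT le_sup_left
      (f := f) (M := M) (W := 2 ^ j * Wt) (δ := 2 ^ j * Wt / 672) (B := c) (m := 42)
      (fun a b hab => (Gle_adj.1 hab).imp_right And.right) hf hfd (by positivity) (by linarith)
      hc0 (by norm_num) (by
        rw [hMW]
        have : (1:ℝ) ≤ 2 ^ j := one_le_pow₀ (by norm_num)
        have h5 : Wt ≤ 2 ^ j * Wt := by nlinarith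
        exact mul_le_mul_of_nonneg_left h5 hcp.le) r
    refine ⟨F, ?_, ?_, ?_⟩
    · intro e he
      have := h1 e he
      induction e using Sym2.ind with
      | _ a b =>
        rcases Gle_adj.1 this with h | h
        · exact hTG h
        · exact h.1
    · intro hj
      refine h2.trans ?_
      have e1 : 2 * (c:ℝ) * (2 ^ j * Wt) * ((42:ℕ) * (M / (2 ^ j * Wt / 672) + 1)) =
          84 * c * (672 * M + 2 ^ j * Wt) := by
        field_simp; push_cast; ring
      rw [e1]
      have e2 : 2 ^ j * Wt ≤ 2 * M := by
        rw [hMW]; nlinarith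
      have e3 : 84 * (c:ℝ) * (672 * M + 2 ^ j * Wt) ≤ 84 * c * (672 * M + 2 * M) := by gcongr
      linarith
    · intro x
      refine (h3 x).trans (le_of_eq ?_)
      push_cast; ring
  choose Fr hF1 hF2 hF3 using h
  let J := (Finset.range (42 * l + 1)).filter (fun j => (2:ℝ) ^ j ≤ 2 * (c:ℝ) ^ 42)
  let F : Finset (Sym2 V) := R.biUnion (fun r => J.biUnion (fun j => Fr r j))
  refine ⟨F, ?_, ?_, ?_⟩
  · intro e he
    obtain ⟨r, -, he⟩ := Finset.mem_biUnion.1 he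
    obtain ⟨j, -, he⟩ := Finset.mem_biUnion.1 he
    exact hF1 r j e he
  · have h1 : ∀ r ∈ R, ∑ e ∈ J.biUnion (fun j => Fr r j), wr e ≤
        (42 * l + 1) * (56616 * c * M) := by
      intro r _
      calc ∑ e ∈ J.biUnion (fun j => Fr r j), wr e ≤ ∑ j ∈ J, ∑ e ∈ Fr r j, wr e :=
            sum_biUnion_le_real hw
        _ ≤ J.card • (56616 * c * M) := Finset.sum_le_card_nsmul _ _ _ (fun j hj =>
            hF2 r j (Finset.mem_filter.1 hj).2)
        _ ≤ _ := by
          rw [nsmul_eq_mul]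
          apply mul_le_mul_of_nonneg_right _ (by positivity)
          have : J.card ≤ 42 * l + 1 := (Finset.card_filter_le _ _).trans (by simp)
          exact_mod_cast this
    calc ∑ e ∈ F, wr e ≤ ∑ r ∈ R, ∑ e ∈ J.biUnion (fun j => Fr r j), wr e :=
          sum_biUnion_le_real hw
      _ ≤ R.card • ((42 * l + 1) * (56616 * c * M)) := Finset.sum_le_card_nsmul _ _ _ h1
      _ = _ := nsmul_eq_mul _ _
  · intro r hr ω h1 h2
    obtain ⟨sc, hsc⟩ := exists_scale
    have h3 : 1 ≤ ω / Wt := by rw [le_div_iff₀ hWtp]; linarith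
    obtain ⟨h4, h5⟩ := hsc _ h3
    set j := sc (ω / Wt)
    have h6 : ω / Wt ≤ (c:ℝ) ^ 42 := by rw [div_le_iff₀ hWtp]; linarith
    have h7 : (2:ℝ) ^ j ≤ 2 * (c:ℝ) ^ 42 := by linarith
    refine ⟨2 ^ j * Wt, by rwa [div_le_iff₀ hWtp] at h4, ?_, ?_⟩
    · calc (2:ℝ) ^ j * Wt ≤ 2 * (ω / Wt) * Wt := mul_le_mul_of_nonneg_right h5 hWtp.le
        _ = 2 * ω := by field_simp
    · intro x
      refine le_trans (rd_mono hw (Hg_conn hT _) (Hg_mono ?_) r x) (hF3 r j x)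
      intro e he
      exact Finset.mem_biUnion.2 ⟨r, hr, Finset.mem_biUnion.2 ⟨j, Finset.mem_filter.2
        ⟨Finset.mem_range.2 (scale_lt (by norm_num) hl h7), h7⟩, he⟩⟩

lemma hit {V : Type} [Fintype V] {wr : Sym2 V → ℝ} (hw : ∀ e, 0 ≤ wr e)
    {H G' : SimpleGraph V} (hH : H.Connected) (hG' : G'.Connected) {W ω : ℝ} (hW : W ≤ 2 * ω)
    (q : ℕ → V) (D : ℕ → ℝ) (len i : ℕ) (hi : i ≤ len)
    (hq : ∀ j < len, rd wr G' (q j) (q (j+1)) ≤ D (j+1) - D j) (r : V)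
    (hr : rd wr G' r (q i) ≤ 7 / 4 * ω)
    (herr : ∀ x, rd wr H r x ≤ rd wr G' r x + W / 8) :
    rd wr H (q 0) (q len) ≤ D len - D 0 + 4 * ω := by
  have h1 := rd_seq hw hG' q D 0 i (Nat.zero_le _) (fun j _ hj => hq j (by omega))
  have h2 := rd_seq hw hG' q D i len hi (fun j _ hj => hq j hj)
  have h3 := rd_triangle hw hH (q 0) r (q len)
  have h4 := rd_comm hw hH (q 0) r
  have h5 := herr (q 0)
  have h6 := herr (q len)
  have h7 := rd_triangle hw hG' r (q i) (q 0)
  have h8 := rd_triangle hw hG' r (q i) (q len)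
  have h9 := rd_comm hw hG' (q 0) (q i)
  linarith

lemma le_foldr_max (L : List ℝ) : ∀ x ∈ L, x ≤ L.foldr max 0 := by
  induction L with
  | nil => simp
  | cons a L ih =>
    intro x hx
    rcases List.mem_cons.1 hx with rfl | hx
    · exact le_max_left _ _
    · exact (ih x hx).trans (le_max_right _ _)

lemma foldr_max_le (L : List ℝ) {M : ℝ} (hM : 0 ≤ M) (h : ∀ x ∈ L, x ≤ M) :
    L.foldr max 0 ≤ M := by
  induction L with
  | nil => simpa
  | cons a L ih =>
    exact max_le (h a (by simp)) (ih (fun x hx => h x (by simp [hx])))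

lemma foldr_max_nonneg (L : List ℝ) : 0 ≤ L.foldr max 0 := by
  induction L with
  | nil => simp
  | cons a L ih => exact ih.trans (le_max_right _ _)

lemma core {V : Type} [Fintype V] {wr : Sym2 V → ℝ} (hw : ∀ e, 0 ≤ wr e)
    {T G : SimpleGraph V} (hT : T.Connected) (hTG : T ≤ G) {f : V → ℝ} {M : ℝ} (hM : 0 < M)
    (hf : ∀ v, 0 ≤ f v ∧ f v ≤ M) (hfd : ∀ u v, rd wr T u v ≤ |f u - f v|)
    (c l : ℕ) (hc : 1 ≤ c) (hn : Fintype.card V ≤ c ^ 30) (hl : c < 2 ^ l)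
    (hl2 : l ^ 2 ≤ 4 * c) (π : (s t : V) → G.Walk s t)
    (hπ : ∀ s t, wl wr (π s t) = rd wr G s t) :
    ∃ F : Finset (Sym2 V), (∀ e ∈ F, e ∈ G.edgeSet) ∧
      ∑ e ∈ F, wr e ≤ 20000000000 * (c:ℝ) ^ 20 * M ∧
      ∀ s t, rd wr (Hg T F) s t ≤ rd wr G s t + 4 * ((π s t).edges.map wr).foldr max 0 := by
  have hG : G.Connected := hT.mono hTG
  have hc0 : (1:ℝ) ≤ c := by exact_mod_cast hc
  have hcp : ∀ k : ℕ, (0:ℝ) < (c:ℝ) ^ k := fun k => by positivity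
  have hnr : (Fintype.card V : ℝ) ≤ (c:ℝ) ^ 30 := by exact_mod_cast hn
  set W0 := M / (c:ℝ) ^ 24 with hW0
  set Wt := M / (c:ℝ) ^ 42 with hWt
  have hW0p : 0 < W0 := div_pos hM (hcp _)
  have hWtp : 0 < Wt := div_pos hM (hcp _)
  have hn2 : Fintype.card V * Fintype.card V < 2 ^ (60 * l) := by
    calc Fintype.card V * Fintype.card V ≤ c ^ 30 * c ^ 30 := Nat.mul_le_mul hn hn
      _ = c ^ 60 := by ring
      _ < (2 ^ l) ^ 60 := Nat.pow_lt_pow_left hl (by norm_num)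
      _ = 2 ^ (60 * l) := by rw [← pow_mul, mul_comm]
  have hrdM : ∀ u v, rd wr G u v ≤ |f u - f v| := fun u v =>
    (rd_mono hw hT hTG u v).trans (hfd u v)
  have hfM : ∀ u v, |f u - f v| ≤ M := by
    intro u v
    rw [abs_le]; constructor <;> linarith [(hf u).1, (hf u).2, (hf v).1, (hf v).2]
  -- geodesics
  have hgeo := fun s t => rd_geo hw hG (π s t) (hπ s t)
  choose q hq0 hqe hqs hq using hgeo
  let ω : V × V → ℝ := fun x => ((π x.1 x.2).edges.map wr).foldr max 0
  have hedge : ∀ s t, ∀ e ∈ (π s t).edges, wr e ≤ ω (s, t) := fun s t e he =>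
    le_foldr_max _ _ (List.mem_map_of_mem he)
  have hωM : ∀ s t, ω (s, t) ≤ M := by
    intro s t
    apply foldr_max_le _ hM.le
    intro x hx
    have h1 : x ≤ wl wr (π s t) := by
      apply List.single_le_sum _ _ hx
      intro y hy
      obtain ⟨e, -, rfl⟩ := List.mem_map.1 hy
      exact hw e
    rw [hπ] at h1
    exact h1.trans ((hrdM s t).trans (hfM s t))
  have hω0 : ∀ s t, 0 ≤ ω (s, t) := fun s t => foldr_max_nonneg _
  let Z : V × V → Finset V := fun x => (Finset.range ((π x.1 x.2).length + 1)).image (q x.1 x.2)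
  -- pieces
  let F0 : Finset (Sym2 V) := G.edgeFinset.filter (fun e => wr e ≤ Wt)
  obtain ⟨F1, R1, hF1, hF1c, hR1c, hA⟩ := part_a hw G hW0p.le (c ^ 18) (c ^ 12) (60 * l)
    (Nat.pow_pos hc) (Nat.pow_pos hc) (by rw [← pow_add]; exact hn) hn2
  obtain ⟨F2, R2, hF2, hF2c, hR2c, hBB, hCC⟩ := part_bc hw G hM hf c l (60 * l) hc hl hW0 hn2
    (ι := V × V) (by simpa using hn2) Z ω
  obtain ⟨F3, hF3, hF3c, hP⟩ := preservers hw hT hTG hM hf hfd c l hc hl hWt (R1 ∪ R2)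
  refine ⟨F0 ∪ F1 ∪ F2 ∪ F3, ?_, ?_, ?_⟩
  · intro e he
    simp only [Finset.mem_union] at he
    rcases he with ((he | he) | he) | he
    · exact SimpleGraph.mem_edgeFinset.1 (Finset.mem_filter.1 he).1
    · exact hF1 e he
    · exact hF2 e he
    · exact hF3 e he
  · have hun : ∀ A B : Finset (Sym2 V), ∑ e ∈ A ∪ B, wr e ≤ ∑ e ∈ A, wr e + ∑ e ∈ B, wr e := by
      intro A B
      have := Finset.sum_union_inter (s₁ := A) (s₂ := B) (f := wr)
      have h0 : 0 ≤ ∑ e ∈ A ∩ B, wr e := Finset.sum_nonneg fun e _ => hw e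
      linarith
    have u1 := hun (F0 ∪ F1 ∪ F2) F3
    have u2 := hun (F0 ∪ F1) F2
    have u3 := hun F0 F1
    have hl1 : 1 ≤ l := by
      rcases Nat.eq_zero_or_pos l with rfl | h
      · simp at hl; omega
      · exact h
    have hl1r : (1:ℝ) ≤ l := by exact_mod_cast hl1
    have hl2r : (l:ℝ) ^ 2 ≤ 4 * c := by exact_mod_cast hl2
    have hc1820 : (c:ℝ) ^ 18 ≤ (c:ℝ) ^ 20 := pow_le_pow_right₀ hc0 (by norm_num)
    have hc1920 : (c:ℝ) ^ 19 ≤ (c:ℝ) ^ 20 := pow_le_pow_right₀ hc0 (by norm_num)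
    have c0 : ∑ e ∈ F0, wr e ≤ (c:ℝ) ^ 18 * M := by
      have h1 : ∑ e ∈ F0, wr e ≤ F0.card • Wt :=
        Finset.sum_le_card_nsmul _ _ _ (fun e he => (Finset.mem_filter.1 he).2)
      have h2 : F0.card ≤ Fintype.card V * Fintype.card V := by
        refine (Finset.card_filter_le _ _).trans ?_
        refine (SimpleGraph.card_edgeFinset_le_card_choose_two).trans ?_
        refine (Nat.choose_le_pow _ _).trans ?_
        rw [sq]
      have h3 : (F0.card : ℝ) ≤ (c:ℝ) ^ 30 * (c:ℝ) ^ 30 := by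
        have : (F0.card : ℝ) ≤ Fintype.card V * Fintype.card V := by exact_mod_cast h2
        refine this.trans ?_
        gcongr
      rw [nsmul_eq_mul] at h1
      refine h1.trans ((mul_le_mul_of_nonneg_right h3 hWtp.le).trans (le_of_eq ?_))
      rw [hWt]; field_simp
    have c1 : ∑ e ∈ F1, wr e ≤ (c:ℝ) ^ 18 * M := by
      refine hF1c.trans ?_
      push_cast
      have : (Fintype.card V : ℝ) * ((c:ℝ) ^ 12 * W0) ≤ (c:ℝ) ^ 30 * ((c:ℝ) ^ 12 * W0) := by
        gcongr
      refine this.trans (le_of_eq ?_)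
      rw [hW0]; field_simp
    have hll : (l:ℝ) ≤ l ^ 2 := by nlinarith
    have c2 : ∑ e ∈ F2, wr e ≤ 4000 * (c:ℝ) ^ 20 * M := by
      refine hF2c.trans ?_
      have h1 : (24 * (l:ℝ) + 1) ≤ 100 * c := by nlinarith
      calc (24 * (l:ℝ) + 1) * (40 * (c:ℝ) ^ 18 * M) ≤ (100 * c) * (40 * (c:ℝ) ^ 18 * M) := by
            gcongr
        _ = 4000 * (c:ℝ) ^ 19 * M := by ring
        _ ≤ _ := by gcongr
    have c3 : ∑ e ∈ F3, wr e ≤ 12269819520 * (c:ℝ) ^ 20 * M := by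
      refine hF3c.trans ?_
      have h1 : (R1 ∪ R2).card ≤ 1260 * c ^ 18 * l := by
        refine (Finset.card_union_le _ _).trans ?_
        calc R1.card + R2.card ≤ c ^ 18 * (60 * l) + 2 * (10 * c ^ 18 * (60 * l)) := by omega
          _ = 1260 * c ^ 18 * l := by ring
      have h1r : ((R1 ∪ R2).card : ℝ) ≤ 1260 * (c:ℝ) ^ 18 * l := by exact_mod_cast h1
      calc ((R1 ∪ R2).card : ℝ) * ((42 * l + 1) * (56616 * c * M))
          ≤ (1260 * (c:ℝ) ^ 18 * l) * ((43 * l) * (56616 * c * M)) := by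
            gcongr
            linarith
        _ = 54180 * 56616 * (c:ℝ) ^ 19 * M * (l:ℝ) ^ 2 := by ring
        _ ≤ 54180 * 56616 * (c:ℝ) ^ 19 * M * (4 * c) := by gcongr
        _ = _ := by ring
    have c4 : (c:ℝ) ^ 18 * M ≤ (c:ℝ) ^ 20 * M := by gcongr
    have c5 : 0 ≤ (c:ℝ) ^ 20 * M := by positivity
    linarith
  · intro s t
    set H := Hg T (F0 ∪ F1 ∪ F2 ∪ F3) with hH
    have hHc : H.Connected := Hg_conn hT _
    set len := (π s t).length with hlen
    set p := q s t with hp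
    have hq' := hq s t
    have hωst : ω (s, t) = ((π s t).edges.map wr).foldr max 0 := rfl
    rw [← hωst]
    set Ω := ω (s, t) with hΩ
    have hΩ0 : 0 ≤ Ω := hω0 s t
    have hΩM : Ω ≤ M := hωM s t
    let D : ℕ → ℝ := fun i => rd wr G s (p i)
    have hD0 : D 0 = 0 := by simp only [D, hp, hq0, rd_self hw]
    have hDl : D len = rd wr G s t := by simp only [D, hp, hlen, hqe]
    have hst : rd wr H s t = rd wr H (p 0) (p len) := by rw [hp, hq0, hlen, hqe]
    have hadj : ∀ i < len, G.Adj (p i) (p (i+1)) := fun i hi => (hq' i hi).1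
    have hwt : ∀ i < len, wr s(p i, p (i+1)) ≤ Ω := fun i hi => hedge s t _ (hq' i hi).2.1
    have hDs : ∀ i < len, D (i+1) - D i = wr s(p i, p (i+1)) := fun i hi => by
      have := (hq' i hi).2.2
      simp only [D]; linarith
    have hexact : ∀ i < len, s(p i, p (i+1)) ∈ F0 ∪ F1 ∪ F2 ∪ F3 →
        rd wr H (p i) (p (i+1)) ≤ D (i+1) - D i := by
      intro i hi he
      rw [hDs i hi]
      exact rd_adj hw (Hg_adj (hadj i hi).ne he)
    have hsmall : ∀ i < len, wr s(p i, p (i+1)) ≤ Wt →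
        rd wr H (p i) (p (i+1)) ≤ D (i+1) - D i := by
      intro i hi h
      apply hexact i hi
      simp only [Finset.mem_union]
      exact Or.inl (Or.inl (Or.inl (Finset.mem_filter.2
        ⟨SimpleGraph.mem_edgeFinset.2 (hadj i hi), h⟩)))
    have hseq : (∀ i < len, rd wr H (p i) (p (i+1)) ≤ D (i+1) - D i) →
        rd wr H s t ≤ rd wr G s t + 4 * Ω := by
      intro h
      have := rd_seq hw hHc p D 0 len (Nat.zero_le _) (fun i _ hi => h i hi)
      rw [hst]; linarith
    by_cases hΩt : Ω ≤ Wt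
    · exact hseq (fun i hi => hsmall i hi ((hwt i hi).trans hΩt))
    push Not at hΩt
    -- the effect of a hit
    have hhit : ∀ r ∈ R1 ∪ R2, ∀ i ≤ len,
        (∀ W, Ω ≤ W → rd wr (Gle wr T G W) r (p i) ≤ 7 / 4 * Ω) →
        rd wr H s t ≤ rd wr G s t + 4 * Ω := by
      intro r hr i hi h
      obtain ⟨W, hW1, hW2, hW3⟩ := hP r hr Ω hΩt hΩM
      have hGc : (Gle wr T G W).Connected := hT.mono le_sup_left
      have := hit hw hHc hGc hW2 p D len i hi (by
        intro j hj
        rw [hDs j hj]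
        exact rd_adj hw (Gle_adj.2 (Or.inr ⟨hadj j hj, (hwt j hj).trans hW1⟩))) r (h W hW1) (by
        intro x
        refine le_trans (rd_mono hw (Hg_conn hT _) (Hg_mono ?_) r x) (hW3 x)
        exact Finset.subset_union_right)
      rw [hst]; linarith
    have hGT : ∀ W u v, rd wr (Gle wr T G W) u v ≤ |f u - f v| := fun W u v =>
      (rd_mono hw hT le_sup_left u v).trans (hfd u v)
    by_contra hcon
    -- middle edges are kept
    have hmid : ∀ i < len, wr s(p i, p (i+1)) ≤ W0 →
        rd wr H (p i) (p (i+1)) ≤ D (i+1) - D i := by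
      intro i hi h
      rcases hA _ _ (hadj i hi) h with h1 | ⟨r, hr, h1, h2⟩
      · apply hexact i hi
        simp only [Finset.mem_union]
        exact Or.inl (Or.inl (Or.inr h1))
      · exfalso
        refine hcon (hhit r (Finset.mem_union_left _ hr) i hi.le ?_)
        intro W hW
        have hGc : (Gle wr T G W).Connected := hT.mono le_sup_left
        have h3 := hwt i hi
        have h4 : (Gle wr T G W).Adj (p i) r := Gle_adj.2 (Or.inr ⟨h1, by linarith⟩)
        have h5 := rd_adj hw h4
        rw [rd_comm hw hGc]
        linarith
    by_cases hΩ0' : Ω ≤ W0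
    · exact hcon (hseq (fun i hi => hmid i hi ((hwt i hi).trans hΩ0')))
    push Not at hΩ0'
    have hbig : ∀ i < len, W0 < wr s(p i, p (i+1)) →
        rd wr H (p i) (p (i+1)) ≤ (D (i+1) - D i) * (1 + 2 * Ω / (W0 * (c:ℝ) ^ 6)) := by
      intro i hi h
      have hx := hwt i hi
      rcases hBB _ _ (hadj i hi) h (hx.trans hΩM) with
        ⟨r, hr, u', v', h1, h2, h3, h4⟩ | ⟨u', v', h1, h2, h3, h4⟩
      · exfalso
        refine hcon (hhit r (Finset.mem_union_right _ hr) i hi.le ?_)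
        intro W hW
        have hGc : (Gle wr T G W).Connected := hT.mono le_sup_left
        have h5 : (Gle wr T G W).Adj u' v' := Gle_adj.2 (Or.inr ⟨h1, by linarith⟩)
        have h6 := rd_adj hw h5
        have h7 := rd_triangle hw hGc (p i) u' r
        have h8 := rd_triangle hw hGc u' v' r
        have h9 := hGT W (p i) u'
        have h10 := hGT W v' r
        rw [rd_comm hw hGc]
        linarith
      · have h0 : G.Adj u' v' := hF2 _ h1
        have h5 : H.Adj u' v' := Hg_adj h0.ne (by
          simp only [Finset.mem_union]
          exact Or.inl (Or.inr h1))
        have h6 := rd_adj hw h5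
        have h7 := rd_triangle hw hHc (p i) u' (p (i+1))
        have h8 := rd_triangle hw hHc u' v' (p (i+1))
        have h9 := (rd_mono hw hT (le_Hg (F0 ∪ F1 ∪ F2 ∪ F3)) (p i) u').trans (hfd _ _)
        have h10 := (rd_mono hw hT (le_Hg (F0 ∪ F1 ∪ F2 ∪ F3)) v' (p (i+1))).trans (hfd _ _)
        rw [abs_sub_comm] at h10
        rw [hDs i hi]
        set x := wr s(p i, p (i+1)) with hxd
        have h11 : x ^ 2 / (W0 * (c:ℝ) ^ 6) ≤ x * Ω / (W0 * (c:ℝ) ^ 6) := by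
          have := hcp 6
          apply div_le_div_of_nonneg_right _ (by positivity)
          rw [sq]
          exact mul_le_mul_of_nonneg_left hx (by linarith)
        have h12 : x * (1 + 2 * Ω / (W0 * (c:ℝ) ^ 6)) = x + 2 * (x * Ω / (W0 * (c:ℝ) ^ 6)) := by
          ring
        rw [h12]
        linarith
    have hfac : 0 ≤ 2 * Ω / (W0 * (c:ℝ) ^ 6) := by
      have := hcp 6
      positivity
    have hall : ∀ i < len,
        rd wr H (p i) (p (i+1)) ≤ (D (i+1) - D i) * (1 + 2 * Ω / (W0 * (c:ℝ) ^ 6)) := by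
      intro i hi
      rcases le_or_gt (wr s(p i, p (i+1))) W0 with h | h
      · have h1 := hmid i hi h
        have h2 : 0 ≤ D (i+1) - D i := by rw [hDs i hi]; exact hw _
        nlinarith
      · exact hbig i hi h
    have htot := rd_seq hw hHc p (fun i => D i * (1 + 2 * Ω / (W0 * (c:ℝ) ^ 6))) 0 len
      (Nat.zero_le _) (fun i _ hi => by
        have := hall i hi
        rw [sub_mul] at this
        exact this)
    rcases hCC (s, t) hΩ0' hΩM with ⟨r, hr, z, hz, h1⟩ | ⟨ρ, hρ, hρΩ, h1⟩
    · obtain ⟨i, hi, rfl⟩ := Finset.mem_image.1 hz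
      rw [Finset.mem_range] at hi
      have hi' : i < len + 1 := hi
      refine hcon (hhit r (Finset.mem_union_right _ hr) i (by omega) ?_)
      intro W hW
      have h2 := hGT W r (p i)
      rw [abs_sub_comm] at h2
      have h1' : |f (p i) - f r| ≤ Ω / 2 := h1
      linarith
    · have hsp := spaced D len Ω (hW0p.trans hΩ0') (fun i hi => by
        have h2 := hDs i hi
        have h3 := hwt i hi
        linarith) (fun i => ⌊f (p i) / ρ⌋₊) (by
        intro i j _ _ _ _ hij
        have h2 := cell_close hρ (hf _).1 (hf _).1 hij
        have h3 := hrdM (p i) (p j)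
        have h4 := rd_triangle hw hG s (p i) (p j)
        have h5 := rd_triangle hw hG s (p j) (p i)
        have h6 := rd_comm hw hG (p j) (p i)
        simp only [D]
        rw [abs_le]; constructor <;> linarith)
      have hsub : ((Finset.Icc 1 len).image (fun i => ⌊f (p i) / ρ⌋₊)).card ≤
          ((Z (s, t)).image (fun z => ⌊f z / ρ⌋₊)).card := by
        apply Finset.card_le_card
        intro k hk
        obtain ⟨i, hi, rfl⟩ := Finset.mem_image.1 hk
        rw [Finset.mem_Icc] at hi
        exact Finset.mem_image.2 ⟨p i, Finset.mem_image.2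
          ⟨i, Finset.mem_range.2 (Nat.lt_succ_of_le hi.2), rfl⟩, rfl⟩
      have hsubr : (((Finset.Icc 1 len).image (fun i => ⌊f (p i) / ρ⌋₊)).card : ℝ) ≤
          ((Z (s, t)).image (fun z => ⌊f z / ρ⌋₊)).card := by exact_mod_cast hsub
      have hsp' : D len - D 0 ≤ 2 * Ω *
          (((Finset.Icc 1 len).image (fun i => ⌊f (p i) / ρ⌋₊)).card : ℝ) := by
        convert hsp
      have hlen2 : D len ≤ 2 * ((c:ℝ) ^ 6 * W0) := by
        have h2 : 2 * Ω * (((Finset.Icc 1 len).image (fun i => ⌊f (p i) / ρ⌋₊)).card : ℝ) ≤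
            2 * Ω * ((Z (s, t)).image (fun z => ⌊f z / ρ⌋₊)).card := by gcongr
        have h3 : (((Z (s, t)).image (fun z => ⌊f z / ρ⌋₊)).card : ℝ) * Ω ≤ (c:ℝ) ^ 6 * W0 := h1
        linarith
      apply hcon
      rw [hst]
      refine htot.trans ?_
      rw [hD0, ← hDl]
      have h6 := hcp 6
      have h7 : D len * (2 * Ω / (W0 * (c:ℝ) ^ 6)) ≤ 4 * Ω := by
        calc D len * (2 * Ω / (W0 * (c:ℝ) ^ 6))
            ≤ (2 * ((c:ℝ) ^ 6 * W0)) * (2 * Ω / (W0 * (c:ℝ) ^ 6)) := by gcongr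
          _ = 4 * Ω := by field_simp; ring
      linarith
/-! ### Conversion to extended nonnegative reals -/

lemma sq_le_pow_two (k : ℕ) : (k + 1) ^ 2 ≤ 4 * 2 ^ k := by
  rcases Nat.lt_or_ge k 2 with h | h
  · interval_cases k <;> norm_num
  · induction k, h using Nat.le_induction with
    | base => norm_num
    | succ k hk ih => rw [pow_succ 2 k]; nlinarith

lemma exists_param (n : ℕ) (hn : 1 ≤ n) : ∃ c l : ℕ, 1 ≤ c ∧ n ≤ c ^ 30 ∧ c < 2 ^ l ∧
    l ^ 2 ≤ 4 * c ∧ (c:ℝ) ^ 20 ≤ 2 ^ 20 * (n:ℝ) ^ ((2:ℝ) / 3) := by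
  have hn' : (1:ℝ) ≤ n := by exact_mod_cast hn
  set x : ℝ := (n:ℝ) ^ ((1:ℝ) / 30) with hx
  have hx1 : 1 ≤ x := Real.one_le_rpow hn' (by norm_num)
  have hx30 : x ^ 30 = n := by
    rw [hx, ← Real.rpow_natCast, ← Real.rpow_mul (by linarith)]; norm_num
  have hx20 : x ^ 20 = (n:ℝ) ^ ((2:ℝ) / 3) := by
    rw [hx, ← Real.rpow_natCast, ← Real.rpow_mul (by linarith)]; norm_num
  have h1 : x ≤ (⌈x⌉₊ : ℝ) := Nat.le_ceil x
  have h2 : (⌈x⌉₊ : ℝ) < x + 1 := Nat.ceil_lt_add_one (by linarith)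
  have hc : 1 ≤ ⌈x⌉₊ := Nat.one_le_ceil_iff.2 (by linarith)
  refine ⟨⌈x⌉₊, Nat.log 2 ⌈x⌉₊ + 1, hc, ?_, Nat.lt_pow_succ_log_self (by norm_num) _, ?_, ?_⟩
  · have : (n:ℝ) ≤ (⌈x⌉₊ : ℝ) ^ 30 := by
      rw [← hx30]; exact pow_le_pow_left₀ (by linarith) h1 30
    exact_mod_cast this
  · refine (sq_le_pow_two _).trans ?_
    have := Nat.pow_log_le_self 2 (x := ⌈x⌉₊) (by omega)
    omega
  · rw [← hx20, ← mul_pow]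
    exact pow_le_pow_left₀ (by positivity) (by linarith) 20

section conv
variable {V : Type} {G : SimpleGraph V} {w : Sym2 V → ℝ≥0∞}

lemma ofReal_wt (hpos : PosWeights G w) {e : Sym2 V} (he : e ∈ G.edgeSet) :
    ENNReal.ofReal (w e).toReal = w e := ENNReal.ofReal_toReal (hpos e he).2

lemma walkWeight_eq (hpos : PosWeights G w) {H : SimpleGraph V} (hH : H ≤ G) {s t : V}
    (p : H.Walk s t) : walkWeight H w p = ENNReal.ofReal (wl (fun e => (w e).toReal) p) := by
  induction p with
  | nil => simp [walkWeight, wl]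
  | @cons a b c h p ih =>
    rw [wl_cons, ENNReal.ofReal_add ENNReal.toReal_nonneg
      (wl_nonneg (fun e => ENNReal.toReal_nonneg) p), ← ih,
      ofReal_wt hpos ((SimpleGraph.mem_edgeSet G).2 (hH h))]
    simp [walkWeight]

lemma maxEdge_eq (hpos : PosWeights G w) {s t : V} (p : G.Walk s t) :
    maxEdge G w p = ENNReal.ofReal ((p.edges.map (fun e => (w e).toReal)).foldr max 0) := by
  induction p with
  | nil => simp [maxEdge]
  | @cons a b c h p ih =>
    simp only [maxEdge] at ih
    simp only [maxEdge, SimpleGraph.Walk.edges_cons, List.map_cons, List.foldr_cons]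
    rw [ENNReal.ofReal_max, ← ih, ofReal_wt hpos ((SimpleGraph.mem_edgeSet G).2 h)]

lemma totalWeight_eq [Fintype V] (hpos : PosWeights G w) {H : SimpleGraph V} (hH : H ≤ G) :
    totalWeight H w = ENNReal.ofReal (∑ e ∈ H.edgeFinset, (w e).toReal) := by
  rw [ENNReal.ofReal_sum_of_nonneg (fun _ _ => ENNReal.toReal_nonneg), totalWeight, tsum_fintype]
  have h1 : ∑ e ∈ H.edgeFinset, ENNReal.ofReal (w e).toReal = ∑ e ∈ H.edgeFinset, w e := by
    apply Finset.sum_congr rfl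
    intro e he
    exact ofReal_wt hpos (SimpleGraph.edgeSet_mono hH (SimpleGraph.mem_edgeFinset.1 he))
  rw [h1]
  exact (Finset.sum_subtype H.edgeFinset (fun e => SimpleGraph.mem_edgeFinset) w).symm

lemma exists_mst [Fintype V] (hG : G.Connected) (w : Sym2 V → ℝ≥0∞) :
    ∃ T : SimpleGraph V, T ≤ G ∧ T.Connected ∧ totalWeight T w ≤ mstWeight G w := by
  obtain ⟨T, hT, hmin⟩ := Finset.exists_min_image
    (Finset.univ.filter (fun T : SimpleGraph V => T ≤ G ∧ T.Connected))
    (fun T => totalWeight T w) ⟨G, by simp [hG]⟩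
  obtain ⟨h1, h2⟩ := (Finset.mem_filter.1 hT).2
  refine ⟨T, h1, h2, ?_⟩
  refine le_iInf fun T' => le_iInf fun h3 => le_iInf fun h4 => ?_
  exact hmin T' (Finset.mem_filter.2 ⟨Finset.mem_univ _, h3, h4⟩)

end conv

/-- For every ε > 0, every connected weighted graph `G` on `n` vertices admits
a subgraph `H` with `d_H(s,t) ≤ d_G(s,t) + (4+ε)·W(s,t)` for all vertices `s, t`, and with
lightness at most `C(ε)·n^(2/3)`, where `C(ε) = C·(1/ε)^j` depends only polynomially
on `1/ε`. -/
theorem lightweight_four_plus_eps_W_spanner :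
    ∃ (C : ℝ) (j : ℕ), 0 < C ∧
      ∀ (V : Type) [Fintype V] (G : SimpleGraph V) (w : Sym2 V → ℝ≥0∞),
        G.Connected → PosWeights G w →
        ∀ π : (s t : V) → G.Walk s t, IsShortestPathScheme G w π →
          ∀ ε : ℝ, 0 < ε →
            ∃ H : SimpleGraph V, H ≤ G ∧
              totalWeight H w ≤
                ENNReal.ofReal (C * (1 / ε) ^ j * (Fintype.card V : ℝ) ^ ((2 : ℝ) / 3)) *
                  mstWeight G w ∧
              ∀ s t : V,
                gdist H w s t ≤
                  gdist G w s t + ENNReal.ofReal (4 + ε) * maxEdge G w (π s t) := by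
  refine ⟨50000000000 * 2 ^ 20, 0, by norm_num, ?_⟩
  intro V _ G w hG hpos π hπ ε hε
  rcases subsingleton_or_nontrivial V with hV | hV
  · refine ⟨G, le_rfl, ?_, fun s t => le_self_add⟩
    have : IsEmpty G.edgeSet := by
      refine ⟨?_⟩
      rintro ⟨e, he⟩
      induction e using Sym2.ind with
      | _ a b => exact ((SimpleGraph.mem_edgeSet G).1 he).ne (Subsingleton.elim a b)
    simp [totalWeight]
  obtain ⟨T, hTG, hT, hTm⟩ := exists_mst hG w
  set wr : Sym2 V → ℝ := fun e => (w e).toReal with hwr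
  have hw : ∀ e, 0 ≤ wr e := fun e => ENNReal.toReal_nonneg
  obtain ⟨f, hf, hfd⟩ := line_embed hw hT
  set L := ∑ e ∈ T.edgeFinset, wr e with hL
  have hLp : 0 < L := by
    obtain ⟨u, v, huv⟩ := exists_pair_ne V
    obtain ⟨p⟩ := hT.preconnected u v
    cases p with
    | nil => exact absurd rfl huv
    | @cons _ x _ h p =>
      have h1 : wr s(u, x) ≤ L := Finset.single_le_sum (f := wr) (fun e _ => hw e)
        (SimpleGraph.mem_edgeFinset.2 h)
      have h2 := hpos s(u, x) (hTG h)
      have h3 : 0 < wr s(u, x) := ENNReal.toReal_pos h2.1.ne' h2.2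
      linarith
  obtain ⟨c, l, hc, hn, hl, hl2, hc20⟩ := exists_param (Fintype.card V) Fintype.card_pos
  have hπr : ∀ s t, wl wr (π s t) = rd wr G s t := by
    intro s t
    refine le_antisymm ?_ (rd_le hw _)
    obtain ⟨p, hp⟩ := rd_attained hw hG s t
    have h1 : walkWeight G w (π s t) ≤ walkWeight G w p := by
      rw [hπ s t]; exact iInf_le _ p
    rw [walkWeight_eq hpos le_rfl, walkWeight_eq hpos le_rfl] at h1
    rw [← hp]
    exact (ENNReal.ofReal_le_ofReal_iff (wl_nonneg hw p)).1 h1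
  obtain ⟨F, hFG, hFc, hFd⟩ := core hw hT hTG (M := 2 * L) (by linarith) hf hfd c l hc hn hl hl2 π hπr
  have hHG : Hg T F ≤ G := by
    refine sup_le hTG ?_
    intro a b hab
    rw [SimpleGraph.fromEdgeSet_adj] at hab
    exact hFG _ hab.1
  refine ⟨Hg T F, hHG, ?_, ?_⟩
  · have h1 : ∑ e ∈ (Hg T F).edgeFinset, wr e ≤ L + ∑ e ∈ F, wr e := by
      have h2 : ∑ e ∈ (Hg T F).edgeFinset, wr e ≤ ∑ e ∈ T.edgeFinset ∪ F, wr e := by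
        apply Finset.sum_le_sum_of_subset_of_nonneg
        · intro e he
          rw [SimpleGraph.mem_edgeFinset] at he
          induction e using Sym2.ind with
          | _ a b =>
            rw [Finset.mem_union, SimpleGraph.mem_edgeFinset]
            rcases he with h | h
            · exact Or.inl h
            · exact Or.inr h.1
        · intro e _ _; exact hw e
      have h3 := Finset.sum_union_inter (s₁ := T.edgeFinset) (s₂ := F) (f := wr)
      have h0 : 0 ≤ ∑ e ∈ T.edgeFinset ∩ F, wr e := Finset.sum_nonneg fun e _ => hw e
      linarith
    rw [totalWeight_eq hpos hTG] at hTm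
    rw [totalWeight_eq hpos hHG]
    refine le_trans ?_ (mul_le_mul_right hTm _)
    rw [← ENNReal.ofReal_mul (by positivity)]
    apply ENNReal.ofReal_le_ofReal
    have hc1 : (1:ℝ) ≤ (c:ℝ) ^ 20 := one_le_pow₀ (by exact_mod_cast hc)
    calc ∑ e ∈ (Hg T F).edgeFinset, wr e ≤ L + 20000000000 * (c:ℝ) ^ 20 * (2 * L) := by linarith
      _ ≤ 50000000000 * (c:ℝ) ^ 20 * L := by nlinarith
      _ ≤ 50000000000 * (2 ^ 20 * (Fintype.card V : ℝ) ^ ((2:ℝ) / 3)) * L := by gcongr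
      _ = _ := by rw [pow_zero]; ring
  · intro s t
    obtain ⟨p, hp⟩ := rd_attained hw (Hg_conn hT F) s t
    have h1 : gdist (Hg T F) w s t ≤ ENNReal.ofReal (rd wr (Hg T F) s t) := by
      rw [← hp, ← walkWeight_eq hpos hHG]
      exact iInf_le _ p
    have h2 : gdist G w s t = ENNReal.ofReal (rd wr G s t) := by
      rw [← hπ s t, walkWeight_eq hpos le_rfl, ← hπr s t]
    refine h1.trans ((ENNReal.ofReal_le_ofReal (hFd s t)).trans ?_)
    have hmx := foldr_max_nonneg ((π s t).edges.map wr)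
    rw [ENNReal.ofReal_add (rd_nonneg hw s t) (by positivity), h2, maxEdge_eq hpos,
      ENNReal.ofReal_mul (by norm_num)]
    gcongr
    linarith
end

section
/- Every connected unweighted graph G on n vertices and every set 𝒫 ⊆ V × V of vertex pairs admits a subgraph H with at most C·n·|𝒫|^{1/3} edges (for a universal constant C) such that d_H(s,t) ≤ d_G(s,t) + 2 for every pair (s,t) ∈ 𝒫. -/
open scoped Classical

/-- Greedy hitting set. -/
theorem greedy_hit {V ι : Type} [Fintype V] [Nonempty V] (P : Finset ι) (hP : P.Nonempty)
    (w : ι → ℕ) (N : ι → Finset V) (d : ℕ) (hN : ∀ i ∈ P, d * w i ≤ 3 * (N i).card) (t : ℕ) :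
    ∃ S : Finset V, S.card ≤ t ∧
      (((∑ i ∈ P with Disjoint (N i) S, w i : ℕ) : ℝ)) * t * d ≤
        3 * (Fintype.card V : ℝ) * (P.card : ℝ) := by
  induction t with
  | zero => exact ⟨∅, by simp, by simp; positivity⟩
  | succ t ih =>
    obtain ⟨S, hS, hW⟩ := ih
    set U := P.filter (fun i => Disjoint (N i) S) with hU
    have hUP : U ⊆ P := Finset.filter_subset _ _
    set W : ℝ := ((∑ i ∈ U, w i : ℕ) : ℝ) with hWdef
    have hn : (0 : ℝ) < Fintype.card V := by exact_mod_cast Fintype.card_pos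
    have hp : (0 : ℝ) < P.card := by exact_mod_cast hP.card_pos
    have hdc : ∑ v : V, ∑ i ∈ U with v ∈ N i, (w i : ℝ) = ∑ i ∈ U, ((N i).card : ℝ) * w i := by
      simp_rw [Finset.sum_filter]
      rw [Finset.sum_comm]
      refine Finset.sum_congr rfl fun i _ => ?_
      rw [← Finset.sum_filter]
      simp
    have hcs : W ^ 2 ≤ (P.card : ℝ) * ∑ i ∈ U, (w i : ℝ) ^ 2 := by
      have h1 : W ^ 2 ≤ (U.card : ℝ) * ∑ i ∈ U, (w i : ℝ) ^ 2 := by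
        rw [hWdef]; push_cast
        exact sq_sum_le_card_mul_sum_sq
      refine h1.trans ?_
      gcongr
    have hlow : (d : ℝ) * ∑ i ∈ U, (w i : ℝ) ^ 2 ≤ 3 * ∑ i ∈ U, ((N i).card : ℝ) * w i := by
      rw [Finset.mul_sum, Finset.mul_sum]
      refine Finset.sum_le_sum fun i hi => ?_
      have h1 : (d : ℝ) * w i ≤ 3 * (N i).card := by exact_mod_cast hN i (hUP hi)
      have h2 : (0 : ℝ) ≤ w i := by positivity
      nlinarith
    obtain ⟨v, -, hv⟩ : ∃ v ∈ (Finset.univ : Finset V),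
        (∑ i ∈ U, ((N i).card : ℝ) * w i) / Fintype.card V ≤ ∑ i ∈ U with v ∈ N i, (w i : ℝ) := by
      refine Finset.exists_le_of_sum_le Finset.univ_nonempty ?_
      rw [hdc]
      simp only [Finset.sum_const, Finset.card_univ, nsmul_eq_mul]
      rw [mul_div_cancel₀ _ hn.ne']
    set D := ∑ i ∈ U with v ∈ N i, (w i : ℝ) with hD
    rw [div_le_iff₀ hn] at hv
    refine ⟨insert v S, (Finset.card_insert_le _ _).trans (by omega), ?_⟩
    have hnew : ((∑ i ∈ P with Disjoint (N i) (insert v S), w i : ℕ) : ℝ) = W - D := by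
      have h1 : P.filter (fun i => Disjoint (N i) (insert v S)) = U.filter (fun i => ¬ v ∈ N i) := by
        ext i
        simp only [hU, Finset.mem_filter, Finset.disjoint_insert_right]
        tauto
      rw [h1, eq_sub_iff_add_eq, hWdef, hD]
      push_cast
      rw [add_comm]
      exact Finset.sum_filter_add_sum_filter_not _ _ _
    rw [hnew]
    set A : ℝ := 3 * (Fintype.card V : ℝ) * (P.card : ℝ) with hA
    have hA0 : 0 < A := by positivity
    have hd0 : (0 : ℝ) ≤ d := by positivity
    have hW0 : 0 ≤ W := by rw [hWdef]; positivity
    have key : d * W ^ 2 ≤ A * D := by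
      calc d * W ^ 2 ≤ d * ((P.card : ℝ) * ∑ i ∈ U, (w i : ℝ) ^ 2) := by gcongr
        _ = P.card * (d * ∑ i ∈ U, (w i : ℝ) ^ 2) := by ring
        _ ≤ P.card * (3 * ∑ i ∈ U, ((N i).card : ℝ) * w i) := by gcongr
        _ ≤ P.card * (3 * (D * Fintype.card V)) := by gcongr
        _ = A * D := by rw [hA]; ring
    push_cast
    have ht : (0 : ℝ) ≤ (t : ℝ) + 1 := by positivity
    refine le_of_mul_le_mul_left ?_ hA0
    have h1 : A * ((W - D) * ((t : ℝ) + 1) * d) ≤ (W * (A - d * W)) * (((t : ℝ) + 1) * d) := by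
      have h3 : A * (W - D) ≤ W * (A - d * W) := by nlinarith
      have := mul_le_mul_of_nonneg_right h3 (mul_nonneg ht hd0)
      nlinarith
    refine h1.trans ?_
    by_cases h4 : 0 ≤ A - d * W
    · have h5 : W * (((t : ℝ) + 1) * d) ≤ A + d * W := by nlinarith
      have := mul_le_mul_of_nonneg_right h5 h4
      nlinarith [sq_nonneg (d * W)]
    · have h6 : W * (A - d * W) ≤ 0 := mul_nonpos_of_nonneg_of_nonpos hW0 (by linarith)
      have := mul_nonpos_of_nonpos_of_nonneg h6 (mul_nonneg ht hd0)
      nlinarith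

/-- A geodesic, as a sequence of vertices. -/
theorem exists_geod {V : Type} (G : SimpleGraph V) (hG : G.Connected) (s t : V) :
    ∃ f : ℕ → V, f 0 = s ∧ f (G.dist s t) = t ∧ (∀ k < G.dist s t, G.Adj (f k) (f (k + 1))) ∧
      (∀ k ≤ G.dist s t, G.dist s (f k) ≤ k ∧ G.dist (f k) t ≤ G.dist s t - k) := by
  obtain ⟨p, hp⟩ := hG.exists_walk_length_eq_dist s t
  refine ⟨p.getVert, by simp, by rw [← hp]; simp, fun k hk => p.adj_getVert_succ (hp ▸ hk), ?_⟩
  intro k hk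
  constructor
  · refine (SimpleGraph.dist_le (p.take k)).trans ?_
    simp
  · refine (SimpleGraph.dist_le (p.drop k)).trans ?_
    simp [hp]

/-- A vertex is adjacent to at most three vertices of a geodesic. -/
theorem geod_nbhd {V : Type} [Fintype V] (G : SimpleGraph V) (hG : G.Connected) (s t : V)
    (f : ℕ → V)
    (hf : ∀ k ≤ G.dist s t, G.dist s (f k) ≤ k ∧ G.dist (f k) t ≤ G.dist s t - k)
    (J : Finset ℕ) (hJ : ∀ k ∈ J, k ≤ G.dist s t) (d : ℕ) (hd : ∀ k ∈ J, d ≤ G.degree (f k)) :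
    d * J.card ≤ 3 * (Finset.univ.filter (fun v => ∃ k ∈ J, G.Adj (f k) v)).card := by
  set N := Finset.univ.filter (fun v => ∃ k ∈ J, G.Adj (f k) v) with hN
  have h1 : d * J.card ≤ ∑ k ∈ J, G.degree (f k) := by
    rw [mul_comm, ← smul_eq_mul]
    exact Finset.card_nsmul_le_sum _ _ _ hd
  have h2 : ∑ k ∈ J, G.degree (f k) = ∑ v ∈ N, (J.filter (fun k => G.Adj (f k) v)).card := by
    have h := Finset.sum_card_bipartiteAbove_eq_sum_card_bipartiteBelow
      (s := J) (t := N) (fun k v => G.Adj (f k) v)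
    simp only [Finset.bipartiteAbove, Finset.bipartiteBelow] at h
    rw [← h]
    refine Finset.sum_congr rfl fun k hk => ?_
    rw [← SimpleGraph.card_neighborFinset_eq_degree]
    congr 1
    ext v
    simp only [SimpleGraph.mem_neighborFinset, hN, Finset.mem_filter, Finset.mem_univ, true_and]
    exact ⟨fun h => ⟨⟨k, hk, h⟩, h⟩, fun h => h.2⟩
  have h3 : ∀ v ∈ N, (J.filter (fun k => G.Adj (f k) v)).card ≤ 3 := by
    intro v _
    set K := J.filter (fun k => G.Adj (f k) v) with hK
    rcases K.eq_empty_or_nonempty with h | h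
    · simp [h]
    · have hm := K.min'_mem h
      set m := K.min' h
      have hsub : K ⊆ Finset.Icc m (m + 2) := by
        intro k hk
        have hmk : m ≤ k := K.min'_le k hk
        rw [Finset.mem_Icc]
        refine ⟨hmk, ?_⟩
        rw [hK, Finset.mem_filter] at hk hm
        have e1 := (hf m (hJ m hm.1)).1
        have e2 := (hf k (hJ k hk.1)).2
        have e3 := hJ k hk.1
        have e4 : G.dist s t ≤ G.dist s (f m) + G.dist (f m) t := hG.dist_triangle
        have e5 : G.dist (f m) t ≤ G.dist (f m) v + G.dist v t := hG.dist_triangle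
        have e6 : G.dist v t ≤ G.dist v (f k) + G.dist (f k) t := hG.dist_triangle
        have e7 : G.dist (f m) v = 1 := SimpleGraph.dist_eq_one_iff_adj.2 hm.2
        have e8 : G.dist v (f k) = 1 := SimpleGraph.dist_eq_one_iff_adj.2 hk.2.symm
        omega
      have := Finset.card_le_card hsub
      simp at this
      omega
  calc d * J.card ≤ _ := h1
    _ = _ := h2
    _ ≤ N.card • 3 := Finset.sum_le_card_nsmul _ _ _ h3
    _ = 3 * N.card := by rw [smul_eq_mul, mul_comm]

/-- Breadth-first-search parent. -/
theorem exists_parent {V : Type} (G : SimpleGraph V) (hG : G.Connected) (v : V) :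
    ∃ par : V → V, ∀ u, u ≠ v → G.Adj u (par u) ∧ G.dist (par u) v + 1 = G.dist u v := by
  have : ∀ u, ∃ x, u ≠ v → G.Adj u x ∧ G.dist x v + 1 = G.dist u v := by
    intro u
    by_cases huv : u = v
    · exact ⟨u, fun h => absurd huv h⟩
    · obtain ⟨f, h0, -, hadj, hd⟩ := exists_geod G hG u v
      have hpos : 0 < G.dist u v := hG.pos_dist_of_ne huv
      refine ⟨f 1, fun _ => ?_⟩
      have ha := hadj 0 hpos
      rw [h0] at ha
      refine ⟨ha, ?_⟩
      have h1 := (hd 1 hpos).2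
      have h2 : G.dist u v ≤ G.dist u (f 1) + G.dist (f 1) v := hG.dist_triangle
      have h3 : G.dist u (f 1) = 1 := SimpleGraph.dist_eq_one_iff_adj.2 ha
      omega
  choose par hpar using this
  exact ⟨par, hpar⟩

theorem bfs_edist {V : Type} (G H : SimpleGraph V) (v : V) (par : V → V)
    (hpar : ∀ u, u ≠ v → G.Adj u (par u) ∧ G.dist (par u) v + 1 = G.dist u v)
    (hH : ∀ u, u ≠ v → H.Adj u (par u)) (k : ℕ) :
    ∀ u, G.dist u v = k → H.edist u v ≤ k := by
  induction k with
  | zero =>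
    intro u hu
    by_cases h : u = v
    · simp [h]
    · have := (hpar u h).2
      omega
  | succ k ih =>
    intro u hu
    by_cases h : u = v
    · simp [h]
    · have h1 := ih (par u) (by have := (hpar u h).2; omega)
      have h2 : H.edist u v ≤ H.edist u (par u) + H.edist (par u) v := SimpleGraph.edist_triangle
      have h3 : H.edist u (par u) = 1 := SimpleGraph.edist_eq_one_iff_adj.2 (hH u h)
      rw [h3] at h2
      refine h2.trans ?_
      push_cast
      rw [add_comm]
      gcongr

theorem chain_edist {V : Type} (H : SimpleGraph V) (f : ℕ → V) (L : ℕ)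
    (h : ∀ k < L, H.Adj (f k) (f (k + 1))) : H.edist (f 0) (f L) ≤ L := by
  induction L with
  | zero => simp
  | succ L ih =>
    have h1 := ih (fun k hk => h k (by omega))
    have h2 : H.edist (f 0) (f (L + 1)) ≤ H.edist (f 0) (f L) + H.edist (f L) (f (L + 1)) :=
      SimpleGraph.edist_triangle
    rw [SimpleGraph.edist_eq_one_iff_adj.2 (h L (by omega))] at h2
    refine h2.trans ?_
    push_cast
    gcongr

theorem spanner_core {V : Type} [Fintype V] (G : SimpleGraph V) (hG : G.Connected)
    (P : Finset (V × V)) (hP : P.Nonempty) (d : ℕ) (hd : 0 < d) (hPd : P.card ≤ d ^ 3) :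
    ∃ H : SimpleGraph V, H ≤ G ∧ H.edgeSet.ncard ≤ 5 * Fintype.card V * d ∧
      ∀ s t : V, (s, t) ∈ P → H.edist s t ≤ G.edist s t + 2 := by
  haveI : Nonempty V := hG.nonempty
  have hge := fun q : V × V => exists_geod G hG q.1 q.2
  choose f hf0 hfL hfadj hfd using hge
  choose par hpar using exists_parent G hG
  let J : V × V → Finset ℕ := fun q => (Finset.range (G.dist q.1 q.2)).filter
    (fun k => d ≤ G.degree (f q k) ∧ d ≤ G.degree (f q (k + 1)))
  let N : V × V → Finset V := fun q => Finset.univ.filter (fun v => ∃ k ∈ J q, G.Adj (f q k) v)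
  have hN : ∀ q ∈ P, d * (J q).card ≤ 3 * (N q).card := by
    intro q _
    refine geod_nbhd G hG q.1 q.2 (f q) (hfd q) (J q) ?_ d ?_
    · intro k hk
      simp only [J, Finset.mem_filter, Finset.mem_range] at hk
      omega
    · intro k hk
      simp only [J, Finset.mem_filter] at hk
      exact hk.2.1
  obtain ⟨S, hS, hW⟩ := greedy_hit P hP (fun q => (J q).card) N d hN d
  let U := P.filter (fun q => Disjoint (N q) S)
  have hWn : ∑ q ∈ U, (J q).card ≤ 3 * Fintype.card V * d := by
    have h1 : (∑ q ∈ U, (J q).card) * d * d ≤ 3 * Fintype.card V * P.card := by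
      exact_mod_cast hW
    have h2 : (∑ q ∈ U, (J q).card) * (d * d) ≤ (3 * Fintype.card V * d) * (d * d) := by
      calc _ = (∑ q ∈ U, (J q).card) * d * d := by ring
        _ ≤ 3 * Fintype.card V * P.card := h1
        _ ≤ 3 * Fintype.card V * d ^ 3 := by gcongr
        _ = _ := by ring
    exact Nat.le_of_mul_le_mul_right h2 (by positivity)
  let E1 : Finset (Sym2 V) := (Finset.univ.filter (fun v => G.degree v < d)).biUnion
    (fun v => (G.neighborFinset v).image (fun u => s(v, u)))
  let E2 : Finset (Sym2 V) := S.biUnion (fun v => Finset.univ.image (fun u => s(u, par v u)))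
  let E3 : Finset (Sym2 V) := U.biUnion (fun q => (J q).image (fun k => s(f q k, f q (k + 1))))
  have c1 : E1.card ≤ Fintype.card V * d := by
    refine Finset.card_biUnion_le.trans ?_
    refine (Finset.sum_le_card_nsmul _ _ d ?_).trans ?_
    · intro v hv
      refine Finset.card_image_le.trans ?_
      rw [SimpleGraph.card_neighborFinset_eq_degree]
      exact (Finset.mem_filter.1 hv).2.le
    · rw [smul_eq_mul]
      exact Nat.mul_le_mul_right _ (Finset.card_le_univ _)
  have c2 : E2.card ≤ Fintype.card V * d := by
    refine Finset.card_biUnion_le.trans ?_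
    refine (Finset.sum_le_card_nsmul _ _ (Fintype.card V) ?_).trans ?_
    · intro v hv
      exact Finset.card_image_le.trans (by simp)
    · rw [smul_eq_mul, mul_comm]
      exact Nat.mul_le_mul_left _ hS
  have c3 : E3.card ≤ 3 * Fintype.card V * d := by
    refine Finset.card_biUnion_le.trans (le_trans ?_ hWn)
    exact Finset.sum_le_sum fun q _ => Finset.card_image_le
  let E : Finset (Sym2 V) := E1 ∪ E2 ∪ E3
  let H : SimpleGraph V := G ⊓ SimpleGraph.fromEdgeSet (E : Set (Sym2 V))
  have hHadj : ∀ a b, G.Adj a b → s(a, b) ∈ E → H.Adj a b := by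
    intro a b hab hE
    exact ⟨hab, by rw [SimpleGraph.fromEdgeSet_adj]; exact ⟨by exact_mod_cast hE, hab.ne⟩⟩
  refine ⟨H, inf_le_left, ?_, ?_⟩
  · have hsub : H.edgeSet ⊆ (E : Set (Sym2 V)) := by
      intro e he
      induction e with
      | _ a b =>
        have h1 : H.Adj a b := he
        have h2 := h1.2
        rw [SimpleGraph.fromEdgeSet_adj] at h2
        exact h2.1
    have h1 := Set.ncard_le_ncard hsub (Finset.finite_toSet _)
    rw [Set.ncard_coe_finset] at h1
    have h2 : E.card ≤ E1.card + E2.card + E3.card :=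
      (Finset.card_union_le _ _).trans (Nat.add_le_add_right (Finset.card_union_le _ _) _)
    nlinarith
  · intro s t hst
    have hL : G.edist s t = (G.dist s t : ℕ∞) := by
      exact ((hG.preconnected s t).coe_dist_eq_edist).symm
    rw [hL]
    have hJm : ∀ k, k ∈ J (s, t) ↔ k < G.dist s t ∧
        d ≤ G.degree (f (s, t) k) ∧ d ≤ G.degree (f (s, t) (k + 1)) := by
      intro k
      simp [J]
    by_cases hdis : Disjoint (N (s, t)) S
    · have hch := chain_edist H (f (s, t)) (G.dist s t) ?_
      · have e0 : f (s, t) 0 = s := hf0 (s, t)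
        have eL : f (s, t) (G.dist s t) = t := hfL (s, t)
        rw [e0, eL] at hch
        exact hch.trans le_self_add
      · intro k hk
        have hadj : G.Adj (f (s, t) k) (f (s, t) (k + 1)) := hfadj (s, t) k hk
        refine hHadj _ _ hadj ?_
        have low : ∀ a b, G.Adj a b → G.degree a < d → s(a, b) ∈ E := by
          intro a b hab hlt
          refine Finset.mem_union_left _ (Finset.mem_union_left _ ?_)
          refine Finset.mem_biUnion.2 ⟨a, by simpa using hlt, ?_⟩
          exact Finset.mem_image.2 ⟨b, by simpa using hab, rfl⟩
        by_cases h1 : G.degree (f (s, t) k) < d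
        · exact low _ _ hadj h1
        by_cases h2 : G.degree (f (s, t) (k + 1)) < d
        · rw [Sym2.eq_swap]
          exact low _ _ hadj.symm h2
        refine Finset.mem_union_right _ ?_
        refine Finset.mem_biUnion.2 ⟨(s, t), Finset.mem_filter.2 ⟨hst, hdis⟩, ?_⟩
        exact Finset.mem_image.2 ⟨k, (hJm k).2 ⟨hk, by omega, by omega⟩, rfl⟩
    · obtain ⟨v, hvN, hvS⟩ := Finset.not_disjoint_iff.1 hdis
      obtain ⟨k, hk, hkv⟩ := (Finset.mem_filter.1 hvN).2
      have hbfs : ∀ u, H.edist u v ≤ (G.dist u v : ℕ∞) := by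
        intro u
        refine bfs_edist G H v (par v) (hpar v) ?_ _ u rfl
        intro x hx
        refine hHadj _ _ (hpar v x hx).1 ?_
        refine Finset.mem_union_left _ (Finset.mem_union_right _ ?_)
        exact Finset.mem_biUnion.2 ⟨v, hvS, Finset.mem_image.2 ⟨x, Finset.mem_univ _, rfl⟩⟩
      have hkL := ((hJm k).1 hk).1
      have hk1 : G.dist s (f (s, t) k) ≤ k := (hfd (s, t) k hkL.le).1
      have hk2 : G.dist (f (s, t) k) t ≤ G.dist s t - k := (hfd (s, t) k hkL.le).2
      have e1 : G.dist s v ≤ G.dist s (f (s, t) k) + G.dist (f (s, t) k) v := hG.dist_triangle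
      have e2 : G.dist t v ≤ G.dist t (f (s, t) k) + G.dist (f (s, t) k) v := hG.dist_triangle
      have e3 : G.dist (f (s, t) k) v = 1 := SimpleGraph.dist_eq_one_iff_adj.2 hkv
      have e4 : G.dist t (f (s, t) k) = G.dist (f (s, t) k) t := SimpleGraph.dist_comm
      have e5 : G.dist s v + G.dist t v ≤ G.dist s t + 2 := by omega
      calc H.edist s t ≤ H.edist s v + H.edist v t := SimpleGraph.edist_triangle
        _ = H.edist s v + H.edist t v := by rw [SimpleGraph.edist_comm (u := v)]
        _ ≤ (G.dist s v : ℕ∞) + (G.dist t v : ℕ∞) := add_le_add (hbfs s) (hbfs t)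
        _ ≤ (G.dist s t : ℕ∞) + 2 := by exact_mod_cast e5

/-- Every connected unweighted graph `G` on `n` vertices and every set
`𝒫 ⊆ V × V` of vertex pairs admits a subgraph `H` on at most `C·n·|𝒫|^(1/3)` edges (for a
universal constant `C`) such that `d_H(s,t) ≤ d_G(s,t) + 2` for every `(s,t) ∈ 𝒫`
(distances measured as extended naturals, so unreachable pairs have infinite distance). -/
theorem unweighted_pairwise_plus_two_spanner :
    ∃ C : ℝ, 0 < C ∧
      ∀ (V : Type) [Fintype V] (G : SimpleGraph V), G.Connected →
        ∀ P : Set (V × V),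
          ∃ H : SimpleGraph V, H ≤ G ∧
            (H.edgeSet.ncard : ℝ) ≤
              C * (Fintype.card V : ℝ) * (P.ncard : ℝ) ^ ((1 : ℝ) / 3) ∧
            ∀ s t : V, (s, t) ∈ P → H.edist s t ≤ G.edist s t + 2 := by
  refine ⟨10, by norm_num, ?_⟩
  intro V _ G hG P
  by_cases hP : P = ∅
  · refine ⟨⊥, bot_le, ?_, ?_⟩
    · simp [hP]
    · simp [hP]
  have hne : P.toFinset.Nonempty := by
    rw [Set.toFinset_nonempty]
    exact Set.nonempty_iff_ne_empty.2 hP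
  have hcard : P.ncard = P.toFinset.card := Set.ncard_eq_toFinset_card' P
  set p := P.toFinset.card with hp
  have hp1 : (1 : ℝ) ≤ p := by exact_mod_cast hne.card_pos
  set x : ℝ := (p : ℝ) ^ ((1 : ℝ) / 3) with hx
  have hx1 : 1 ≤ x := Real.one_le_rpow hp1 (by norm_num)
  have hx3 : x ^ 3 = p := by
    rw [hx, ← Real.rpow_natCast, ← Real.rpow_mul (by linarith)]
    norm_num
  have hdx : x ≤ (⌈x⌉₊ : ℝ) := Nat.le_ceil x
  have hdx2 : (⌈x⌉₊ : ℝ) < x + 1 := Nat.ceil_lt_add_one (by linarith)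
  obtain ⟨H, hH, hE, hD⟩ := spanner_core G hG P.toFinset hne ⌈x⌉₊
    (Nat.ceil_pos.2 (by linarith)) (by
      have : (p : ℝ) ≤ (⌈x⌉₊ : ℝ) ^ 3 := by
        rw [← hx3]
        gcongr
      exact_mod_cast this)
  refine ⟨H, hH, ?_, fun s t hst => hD s t (Set.mem_toFinset.2 hst)⟩
  rw [hcard]
  have hE' : (H.edgeSet.ncard : ℝ) ≤ 5 * (Fintype.card V : ℝ) * (⌈x⌉₊ : ℝ) := by
    exact_mod_cast hE
  refine hE'.trans ?_
  have hn : (0 : ℝ) ≤ Fintype.card V := by positivity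
  nlinarith
end

section
/- Every connected unweighted graph G on n vertices and every set 𝒫 ⊆ V × V of vertex pairs admits a subgraph H with at most C·n·|𝒫|^{1/4} edges (for a universal constant C) such that d_H(s,t) ≤ d_G(s,t) + 6 for every pair (s,t) ∈ 𝒫. -/
open scoped Classical

theorem rank_lo (M : Finset ℕ) (L : ℕ) (h : L + 1 ≤ M.card) :
    ∃ I X : Finset ℕ, I ⊆ M ∧ X ⊆ M ∧ X.card ≤ L ∧ L + 1 ≤ I.card ∧
      (∀ i ∈ I, ∀ j ∈ M, j < i → j ∈ X) ∧ (∀ i ∈ I, (M.filter (· < i)).card ≤ L) := by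
  refine ⟨M.filter (fun i => (M.filter (· < i)).card ≤ L),
    M.filter (fun i => (M.filter (· < i)).card < L), Finset.filter_subset _ _,
    Finset.filter_subset _ _, ?_, ?_, ?_, ?_⟩
  · set X := M.filter (fun i => (M.filter (· < i)).card < L) with hX
    by_contra hc
    have hne : X.Nonempty := Finset.card_pos.mp (by omega)
    have hm := X.max'_mem hne
    have h1 : X.erase (X.max' hne) ⊆ M.filter (· < X.max' hne) := by
      intro a ha
      have ha' := Finset.mem_erase.mp ha
      refine Finset.mem_filter.mpr ⟨(Finset.mem_filter.mp ha'.2).1, ?_⟩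
      exact lt_of_le_of_ne (X.le_max' a ha'.2) ha'.1
    have h2 := Finset.card_le_card h1
    rw [Finset.card_erase_of_mem hm] at h2
    have h3 := (Finset.mem_filter.mp hm).2
    omega
  · set I := M.filter (fun i => (M.filter (· < i)).card ≤ L) with hI
    by_contra hc
    have hne : (M \ I).Nonempty := by
      rw [Finset.sdiff_nonempty]
      intro hs
      have := Finset.card_le_card hs
      omega
    have hm := (M \ I).min'_mem hne
    have h1 : M.filter (· < (M \ I).min' hne) ⊆ I := by
      intro a ha
      have ha' := Finset.mem_filter.mp ha
      by_contra hn
      have := (M \ I).min'_le a (Finset.mem_sdiff.mpr ⟨ha'.1, hn⟩)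
      omega
    have h2 := Finset.card_le_card h1
    have h3 := Finset.mem_sdiff.mp hm
    exact h3.2 (Finset.mem_filter.mpr ⟨h3.1, by omega⟩)
  · intro i hi j hj hji
    have hi' := Finset.mem_filter.mp hi
    refine Finset.mem_filter.mpr ⟨hj, lt_of_lt_of_le (Finset.card_lt_card ?_) hi'.2⟩
    refine Finset.ssubset_iff_subset_ne.mpr ⟨?_, ?_⟩
    · intro a ha
      have ha' := Finset.mem_filter.mp ha
      exact Finset.mem_filter.mpr ⟨ha'.1, by omega⟩
    · intro he
      have : j ∈ M.filter (· < j) := by rw [he]; exact Finset.mem_filter.mpr ⟨hj, hji⟩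
      exact absurd (Finset.mem_filter.mp this).2 (lt_irrefl _)
  · intro i hi
    exact (Finset.mem_filter.mp hi).2

theorem rank_hi (M : Finset ℕ) (L : ℕ) (h : L + 1 ≤ M.card) :
    ∃ I X : Finset ℕ, I ⊆ M ∧ X ⊆ M ∧ X.card ≤ L ∧ L + 1 ≤ I.card ∧
      (∀ i ∈ I, ∀ j ∈ M, i < j → j ∈ X) ∧ (∀ i ∈ I, (M.filter (i < ·)).card ≤ L) := by
  refine ⟨M.filter (fun i => (M.filter (i < ·)).card ≤ L),
    M.filter (fun i => (M.filter (i < ·)).card < L), Finset.filter_subset _ _,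
    Finset.filter_subset _ _, ?_, ?_, ?_, ?_⟩
  · set X := M.filter (fun i => (M.filter (i < ·)).card < L) with hX
    by_contra hc
    have hne : X.Nonempty := Finset.card_pos.mp (by omega)
    have hm := X.min'_mem hne
    have h1 : X.erase (X.min' hne) ⊆ M.filter (X.min' hne < ·) := by
      intro a ha
      have ha' := Finset.mem_erase.mp ha
      refine Finset.mem_filter.mpr ⟨(Finset.mem_filter.mp ha'.2).1, ?_⟩
      exact lt_of_le_of_ne (X.min'_le a ha'.2) (Ne.symm ha'.1)
    have h2 := Finset.card_le_card h1
    rw [Finset.card_erase_of_mem hm] at h2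
    have h3 := (Finset.mem_filter.mp hm).2
    omega
  · set I := M.filter (fun i => (M.filter (i < ·)).card ≤ L) with hI
    by_contra hc
    have hne : (M \ I).Nonempty := by
      rw [Finset.sdiff_nonempty]
      intro hs
      have := Finset.card_le_card hs
      omega
    have hm := (M \ I).max'_mem hne
    have h1 : M.filter ((M \ I).max' hne < ·) ⊆ I := by
      intro a ha
      have ha' := Finset.mem_filter.mp ha
      by_contra hn
      have := (M \ I).le_max' a (Finset.mem_sdiff.mpr ⟨ha'.1, hn⟩)
      omega
    have h2 := Finset.card_le_card h1
    have h3 := Finset.mem_sdiff.mp hm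
    exact h3.2 (Finset.mem_filter.mpr ⟨h3.1, by omega⟩)
  · intro i hi j hj hji
    have hi' := Finset.mem_filter.mp hi
    refine Finset.mem_filter.mpr ⟨hj, lt_of_lt_of_le (Finset.card_lt_card ?_) hi'.2⟩
    refine Finset.ssubset_iff_subset_ne.mpr ⟨?_, ?_⟩
    · intro a ha
      have ha' := Finset.mem_filter.mp ha
      exact Finset.mem_filter.mpr ⟨ha'.1, by omega⟩
    · intro he
      have : j ∈ M.filter (j < ·) := by rw [he]; exact Finset.mem_filter.mpr ⟨hj, hji⟩
      exact absurd (Finset.mem_filter.mp this).2 (lt_irrefl _)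
  · intro i hi
    exact (Finset.mem_filter.mp hi).2

/-- Greedy hitting set via minimisation of a potential. -/
theorem hitting_s19 {ι V : Type} (I : Finset ι) (F : ι → Finset V) (Z : Finset V) (k N : ℝ)
    (hk : 0 < k) (hN : 0 < N) (hI : (I.card : ℝ) ≤ N)
    (hF : ∀ i ∈ I, F i ⊆ Z) (hne : ∀ i ∈ I, (F i).Nonempty) (hc : ∀ i ∈ I, (Z.card : ℝ) ≤ k * (F i).card) :
    ∃ R : Finset V, R ⊆ Z ∧ (R.card : ℝ) ≤ 4 * k ∧
      ((I.filter (fun i => Disjoint (F i) R)).card : ℝ) ≤ N / 4 := by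
  set U : Finset V → Finset ι := fun R => I.filter (fun i => Disjoint (F i) R) with hU
  obtain ⟨R, hR, hmin⟩ := Finset.exists_min_image Z.powerset
    (fun R => ((U R).card : ℝ) + R.card * (N / (4 * k))) ⟨∅, by simp⟩
  have hRZ := Finset.mem_powerset.mp hR
  refine ⟨R, hRZ, ?_, ?_⟩
  · have h0 := hmin ∅ (by simp)
    have h1 : ((U ∅).card : ℝ) ≤ N := le_trans (by exact_mod_cast Finset.card_filter_le _ _) hI
    simp only [Finset.card_empty, Nat.cast_zero, zero_mul, add_zero] at h0
    have h2 : (R.card : ℝ) * (N / (4 * k)) ≤ N := by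
      have : (0:ℝ) ≤ (U R).card := by positivity
      linarith
    rw [← mul_div_assoc, div_le_iff₀ (by positivity)] at h2
    nlinarith
  · by_contra hlt
    push Not at hlt
    change N / 4 < ((U R).card : ℝ) at hlt
    -- double counting
    have hdc : ∑ v ∈ Z, (((U R).filter (fun i => v ∈ F i)).card : ℝ)
        = ∑ i ∈ U R, ((F i).card : ℝ) := by
      have := Finset.sum_card_bipartiteAbove_eq_sum_card_bipartiteBelow
        (s := Z) (t := U R) (fun v i => v ∈ F i)
      have h2 : ∑ v ∈ Z, ((U R).filter (fun i => v ∈ F i)).card = ∑ i ∈ U R, (F i).card := by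
        refine this.trans (Finset.sum_congr rfl fun i hi => ?_)
        congr 1
        ext v
        simp only [Finset.bipartiteBelow, Finset.mem_filter]
        exact ⟨fun h => h.2, fun h => ⟨hF i (Finset.mem_filter.mp hi).1 h, h⟩⟩
      exact_mod_cast h2
    have hex : ∃ v ∈ Z, N / (4 * k) < (((U R).filter (fun i => v ∈ F i)).card : ℝ) := by
      by_contra hno
      push Not at hno
      have h1 : ∑ v ∈ Z, (((U R).filter (fun i => v ∈ F i)).card : ℝ) ≤ Z.card * (N / (4 * k)) := by
        have := Finset.sum_le_sum hno
        simpa using this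
      have h2 : ((U R).card : ℝ) * (Z.card / k) ≤ ∑ i ∈ U R, ((F i).card : ℝ) := by
        have : ∀ i ∈ U R, (Z.card / k : ℝ) ≤ (F i).card := by
          intro i hi
          rw [div_le_iff₀ hk]
          have := hc i (Finset.mem_filter.mp hi).1
          linarith
        have := Finset.sum_le_sum this
        simpa using this
      have hZ : 0 < (Z.card : ℝ) := by
        have hp : (0:ℝ) < (U R).card := by linarith [div_pos hN (by norm_num : (0:ℝ) < 4)]
        obtain ⟨i, hi⟩ := Finset.card_pos.mp (by exact_mod_cast hp : 0 < (U R).card)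
        have hiI := (Finset.mem_filter.mp hi).1
        exact_mod_cast Finset.card_pos.mpr ((hne i hiI).mono (hF i hiI))
      rw [← hdc] at h2
      have h3 := h2.trans h1
      have h4 : N / 4 * (Z.card / k) < (U R).card * (Z.card / k) :=
        mul_lt_mul_of_pos_right hlt (by positivity)
      have h5 : N / 4 * (Z.card / k) = Z.card * (N / (4 * k)) := by field_simp
      linarith
    obtain ⟨v, hv, hbig⟩ := hex
    have hm := hmin (insert v R) (Finset.mem_powerset.mpr (Finset.insert_subset hv hRZ))
    have hcard : ((insert v R).card : ℝ) ≤ R.card + 1 := by exact_mod_cast Finset.card_insert_le _ _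
    have hsplit : ((U (insert v R)).card : ℝ) + ((U R).filter (fun i => v ∈ F i)).card
        ≤ (U R).card := by
      have hd : Disjoint (U (insert v R)) ((U R).filter (fun i => v ∈ F i)) := by
        rw [Finset.disjoint_left]
        intro i hi hi2
        have h1 := (Finset.mem_filter.mp hi).2
        have h2 := (Finset.mem_filter.mp hi2).2
        exact Finset.disjoint_left.mp h1 h2 (Finset.mem_insert_self _ _)
      have hs : U (insert v R) ∪ ((U R).filter (fun i => v ∈ F i)) ⊆ U R := by
        refine Finset.union_subset ?_ (Finset.filter_subset _ _)
        intro i hi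
        have h1 := Finset.mem_filter.mp hi
        exact Finset.mem_filter.mpr ⟨h1.1, h1.2.mono_right (Finset.subset_insert _ _)⟩
      have := Finset.card_le_card hs
      rw [Finset.card_union_of_disjoint hd] at this
      exact_mod_cast this
    have hpos : 0 < N / (4 * k) := by positivity
    have := mul_le_mul_of_nonneg_right hcard hpos.le
    linarith

/-- A clustering of `G`: partial assignment of vertices to adjacent centers, with a subgraph `H0`
containing star edges and all edges with an unclustered endpoint. -/
structure Clu {V : Type} (G H0 : SimpleGraph V) (f : V → Option V) (Z : Finset V) : Prop where
  le : H0 ≤ G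
  adj : ∀ u c, f u = some c → H0.Adj u c
  memZ : ∀ u c, f u = some c → c ∈ Z
  miss : ∀ u v, G.Adj u v → ¬ H0.Adj u v → ∃ c, f u = some c

theorem exists_clu {V : Type} [Fintype V] (G : SimpleGraph V) (d : ℕ) (hd : 1 ≤ d) :
    ∃ (H0 : SimpleGraph V) (f : V → Option V) (Z : Finset V), Clu G H0 f Z ∧
      Z.card * d ≤ Fintype.card V ∧
      H0.edgeSet.ncard ≤ Fintype.card V * d + Fintype.card V := by
  let good : (V → Option V) → Prop := fun f =>
    (∀ u c, f u = some c → G.Adj u c) ∧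
    (∀ u c, f u = some c → d ≤ (Finset.univ.filter (fun x => f x = some c)).card)
  obtain ⟨f, hf, hmax⟩ := Finset.exists_max_image
    ((Finset.univ : Finset (V → Option V)).filter good)
    (fun f => (Finset.univ.filter (fun x => f x ≠ none)).card)
    ⟨fun _ => none, by simp [good]⟩
  have hg : good f := (Finset.mem_filter.mp hf).2
  have hlow : ∀ v, (Finset.univ.filter (fun u => G.Adj v u ∧ f u = none)).card ≤ d := by
    intro v
    by_contra hc
    push Not at hc
    let f' : V → Option V := fun u => if G.Adj v u ∧ f u = none then some v else f u
    have hf' : good f' := by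
      constructor
      · intro u c huc
        by_cases h : G.Adj v u ∧ f u = none
        · simp only [f', if_pos h, Option.some.injEq] at huc
          subst huc; exact h.1.symm
        · simp only [f', if_neg h] at huc
          exact hg.1 u c huc
      · intro u c huc
        by_cases h : G.Adj v u ∧ f u = none
        · simp only [f', if_pos h, Option.some.injEq] at huc
          subst huc
          refine hc.le.trans (Finset.card_le_card ?_)
          intro x hx
          have hx' := (Finset.mem_filter.mp hx).2
          simp [f', hx']
        · simp only [f', if_neg h] at huc
          refine (hg.2 u c huc).trans (Finset.card_le_card ?_)
          intro x hx
          have hx' := (Finset.mem_filter.mp hx).2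
          simp [f', hx']
    have h1 := hmax f' (by simp [hf'])
    have h2 : (Finset.univ.filter (fun x => f x ≠ none)) ⊂
        (Finset.univ.filter (fun x => f' x ≠ none)) := by
      rw [Finset.ssubset_iff_subset_ne]
      obtain ⟨u, hu⟩ := Finset.card_pos.mp (by omega : 0 <
        (Finset.univ.filter (fun u => G.Adj v u ∧ f u = none)).card)
      have hu' := (Finset.mem_filter.mp hu).2
      constructor
      · intro x hx
        have hx' := (Finset.mem_filter.mp hx).2
        simp [f', hx']
      · intro he
        have : u ∈ (Finset.univ.filter (fun x => f x ≠ none)) := by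
          rw [he]; simp [f', hu']
        exact (Finset.mem_filter.mp this).2 hu'.2
    have := Finset.card_lt_card h2
    omega
  let Z : Finset V := Finset.univ.filter (fun c => ∃ u, f u = some c)
  let H0 : SimpleGraph V :=
    { Adj := fun u v => G.Adj u v ∧ (f u = none ∨ f v = none ∨ f u = some v ∨ f v = some u)
      symm := ⟨fun u v h => ⟨h.1.symm, by tauto⟩⟩
      loopless := ⟨fun u h => G.loopless.irrefl u h.1⟩ }
  refine ⟨H0, f, Z, ⟨fun u v h => h.1, fun u c h => ⟨hg.1 u c h, by tauto⟩,
    fun u c h => by simp only [Z, Finset.mem_filter, Finset.mem_univ, true_and]; exact ⟨u, h⟩, ?_⟩,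
    ?_, ?_⟩
  · intro u v h h0
    by_contra hn
    have : f u = none := by
      cases hfu : f u with
      | none => rfl
      | some c => exact absurd ⟨c, hfu⟩ hn
    exact h0 ⟨h, Or.inl this⟩
  · have h1 : ∑ c ∈ Z, (Finset.univ.filter (fun x => f x = some c)).card ≤ Fintype.card V := by
      rw [← Finset.card_biUnion]
      · exact Finset.card_le_univ _
      · intro a _ b _ hab
        rw [Function.onFun, Finset.disjoint_left]
        intro x hx hx2
        have h1 := (Finset.mem_filter.mp hx).2
        have h2 := (Finset.mem_filter.mp hx2).2
        rw [h1] at h2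
        exact hab (Option.some.inj h2)
    refine le_trans ?_ h1
    rw [← smul_eq_mul]
    refine Finset.card_nsmul_le_sum _ _ _ ?_
    intro c hc
    obtain ⟨u, hu⟩ := (Finset.mem_filter.mp hc).2
    exact hg.2 u c hu
  · let A : Finset (Sym2 V) :=
      (Finset.univ.biUnion (fun v : V => (Finset.univ.filter
        (fun u => G.Adj v u ∧ f u = none)).image (fun u => s(v, u)))) ∪
      Finset.univ.image (fun u : V => s(u, (f u).getD u))
    have hsub : H0.edgeSet ⊆ (A : Set (Sym2 V)) := by
      intro e
      induction e using Sym2.ind with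
      | _ u v =>
        intro he
        obtain ⟨h1, h2⟩ : G.Adj u v ∧ (f u = none ∨ f v = none ∨ f u = some v ∨ f v = some u) := he
        rw [Finset.mem_coe, Finset.mem_union]
        rcases h2 with h2 | h2 | h2 | h2
        · left
          refine Finset.mem_biUnion.mpr ⟨v, Finset.mem_univ _, Finset.mem_image.mpr ⟨u, ?_, Sym2.eq_swap⟩⟩
          simp [h1.symm, h2]
        · left
          refine Finset.mem_biUnion.mpr ⟨u, Finset.mem_univ _, Finset.mem_image.mpr ⟨v, ?_, rfl⟩⟩
          simp [h1, h2]
        · right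
          exact Finset.mem_image.mpr ⟨u, Finset.mem_univ _, by simp [h2]⟩
        · right
          exact Finset.mem_image.mpr ⟨v, Finset.mem_univ _, by simp [h2, Sym2.eq_swap]⟩
    have h1 := Set.ncard_le_ncard hsub (Finset.finite_toSet A)
    rw [Set.ncard_coe_finset] at h1
    refine h1.trans ((Finset.card_union_le _ _).trans (add_le_add ?_ Finset.card_image_le))
    refine Finset.card_biUnion_le_card_mul _ _ _ ?_
    intro v _
    exact Finset.card_image_le.trans (hlow v)

theorem seg {V : Type} {G H : SimpleGraph V} {s t : V} (w : G.Walk s t) (i j : ℕ) (hij : i ≤ j)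
    (h : ∀ k, i ≤ k → k < j → H.Adj (w.getVert k) (w.getVert (k + 1))) :
    H.edist (w.getVert i) (w.getVert j) ≤ ((j - i : ℕ) : ℕ∞) := by
  induction j, hij using Nat.le_induction with
  | base => simp
  | succ j hij ih =>
    have h1 := ih (fun k hk hk' => h k hk (by omega))
    have h2 : H.edist (w.getVert j) (w.getVert (j + 1)) ≤ 1 :=
      (SimpleGraph.edist_eq_one_iff_adj.mpr (h j hij (by omega))).le
    have h3 := (SimpleGraph.edist_triangle (G := H) (u := w.getVert i) (v := w.getVert j)
      (w := w.getVert (j+1))).trans (add_le_add h1 h2)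
    refine h3.trans ?_
    norm_cast
    omega

theorem segG {V : Type} {G : SimpleGraph V} {s t : V} (w : G.Walk s t) (i j : ℕ) (hij : i ≤ j)
    (hj : j ≤ w.length) : G.edist (w.getVert i) (w.getVert j) ≤ ((j - i : ℕ) : ℕ∞) :=
  seg w i j hij (fun k _ hk => w.adj_getVert_succ (by omega))

theorem shortest {V : Type} {G : SimpleGraph V} {s t : V} (w : G.Walk s t)
    (hw : (w.length : ℕ∞) = G.edist s t) (i j m : ℕ) (hij : i ≤ j) (hj : j ≤ w.length)
    (h : G.edist (w.getVert i) (w.getVert j) ≤ m) : j ≤ i + m := by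
  have h1 := segG w 0 i (by omega) (by omega)
  have h2 := segG w j w.length hj le_rfl
  rw [SimpleGraph.Walk.getVert_zero] at h1
  rw [SimpleGraph.Walk.getVert_length] at h2
  have h3 := (SimpleGraph.edist_triangle (G := G) (u := s) (v := w.getVert i) (w := t)).trans
    (add_le_add h1 ((SimpleGraph.edist_triangle (G := G) (u := w.getVert i) (v := w.getVert j)
      (w := t)).trans (add_le_add h h2)))
  rw [← hw] at h3
  norm_cast at h3
  omega

/-- At most three vertices of a shortest path lie in a single cluster. -/
theorem three {V : Type} {G H0 : SimpleGraph V} {f : V → Option V} {Z : Finset V}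
    (hC : Clu G H0 f Z) {s t : V} (w : G.Walk s t)
    (hw : (w.length : ℕ∞) = G.edist s t) (J : Finset ℕ) (hJ : ∀ j ∈ J, j ≤ w.length)
    (hf : ∀ j ∈ J, ∃ c, f (w.getVert j) = some c) :
    ∃ A : Finset V, J.card ≤ 3 * A.card ∧ A ⊆ Z ∧
      ∀ c ∈ A, ∃ j ∈ J, f (w.getVert j) = some c := by
  let g : ℕ → V := fun j => (f (w.getVert j)).getD s
  have hg : ∀ j ∈ J, f (w.getVert j) = some (g j) := by
    intro j hj
    obtain ⟨c, hc⟩ := hf j hj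
    simp [g, hc]
  refine ⟨J.image g, ?_, ?_, ?_⟩
  · refine Finset.card_le_mul_card_image J 3 ?_
    intro c hc
    by_cases hne : (J.filter (fun j => g j = c)).Nonempty
    · have hm := Finset.mem_filter.mp ((J.filter (fun j => g j = c)).min'_mem hne)
      set m := (J.filter (fun j => g j = c)).min' hne with hmdef
      have hsub : J.filter (fun j => g j = c) ⊆ Finset.Icc m (m + 2) := by
        intro j hj
        have hj' := Finset.mem_filter.mp hj
        have hle : m ≤ j := Finset.min'_le _ j hj
        rw [Finset.mem_Icc]
        refine ⟨hle, shortest w hw m j 2 hle (hJ j hj'.1) ?_⟩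
        have a1 := hC.le (hC.adj _ _ (hg m hm.1))
        have a2 := hC.le (hC.adj _ _ (hg j hj'.1))
        rw [hm.2] at a1
        rw [hj'.2] at a2
        have b1 := (SimpleGraph.edist_eq_one_iff_adj.mpr a1).le
        have b2 := (SimpleGraph.edist_eq_one_iff_adj.mpr a2.symm).le
        refine (SimpleGraph.edist_triangle (G := G) (v := c)).trans ((add_le_add b1 b2).trans ?_)
        norm_num
      refine (Finset.card_le_card hsub).trans ?_
      rw [Nat.card_Icc]
      omega
    · rw [Finset.not_nonempty_iff_eq_empty] at hne
      rw [hne]; simp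
  · intro c hc
    obtain ⟨j, hj, rfl⟩ := Finset.mem_image.mp hc
    exact hC.memZ _ _ (hg j hj)
  · intro c hc
    obtain ⟨j, hj, rfl⟩ := Finset.mem_image.mp hc
    exact ⟨j, hj, hg j hj⟩

/-- Subsetwise +2 spanner. -/
theorem subset_spanner {V : Type} [Fintype V] {G H0 : SimpleGraph V} {f : V → Option V}
    {Z : Finset V} (hG : G.Connected) (hC : Clu G H0 f Z) (R : Finset V) :
    ∃ H : SimpleGraph V, H0 ≤ H ∧ H ≤ G ∧
      H.edgeSet.ncard ≤ H0.edgeSet.ncard + 12 * (R.card * Z.card) ∧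
      ∀ s ∈ R, ∀ t ∈ R, H.edist s t ≤ G.edist s t + 2 := by
  let T : SimpleGraph V → Finset (V × V × ℕ) := fun H =>
    (R ×ˢ Z ×ˢ Finset.range 3).filter
      (fun x => H.edist x.1 x.2.1 ≤ G.edist x.1 x.2.1 + (x.2.2 : ℕ∞))
  obtain ⟨H, hH, hmax⟩ := Finset.exists_max_image
    ((Finset.univ : Finset (SimpleGraph V)).filter (fun H => H0 ≤ H ∧ H ≤ G))
    (fun H => 4 * ((T H).card : ℤ) - (H.edgeSet.ncard : ℤ)) ⟨H0, by simp [hC.le]⟩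
  obtain ⟨hH0, hHG⟩ := (Finset.mem_filter.mp hH).2
  refine ⟨H, hH0, hHG, ?_, ?_⟩
  · have h1 := hmax H0 (by simp [hC.le])
    have h2 : (T H).card ≤ R.card * (Z.card * 3) := by
      refine (Finset.card_filter_le _ _).trans ?_
      simp [Finset.card_product]
    have h3 : R.card * (Z.card * 3) = 3 * (R.card * Z.card) := by ring
    omega
  · intro s hs t ht
    by_contra hcon
    obtain ⟨w, hw⟩ := hG.exists_walk_length_eq_edist s t
    rw [← hw] at hcon
    let M : Finset ℕ := (Finset.range w.length).filter
      (fun i => ¬ H.Adj (w.getVert i) (w.getVert (i + 1)))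
    have hMl : ∀ i ∈ M, i < w.length := fun i hi =>
      Finset.mem_range.mp (Finset.mem_filter.mp hi).1
    have hMn : ∀ i, i < w.length → i ∉ M → H.Adj (w.getVert i) (w.getVert (i + 1)) := by
      intro i hi hn
      by_contra hna
      exact hn (Finset.mem_filter.mpr ⟨Finset.mem_range.mpr hi, hna⟩)
    have hfM : ∀ j ∈ M, ∃ c, f (w.getVert j) = some c := by
      intro j hj
      refine hC.miss _ _ (w.adj_getVert_succ (hMl j hj)) ?_
      intro ha
      exact (Finset.mem_filter.mp hj).2 (hH0 ha)
    obtain ⟨A, hA3, hAZ, hA⟩ := three hC w hw M (fun i hi => (hMl i hi).le) hfM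
    let E : Finset (Sym2 V) := M.image (fun i => s(w.getVert i, w.getVert (i + 1)))
    let H' : SimpleGraph V := H ⊔ SimpleGraph.fromEdgeSet (E : Set (Sym2 V))
    have hEG : SimpleGraph.fromEdgeSet (E : Set (Sym2 V)) ≤ G := by
      rw [← SimpleGraph.edgeSet_subset_edgeSet, SimpleGraph.edgeSet_fromEdgeSet]
      intro e he
      obtain ⟨i, hi, rfl⟩ := Finset.mem_image.mp (Finset.mem_coe.mp he.1)
      exact w.adj_getVert_succ (hMl i hi)
    have hH'G : H' ≤ G := sup_le hHG hEG
    have hHH' : H ≤ H' := le_sup_left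
    have hpath : ∀ i, i < w.length → H'.Adj (w.getVert i) (w.getVert (i + 1)) := by
      intro i hi
      by_cases him : i ∈ M
      · right
        rw [SimpleGraph.fromEdgeSet_adj]
        exact ⟨Finset.mem_coe.mpr (Finset.mem_image.mpr ⟨i, him, rfl⟩),
          (w.adj_getVert_succ hi).ne⟩
      · exact hHH' (hMn i hi him)
    have hE : H'.edgeSet.ncard ≤ H.edgeSet.ncard + M.card := by
      have : H'.edgeSet ⊆ H.edgeSet ∪ (E : Set (Sym2 V)) := by
        rw [SimpleGraph.edgeSet_sup, SimpleGraph.edgeSet_fromEdgeSet]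
        exact Set.union_subset_union_right _ Set.sdiff_subset
      refine (Set.ncard_le_ncard this (Set.toFinite _)).trans ((Set.ncard_union_le _ _).trans ?_)
      rw [Set.ncard_coe_finset]
      exact Nat.add_le_add_left Finset.card_image_le _
    -- new triples
    have hnew : ∀ c ∈ A, ∃ x, x ∈ T H' \ T H ∧ x.2.1 = c := by
      intro c hc
      obtain ⟨i, hi, hic⟩ := hA c hc
      have hcZ := hAZ hc
      have hil := hMl i hi
      have key : ∀ v ∈ R, ∀ m : ℕ, H'.edist v (w.getVert i) ≤ m → (m : ℕ∞) ≤ G.edist v (w.getVert i) →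
          ¬ H.edist v c ≤ (m + 1 : ℕ) → ∃ x, x ∈ T H' \ T H ∧ x.2.1 = c := by
        intro v hv m hm1 hm2 hm3
        have hD : ((G.dist v c : ℕ) : ℕ∞) = G.edist v c := (hG v c).coe_dist_eq_edist
        have e1 : H'.edist (w.getVert i) c ≤ 1 :=
          (SimpleGraph.edist_eq_one_iff_adj.mpr (hHH' (hH0 (hC.adj _ _ hic)))).le
        have e2 : H'.edist v c ≤ (m + 1 : ℕ) := by
          refine (SimpleGraph.edist_triangle (G := H') (v := w.getVert i)).trans ?_
          push_cast
          exact add_le_add hm1 e1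
        have e3 : G.edist c (w.getVert i) ≤ 1 :=
          (SimpleGraph.edist_eq_one_iff_adj.mpr (hC.le (hC.adj _ _ hic)).symm).le
        have e4 : m ≤ G.dist v c + 1 := by
          have := hm2.trans ((SimpleGraph.edist_triangle (G := G) (v := c)).trans
            (add_le_add hD.ge e3))
          exact_mod_cast this
        have e5 : G.dist v c ≤ m + 1 := by
          have := (SimpleGraph.edist_anti hH'G).trans e2
          rw [← hD] at this
          exact_mod_cast this
        have e6 : G.edist v c + ((m + 1 - G.dist v c : ℕ) : ℕ∞) = (m + 1 : ℕ) := by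
          rw [← hD]
          norm_cast
          omega
        refine ⟨(v, c, m + 1 - G.dist v c), ?_, rfl⟩
        rw [Finset.mem_sdiff]
        constructor
        · refine Finset.mem_filter.mpr ⟨?_, ?_⟩
          · simp only [Finset.mem_product, Finset.mem_range]
            exact ⟨hv, hcZ, by omega⟩
          · simp only
            rw [e6]; exact e2
        · intro hx
          have := (Finset.mem_filter.mp hx).2
          simp only at this
          rw [e6] at this
          exact hm3 this
      have g1 := seg (H := H') w 0 i (by omega) (fun k _ hk => hpath k (by omega))
      have g2 := seg (H := H') w i w.length (by omega) (fun k _ hk => hpath k (by omega))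
      rw [SimpleGraph.Walk.getVert_zero] at g1
      rw [SimpleGraph.Walk.getVert_length] at g2
      have k1 := segG w 0 i (by omega) (by omega)
      have k2 := segG w i w.length (by omega) (by omega)
      rw [SimpleGraph.Walk.getVert_zero] at k1
      rw [SimpleGraph.Walk.getVert_length] at k2
      have hD1 : ((G.dist s (w.getVert i) : ℕ) : ℕ∞) = G.edist s (w.getVert i) :=
        (hG _ _).coe_dist_eq_edist
      have hD2 : ((G.dist (w.getVert i) t : ℕ) : ℕ∞) = G.edist (w.getVert i) t :=
        (hG _ _).coe_dist_eq_edist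
      have htri := SimpleGraph.edist_triangle (G := G) (u := s) (v := w.getVert i) (w := t)
      rw [← hw, ← hD1, ← hD2] at htri
      rw [← hD1] at k1
      rw [← hD2] at k2
      norm_cast at htri k1 k2
      by_cases hs1 : H.edist s c ≤ (i + 1 : ℕ)
      · by_cases ht1 : H.edist t c ≤ (w.length - i + 1 : ℕ)
        · exfalso
          apply hcon
          have hst := SimpleGraph.edist_triangle (G := H) (u := s) (v := c) (w := t)
          rw [SimpleGraph.edist_comm (u := c)] at hst
          refine hst.trans ((add_le_add hs1 ht1).trans ?_)
          norm_cast
          omega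
        · refine key t ht (w.length - i) ?_ ?_ ht1
          · rw [SimpleGraph.edist_comm]; exact g2
          · rw [SimpleGraph.edist_comm, ← hD2]
            norm_cast
            omega
      · refine key s hs i ?_ ?_ hs1
        · simpa using g1
        · rw [← hD1]
          norm_cast
          omega
    have hTT : T H ⊆ T H' := by
      intro x hx
      have hx' := Finset.mem_filter.mp hx
      exact Finset.mem_filter.mpr ⟨hx'.1, (SimpleGraph.edist_anti hHH').trans hx'.2⟩
    have hcardT : (T H).card + A.card ≤ (T H').card := by
      choose! g hg1 hg2 using hnew
      have h1 : A.card ≤ (T H' \ T H).card := by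
        refine Finset.card_le_card_of_injOn g hg1 ?_
        intro a ha b hb hab
        rw [← hg2 a ha, ← hg2 b hb, hab]
      rw [Finset.card_sdiff_of_subset hTT] at h1
      have := Finset.card_le_card hTT
      omega
    have hm := hmax H' (by simp [hH'G, hH0.trans hHH'])
    have hA0 : M.card = 0 := by omega
    have hMe : M = ∅ := Finset.card_eq_zero.mp hA0
    apply hcon
    have g := seg (H := H) w 0 w.length (by omega)
      (fun k _ hk => hMn k hk (by rw [hMe]; simp))
    rw [SimpleGraph.Walk.getVert_zero, SimpleGraph.Walk.getVert_length] at g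
    refine g.trans ?_
    norm_cast
    omega

/-- Per-pair lemma. -/
theorem per_pair {V : Type} [Fintype V] {G H0 : SimpleGraph V} {f : V → Option V}
    {Z : Finset V} (hG : G.Connected) (hC : Clu G H0 f Z) (L : ℕ) (s t : V) :
    ∃ (E : Finset (Sym2 V)) (A B : Finset V), (E : Set (Sym2 V)) ⊆ G.edgeSet ∧ E.card ≤ 2 * L ∧
      ((∀ H : SimpleGraph V, H0 ≤ H → (E : Set (Sym2 V)) ⊆ H.edgeSet →
          H.edist s t ≤ G.edist s t + 6) ∨
       (A ⊆ Z ∧ B ⊆ Z ∧ L + 1 ≤ 3 * A.card ∧ L + 1 ≤ 3 * B.card ∧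
        ∀ H : SimpleGraph V, H0 ≤ H → (E : Set (Sym2 V)) ⊆ H.edgeSet →
          (∃ a ∈ A, ∃ b ∈ B, H.edist a b ≤ G.edist a b + 2) →
          H.edist s t ≤ G.edist s t + 6)) := by
  obtain ⟨w, hw⟩ := hG.exists_walk_length_eq_edist s t
  rw [← hw]
  let M : Finset ℕ := (Finset.range w.length).filter
    (fun i => ¬ H0.Adj (w.getVert i) (w.getVert (i + 1)))
  have hMl : ∀ i ∈ M, i < w.length := fun i hi =>
    Finset.mem_range.mp (Finset.mem_filter.mp hi).1
  have hMn : ∀ i, i < w.length → i ∉ M → H0.Adj (w.getVert i) (w.getVert (i + 1)) := by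
    intro i hi hn
    by_contra hna
    exact hn (Finset.mem_filter.mpr ⟨Finset.mem_range.mpr hi, hna⟩)
  have hfM : ∀ j ∈ M, ∃ c, f (w.getVert j) = some c := by
    intro j hj
    exact hC.miss _ _ (w.adj_getVert_succ (hMl j hj)) (Finset.mem_filter.mp hj).2
  have hfM' : ∀ j ∈ M, ∃ c, f (w.getVert (j + 1)) = some c := by
    intro j hj
    exact hC.miss _ _ (w.adj_getVert_succ (hMl j hj)).symm
      (fun h => (Finset.mem_filter.mp hj).2 h.symm)
  let edg : ℕ → Sym2 V := fun i => s(w.getVert i, w.getVert (i + 1))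
  have hEG : ∀ X : Finset ℕ, X ⊆ M → ((X.image edg : Finset (Sym2 V)) : Set (Sym2 V)) ⊆ G.edgeSet := by
    intro X hX e he
    obtain ⟨i, hi, rfl⟩ := Finset.mem_image.mp (Finset.mem_coe.mp he)
    exact w.adj_getVert_succ (hMl i (hX hi))
  have hadj : ∀ (X : Finset ℕ) (H : SimpleGraph V), H0 ≤ H →
      ((X.image edg : Finset (Sym2 V)) : Set (Sym2 V)) ⊆ H.edgeSet →
      ∀ i, i < w.length → (i ∈ M → i ∈ X) → H.Adj (w.getVert i) (w.getVert (i + 1)) := by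
    intro X H hH hX i hi himp
    by_cases him : i ∈ M
    · exact hX (Finset.mem_coe.mpr (Finset.mem_image.mpr ⟨i, himp him, rfl⟩))
    · exact hH (hMn i hi him)
  by_cases hbig : M.card ≤ 2 * L
  · refine ⟨M.image edg, ∅, ∅, hEG M subset_rfl, Finset.card_image_le.trans hbig, Or.inl ?_⟩
    intro H hH hE
    have g := seg (H := H) w 0 w.length (by omega)
      (fun k _ hk => hadj M H hH hE k hk id)
    rw [SimpleGraph.Walk.getVert_zero, SimpleGraph.Walk.getVert_length] at g
    refine g.trans ?_
    norm_cast
    omega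
  · obtain ⟨I1, X1, hI1, hX1, hX1c, hI1c, hr1, hc1⟩ := rank_lo M L (by omega)
    obtain ⟨I2, X2, hI2, hX2, hX2c, hI2c, hr2, hc2⟩ := rank_hi M L (by omega)
    obtain ⟨A, hA3, hAZ, hA⟩ := three hC w hw I1 (fun i hi => (hMl i (hI1 hi)).le)
      (fun j hj => hfM j (hI1 hj))
    obtain ⟨B, hB3, hBZ, hB⟩ := three hC w hw (I2.image (· + 1))
      (by
        intro i hi
        obtain ⟨j, hj, rfl⟩ := Finset.mem_image.mp hi
        have := hMl j (hI2 hj)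
        omega)
      (by
        intro i hi
        obtain ⟨j, hj, rfl⟩ := Finset.mem_image.mp hi
        exact hfM' j (hI2 hj))
    rw [Finset.card_image_of_injective _ (add_left_injective 1)] at hB3
    refine ⟨(X1 ∪ X2).image edg, A, B, hEG _ (Finset.union_subset hX1 hX2), ?_,
      Or.inr ⟨hAZ, hBZ, by omega, by omega, ?_⟩⟩
    · have := Finset.card_union_le X1 X2
      exact Finset.card_image_le.trans (by omega)
    intro H hH hE ⟨a, ha, b, hb, hab⟩
    obtain ⟨i, hi, hia⟩ := hA a ha
    obtain ⟨j', hj', hjb⟩ := hB b hb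
    obtain ⟨j, hj, rfl⟩ := Finset.mem_image.mp hj'
    have hil := hMl i (hI1 hi)
    have hjl := hMl j (hI2 hj)
    have hij : i ≤ j := by
      by_contra hlt
      push Not at hlt
      have hsub : M ⊆ M.filter (· < i) ∪ M.filter (j < ·) := by
        intro x hx
        rw [Finset.mem_union]
        by_cases h : x < i
        · exact Or.inl (Finset.mem_filter.mpr ⟨hx, h⟩)
        · exact Or.inr (Finset.mem_filter.mpr ⟨hx, by omega⟩)
      have h1 := (Finset.card_le_card hsub).trans (Finset.card_union_le _ _)
      have h2 := hc1 i hi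
      have h3 := hc2 j hj
      omega
    have g1 := seg (H := H) w 0 i (by omega) (fun k _ hk => hadj _ H hH hE k (by omega)
      (fun hkM => Finset.mem_union_left _ (hr1 i hi k hkM hk)))
    have g2 := seg (H := H) w (j + 1) w.length (by omega) (fun k hk hk' => hadj _ H hH hE k (by omega)
      (fun hkM => Finset.mem_union_right _ (hr2 j hj k hkM (by omega))))
    rw [SimpleGraph.Walk.getVert_zero] at g1
    rw [SimpleGraph.Walk.getVert_length] at g2
    have a1 : H.edist (w.getVert i) a ≤ 1 :=
      (SimpleGraph.edist_eq_one_iff_adj.mpr (hH (hC.adj _ _ hia))).le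
    have b1 : H.edist b (w.getVert (j + 1)) ≤ 1 :=
      (SimpleGraph.edist_eq_one_iff_adj.mpr (hH (hC.adj _ _ hjb)).symm).le
    have a2 : G.edist a (w.getVert i) ≤ 1 :=
      (SimpleGraph.edist_eq_one_iff_adj.mpr (hC.le (hC.adj _ _ hia)).symm).le
    have b2 : G.edist (w.getVert (j + 1)) b ≤ 1 :=
      (SimpleGraph.edist_eq_one_iff_adj.mpr (hC.le (hC.adj _ _ hjb))).le
    have m1 := segG w i (j + 1) (by omega) (by omega)
    have m2 : G.edist a b ≤ 1 + (((j + 1 - i : ℕ) : ℕ∞) + 1) :=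
      (SimpleGraph.edist_triangle (G := G) (v := w.getVert i)).trans (add_le_add a2
        ((SimpleGraph.edist_triangle (G := G) (v := w.getVert (j + 1))).trans (add_le_add m1 b2)))
    have m3 := hab.trans (add_le_add_left m2 2)
    have fin : H.edist s t ≤ ((i - 0 : ℕ) : ℕ∞) + (1 + ((1 + (((j + 1 - i : ℕ) : ℕ∞) + 1) + 2)
        + (1 + ((w.length - (j + 1) : ℕ) : ℕ∞)))) :=
      (SimpleGraph.edist_triangle (G := H) (v := w.getVert i)).trans (add_le_add g1
        ((SimpleGraph.edist_triangle (G := H) (v := a)).trans (add_le_add a1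
          ((SimpleGraph.edist_triangle (G := H) (v := b)).trans (add_le_add m3
            ((SimpleGraph.edist_triangle (G := H) (v := w.getVert (j + 1))).trans
              (add_le_add b1 g2)))))))
    refine fin.trans ?_
    norm_cast
    omega

theorem quarter (x : ℕ) : ((x : ℝ) ^ ((1 : ℝ) / 4)) ^ 4 = x := by
  rw [← Real.rpow_natCast, ← Real.rpow_mul (by positivity)]
  norm_num

set_option maxHeartbeats 2000000 in
/-- One round: at least half of the pairs are satisfied. -/
theorem one_round {V : Type} [Fintype V] {G : SimpleGraph V} (hG : G.Connected)
    (P : Finset (V × V)) (hP : P.Nonempty) :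
    ∃ (H : SimpleGraph V) (P' : Finset (V × V)), H ≤ G ∧ P' ⊆ P ∧ 2 * P'.card ≤ P.card ∧
      (H.edgeSet.ncard : ℝ) ≤ 293 * (Fintype.card V : ℝ) * (P.card : ℝ) ^ ((1 : ℝ) / 4) ∧
      ∀ x ∈ P, x ∉ P' → H.edist x.1 x.2 ≤ G.edist x.1 x.2 + 6 := by
  set n : ℝ := (Fintype.card V : ℝ) with hn
  set q : ℝ := (P.card : ℝ) ^ ((1 : ℝ) / 4) with hq
  have hq4 : q ^ 4 = P.card := quarter _
  have hp1 : (1 : ℝ) ≤ P.card := by exact_mod_cast Finset.card_pos.mpr hP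
  have hq1 : 1 ≤ q := Real.one_le_rpow hp1 (by norm_num)
  have hq0 : 0 < q := by linarith
  have hn0 : 0 ≤ n := by positivity
  set d : ℕ := ⌈q⌉₊ with hd
  have hd1 : q ≤ d := Nat.le_ceil q
  have hd2 : (d : ℝ) ≤ 2 * q := by
    have := Nat.ceil_lt_add_one hq0.le
    linarith
  set L : ℕ := ⌊n / q ^ 3⌋₊ with hL
  have hL1 : (L : ℝ) ≤ n / q ^ 3 := Nat.floor_le (by positivity)
  have hL2 : n / q ^ 3 < L + 1 := Nat.lt_floor_add_one _
  obtain ⟨H0, f, Z, hC, hZ, hE0⟩ := exists_clu G d (Nat.ceil_pos.mpr hq0)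
  have hZq : (Z.card : ℝ) * q ≤ n := by
    have h1 : (Z.card : ℝ) * d ≤ n := by rw [hn]; exact_mod_cast hZ
    exact (mul_le_mul_of_nonneg_left hd1 (by positivity)).trans h1
  have hE0' : (H0.edgeSet.ncard : ℝ) ≤ 3 * n * q := by
    have h1 : (H0.edgeSet.ncard : ℝ) ≤ n * d + n := by rw [hn]; exact_mod_cast hE0
    nlinarith
  choose E A B hEG hEc hAB using fun x : V × V => per_pair hG hC L x.1 x.2
  let I : Finset (V × V) := P.filter (fun x => A x ⊆ Z ∧ B x ⊆ Z ∧
    L + 1 ≤ 3 * (A x).card ∧ L + 1 ≤ 3 * (B x).card)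
  have hI : ∀ x ∈ I, A x ⊆ Z ∧ B x ⊆ Z ∧
    L + 1 ≤ 3 * (A x).card ∧ L + 1 ≤ 3 * (B x).card := fun x hx => (Finset.mem_filter.mp hx).2
  have hIc : (I.card : ℝ) ≤ P.card := by exact_mod_cast Finset.card_filter_le _ _
  have hbd : ∀ a : ℕ, L + 1 ≤ 3 * a → (Z.card : ℝ) ≤ 3 * q ^ 2 * a := by
    intro a ha
    have h1 : (L : ℝ) + 1 ≤ 3 * a := by exact_mod_cast ha
    have h2 : n ≤ 3 * a * q ^ 3 := by
      have := hL2.le.trans h1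
      rwa [div_le_iff₀ (by positivity)] at this
    have h3 : (Z.card : ℝ) * q ≤ (3 * q ^ 2 * a) * q := by nlinarith
    exact le_of_mul_le_mul_right h3 hq0
  obtain ⟨R1, hR1Z, hR1c, hR1⟩ := hitting_s19 I A Z (3 * q ^ 2) P.card (by positivity) (by linarith)
    hIc (fun x hx => (hI x hx).1)
    (fun x hx => Finset.card_pos.mp (by have := (hI x hx).2.2.1; omega))
    (fun x hx => hbd _ (hI x hx).2.2.1)
  obtain ⟨R2, hR2Z, hR2c, hR2⟩ := hitting_s19 I B Z (3 * q ^ 2) P.card (by positivity) (by linarith)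
    hIc (fun x hx => (hI x hx).2.1)
    (fun x hx => Finset.card_pos.mp (by have := (hI x hx).2.2.2; omega))
    (fun x hx => hbd _ (hI x hx).2.2.2)
  obtain ⟨H1, hH01, hH1G, hH1c, hH1⟩ := subset_spanner hG hC (R1 ∪ R2)
  let EE : Finset (Sym2 V) := P.biUnion E
  let H : SimpleGraph V := H1 ⊔ SimpleGraph.fromEdgeSet (EE : Set (Sym2 V))
  have hEEG : (EE : Set (Sym2 V)) ⊆ G.edgeSet := by
    intro e he
    obtain ⟨x, _, hx⟩ := Finset.mem_biUnion.mp (Finset.mem_coe.mp he)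
    exact hEG x hx
  have hEEc : EE.card ≤ P.card * (2 * L) := Finset.card_biUnion_le_card_mul _ _ _ (fun x _ => hEc x)
  have hHe : H.edgeSet = H1.edgeSet ∪ (EE : Set (Sym2 V)) := by
    rw [SimpleGraph.edgeSet_sup, SimpleGraph.edgeSet_fromEdgeSet]
    congr 1
    ext e
    refine ⟨fun h => h.1, fun h => ⟨h, ?_⟩⟩
    exact SimpleGraph.not_isDiag_of_mem_edgeSet G (hEEG h)
  have hHG : H ≤ G := by
    rw [← SimpleGraph.edgeSet_subset_edgeSet, hHe]
    exact Set.union_subset (SimpleGraph.edgeSet_subset_edgeSet.mpr hH1G) hEEG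
  have hH1H : H1 ≤ H := le_sup_left
  let P' : Finset (V × V) := (I.filter (fun i => Disjoint (A i) R1)) ∪
    (I.filter (fun i => Disjoint (B i) R2))
  refine ⟨H, P', hHG, ?_, ?_, ?_, ?_⟩
  · exact Finset.union_subset ((Finset.filter_subset _ _).trans (Finset.filter_subset _ _))
      ((Finset.filter_subset _ _).trans (Finset.filter_subset _ _))
  · have h1 : (P'.card : ℝ) ≤ (I.filter (fun i => Disjoint (A i) R1)).card +
      (I.filter (fun i => Disjoint (B i) R2)).card := by exact_mod_cast Finset.card_union_le _ _
    have h2 : (2 : ℝ) * P'.card ≤ P.card := by linarith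
    exact_mod_cast h2
  · have h1 : (H.edgeSet.ncard : ℝ) ≤ H1.edgeSet.ncard + EE.card := by
      rw [hHe]
      have := Set.ncard_union_le H1.edgeSet (EE : Set (Sym2 V))
      rw [Set.ncard_coe_finset] at this
      exact_mod_cast this
    have h2 : (EE.card : ℝ) ≤ 2 * n * q := by
      have e1 : (EE.card : ℝ) ≤ P.card * (2 * L) := by exact_mod_cast hEEc
      have e2 : (P.card : ℝ) * (2 * L) ≤ P.card * (2 * (n / q ^ 3)) := by gcongr
      have e3 : (P.card : ℝ) * (2 * (n / q ^ 3)) = 2 * n * q := by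
        rw [← hq4]; field_simp
      linarith
    have h3 : (H1.edgeSet.ncard : ℝ) ≤ H0.edgeSet.ncard + 12 * ((R1 ∪ R2).card * Z.card) := by
      exact_mod_cast hH1c
    have h4 : ((R1 ∪ R2).card : ℝ) ≤ 24 * q ^ 2 := by
      have : ((R1 ∪ R2).card : ℝ) ≤ R1.card + R2.card := by exact_mod_cast Finset.card_union_le _ _
      linarith
    have h5 : ((R1 ∪ R2).card : ℝ) * Z.card ≤ 24 * n * q := by
      calc ((R1 ∪ R2).card : ℝ) * Z.card ≤ 24 * q ^ 2 * Z.card := by gcongr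
        _ = 24 * q * (Z.card * q) := by ring
        _ ≤ 24 * q * n := by gcongr
        _ = _ := by ring
    linarith
  · intro x hx hx'
    have hEx : (E x : Set (Sym2 V)) ⊆ H.edgeSet := by
      rw [hHe]
      intro e he
      exact Or.inr (Finset.mem_coe.mpr (Finset.mem_biUnion.mpr ⟨x, hx, he⟩))
    rcases hAB x with h | ⟨ha, hb, hca, hcb, h⟩
    · exact h H (hH01.trans hH1H) hEx
    · have hxI : x ∈ I := Finset.mem_filter.mpr ⟨hx, ha, hb, hca, hcb⟩
      have hd1 : ¬ Disjoint (A x) R1 := fun hdis =>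
        hx' (Finset.mem_union_left _ (Finset.mem_filter.mpr ⟨hxI, hdis⟩))
      have hd2 : ¬ Disjoint (B x) R2 := fun hdis =>
        hx' (Finset.mem_union_right _ (Finset.mem_filter.mpr ⟨hxI, hdis⟩))
      obtain ⟨a, ha1, ha2⟩ := Finset.not_disjoint_iff.mp hd1
      obtain ⟨b, hb1, hb2⟩ := Finset.not_disjoint_iff.mp hd2
      refine h H (hH01.trans hH1H) hEx ⟨a, ha1, b, hb1, ?_⟩
      exact (SimpleGraph.edist_anti hH1H).trans
        (hH1 a (Finset.mem_union_left _ ha2) b (Finset.mem_union_right _ hb2))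

theorem spanner_finset {V : Type} [Fintype V] {G : SimpleGraph V} (hG : G.Connected) (m : ℕ) :
    ∀ P : Finset (V × V), P.card ≤ m →
    ∃ H : SimpleGraph V, H ≤ G ∧
      (H.edgeSet.ncard : ℝ) ≤ 3000 * (Fintype.card V : ℝ) * (P.card : ℝ) ^ ((1 : ℝ) / 4) ∧
      ∀ x ∈ P, H.edist x.1 x.2 ≤ G.edist x.1 x.2 + 6 := by
  induction m with
  | zero =>
    intro P hP
    have : P = ∅ := Finset.card_eq_zero.mp (by omega)
    subst this
    exact ⟨⊥, bot_le, by simp, by simp⟩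
  | succ m ih =>
    intro P hP
    rcases P.eq_empty_or_nonempty with rfl | hne
    · exact ⟨⊥, bot_le, by simp, by simp⟩
    have hpos := Finset.card_pos.mpr hne
    obtain ⟨H1, P', hH1, hP', hc, he, hd⟩ := one_round hG P hne
    obtain ⟨H2, hH2, he2, hd2⟩ := ih P' (by omega)
    refine ⟨H1 ⊔ H2, sup_le hH1 hH2, ?_, ?_⟩
    · have h1 : ((H1 ⊔ H2).edgeSet.ncard : ℝ) ≤ H1.edgeSet.ncard + H2.edgeSet.ncard := by
        rw [SimpleGraph.edgeSet_sup]
        exact_mod_cast Set.ncard_union_le _ _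
      have h2 : (P'.card : ℝ) ^ ((1 : ℝ) / 4) ≤ 0.9 * (P.card : ℝ) ^ ((1 : ℝ) / 4) := by
        refine le_of_pow_le_pow_left₀ (n := 4) (by norm_num) (by positivity) ?_
        rw [mul_pow, quarter, quarter]
        have : (2 : ℝ) * P'.card ≤ P.card := by exact_mod_cast hc
        have h0 : (0 : ℝ) ≤ P.card := by positivity
        norm_num
        linarith
      have hn0 : (0 : ℝ) ≤ Fintype.card V := by positivity
      have hq0 : (0 : ℝ) ≤ (P.card : ℝ) ^ ((1 : ℝ) / 4) := by positivity
      have h3 := mul_le_mul_of_nonneg_left h2 hn0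
      have h4 := mul_nonneg hn0 hq0
      nlinarith
    · intro x hx
      by_cases h : x ∈ P'
      · exact (SimpleGraph.edist_anti le_sup_right).trans (hd2 x h)
      · exact (SimpleGraph.edist_anti le_sup_left).trans (hd x hx h)

/-- Every connected unweighted graph `G` on `n` vertices and every set
`𝒫 ⊆ V × V` of vertex pairs admits a subgraph `H` on at most `C·n·|𝒫|^(1/4)` edges (for a
universal constant `C`) such that `d_H(s,t) ≤ d_G(s,t) + 6` for every `(s,t) ∈ 𝒫`
(distances measured as extended naturals, so unreachable pairs have infinite distance). -/
theorem unweighted_pairwise_plus_six_spanner :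
    ∃ C : ℝ, 0 < C ∧
      ∀ (V : Type) [Fintype V] (G : SimpleGraph V), G.Connected →
        ∀ P : Set (V × V),
          ∃ H : SimpleGraph V, H ≤ G ∧
            (H.edgeSet.ncard : ℝ) ≤
              C * (Fintype.card V : ℝ) * (P.ncard : ℝ) ^ ((1 : ℝ) / 4) ∧
            ∀ s t : V, (s, t) ∈ P → H.edist s t ≤ G.edist s t + 6 := by
  refine ⟨3000, by norm_num, ?_⟩
  intro V _ G hG P
  obtain ⟨H, h1, h2, h3⟩ := spanner_finset hG _ P.toFinset le_rfl
  refine ⟨H, h1, ?_, ?_⟩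
  · rw [Set.ncard_eq_toFinset_card' P]
    exact h2
  · intro s t hst
    exact h3 (s, t) (by simpa using hst)
end
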